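/- arXiv:1105.2532 — 3 statements merged into one kernel-verified Lean document; each statement's English description precedes it below -/
import Mathlib

section
/- Let G be a connected graph and let L be a list assignment with |L(v)| ≥ d(v) for all vertices v. If G has no L-coloring, then: (a) |L(v)| = d(v) for every vertex v; (b) G is a Gallai tree; and (c) letting 𝓑 be the set of blocks of G, there exist color sets L(B) for all B ∈ 𝓑 such that L(B1) ∩ L(B2) = ∅ whenever blocks B1 and B2 share a vertex, and L(v) is the union of L(B) over all blocks B containing v, for every vertex v. -/
/-!
Call a connected vertex set `S` with lists at least as large as the degrees within `S` *bad* if it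
cannot be coloured. Two facts drive everything. Colouring greedily towards a vertex whose list
exceeds its degree succeeds, so a bad set has lists of size exactly the degrees (`Bad.card_eq`).
And if `B ⊆ S` is connected, then `S \ B` can be coloured greedily towards `B`, and `B` is bad again
for the lists that remain (`Bad.exists_col`, `Bad.restrict`).

A bad set without cut vertices has equal lists everywhere: take `B = S \ {v}` and colour `v` with
any colour of its list (`Bad.list_eq`). It is complete or an odd cycle
(`Bad.complete_or_oddCycle`), by an argument in the style of Zając's proof of Brooks' theorem. If it
is not complete, it contains an induced path `x v y`, which extends to a Hamiltonian path
(`Bad.exists_hamiltonian`). If `v` had a third neighbour, `x` and `y` could receive a common colour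
while the rest stays connected, leaving a surplus colour at `v`. Hence the set is 2-regular, and its
size is odd since otherwise two colours could alternate along the path. Applied to a block of `G`
after colouring the complement of the block, this shows that `G` is a Gallai tree.

The colour set of a block `B` is the common list that remains on `B` after colouring its complement
(`Bad.exists_blockColors`). For `v ∈ B` it is the set of colours on the neighbours of `v` in `B`
under some colouring of `G - v`. Every colouring of `G - v` uses each colour of `L v` exactly once
around `v` (`Bad.image_nbr`), and two colourings of `G - v` may be exchanged on the component of
`G - v` that contains `B \ {v}` (`Col.mix`), which meets the neighbourhood of `v` exactly in `B`
(`IsBlock.exists_branch`). Exchanging colourings gives both the disjointness of the colour sets of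
the blocks at `v` and the fact that they cover `L v`.
-/

open SimpleGraph

/-- The degree of a vertex `v` in `G` (as the cardinality of its neighborhood). -/
noncomputable def vdeg {V : Type*} (G : SimpleGraph V) (v : V) : ℕ :=
  (G.neighborSet v).ncard

/-- `G` has an `H`-minor: there are nonempty, pairwise disjoint, connected branch sets
`B i` in `G`, one for each vertex `i` of `H`, such that whenever `i` and `j` are adjacent
in `H` there is an edge of `G` between `B i` and `B j`. -/
def HasMinor {V W : Type*} (G : SimpleGraph V) (H : SimpleGraph W) : Prop :=
  ∃ B : W → Set V,
    (∀ i, (B i).Nonempty) ∧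
    (∀ i, (G.induce (B i)).Connected) ∧
    (Pairwise fun i j => Disjoint (B i) (B j)) ∧
    (∀ i j, H.Adj i j → ∃ u ∈ B i, ∃ v ∈ B j, G.Adj u v)

/-- `G` has no `K₅`-minor. -/
def K5MinorFree {V : Type*} (G : SimpleGraph V) : Prop :=
  ¬ HasMinor G (completeGraph (Fin 5))

/-- Planarity, encoded via Wagner's theorem: no `K₅`-minor and no `K₃,₃`-minor. -/
def IsPlanar {V : Type*} (G : SimpleGraph V) : Prop :=
  ¬ HasMinor G (completeGraph (Fin 5)) ∧
  ¬ HasMinor G (completeBipartiteGraph (Fin 3) (Fin 3))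

/-- Outerplanarity, encoded via the forbidden-minor characterization:
no `K₄`-minor and no `K₂,₃`-minor. -/
def IsOuterplanar {V : Type*} (G : SimpleGraph V) : Prop :=
  ¬ HasMinor G (completeGraph (Fin 4)) ∧
  ¬ HasMinor G (completeBipartiteGraph (Fin 2) (Fin 3))

/-- `φ` is a proper coloring of `G` choosing each color from the list `L v`. -/
def IsListColoring {V : Type*} (G : SimpleGraph V) (L : V → Finset ℕ) (φ : V → ℕ) : Prop :=
  (∀ v, φ v ∈ L v) ∧ ∀ u v, G.Adj u v → φ u ≠ φ v

/-- `G` is `k`-connected: more than `k` vertices, and deleting any set of fewer than `k`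
vertices leaves a connected graph. -/
def KConnected {V : Type*} [Fintype V] (k : ℕ) (G : SimpleGraph V) : Prop :=
  k < Fintype.card V ∧ ∀ S : Set V, S.ncard < k → (G.induce (Sᶜ : Set V)).Connected

/-- The induced subgraph on `B` has no cut vertex. -/
def NoCutVertex {V : Type*} (G : SimpleGraph V) (B : Set V) : Prop :=
  ∀ v ∈ B, (B \ {v}).Nonempty → (G.induce (B \ {v})).Connected

/-- `B` is (the vertex set of) a block of `G`: a maximal set inducing a connected
subgraph with no cut vertex. -/
def IsBlock {V : Type*} (G : SimpleGraph V) (B : Set V) : Prop :=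
  (G.induce B).Connected ∧ NoCutVertex G B ∧
    ∀ B' : Set V, B ⊆ B' → (G.induce B').Connected → NoCutVertex G B' → B' = B

/-- `B` induces a complete subgraph of `G`. -/
def IsCompleteSet {V : Type*} (G : SimpleGraph V) (B : Set V) : Prop :=
  ∀ u ∈ B, ∀ v ∈ B, u ≠ v → G.Adj u v

/-- `B` induces an odd cycle in `G`: a connected `2`-regular induced subgraph
on an odd number (at least 3) of vertices. -/
def IsOddCycleSet {V : Type*} (G : SimpleGraph V) (B : Set V) : Prop :=
  Odd B.ncard ∧ 3 ≤ B.ncard ∧ (G.induce B).Connected ∧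
    ∀ v ∈ B, (G.neighborSet v ∩ B).ncard = 2

/-- A Gallai tree: a connected graph each of whose blocks is a complete graph
or an odd cycle. -/
def IsGallaiTree {V : Type*} (G : SimpleGraph V) : Prop :=
  G.Connected ∧ ∀ B : Set V, IsBlock G B → IsCompleteSet G B ∨ IsOddCycleSet G B

open Classical in
/-- The minimum distance (in `G`) between two distinct connected components of the
induced subgraph `G[S]`; it is `0` if `G[S]` has at most one component. -/
noncomputable def compDist {V : Type*} (G : SimpleGraph V) (S : Set V) : ℕ∞ :=
  if ∀ u v : S, (G.induce S).Reachable u v then 0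
  else ⨅ (u : S) (v : S) (_ : ¬ (G.induce S).Reachable u v), G.edist u.1 v.1

/-- `S k` is the set of vertices of degree less than `k`. -/
def SmallDeg {V : Type*} (G : SimpleGraph V) (k : ℕ) : Set V :=
  {v | vdeg G v < k}

/-! ### Connected sets -/

namespace DegreeList

variable {V : Type*} {G : SimpleGraph V}

/-- No edge leads from `A` to a vertex of `S` outside `A`. -/
def Closed (G : SimpleGraph V) (A S : Set V) : Prop :=
  ∀ a ∈ A, ∀ b ∈ S, G.Adj a b → b ∈ A

/-- Connectedness of the subgraph induced on `S`, phrased through edge cuts: `S` is nonempty and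
no nonempty proper subset of `S` is closed in `S`. Equivalent to `(G.induce S).Connected`. -/
def Conn (G : SimpleGraph V) (S : Set V) : Prop :=
  S.Nonempty ∧ ∀ A ⊆ S, A.Nonempty → Closed G A S → S ⊆ A

theorem conn_iff {S : Set V} : (G.induce S).Connected ↔ Conn G S := by
  constructor
  · intro h
    refine ⟨Set.nonempty_coe_sort.1 h.nonempty, ?_⟩
    rintro A hA ⟨a, ha⟩ hcl b hb
    have hr := h.preconnected ⟨a, hA ha⟩ ⟨b, hb⟩
    rw [SimpleGraph.reachable_iff_reflTransGen] at hr
    have : ∀ y : S, Relation.ReflTransGen (G.induce S).Adj ⟨a, hA ha⟩ y → y.1 ∈ A := by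
      intro y hy
      induction hy with
      | refl => exact ha
      | tail _ hadj ih => exact hcl _ ih _ (Subtype.coe_prop _) (by simpa using hadj)
    exact this _ hr
  · rintro ⟨⟨s, hs⟩, h⟩
    have key : ∀ x y : S, (G.induce S).Reachable x y := by
      intro x y
      have := h {z | ∃ hz : z ∈ S, (G.induce S).Reachable x ⟨z, hz⟩} (fun z hz => hz.1)
        ⟨x, x.2, SimpleGraph.Reachable.refl _⟩ (by
          rintro a ⟨haS, ha⟩ b hb hab
          refine ⟨hb, ha.trans (SimpleGraph.Adj.reachable ?_)⟩
          simpa using hab)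
      exact (this y.2).2
    have : Nonempty S := ⟨⟨s, hs⟩⟩
    exact ⟨key⟩

/-- `NoCutVertex` in terms of `Conn`. -/
def NoCut (G : SimpleGraph V) (B : Set V) : Prop :=
  ∀ v ∈ B, (B \ {v}).Nonempty → Conn G (B \ {v})

theorem noCut_iff {B : Set V} : NoCutVertex G B ↔ NoCut G B := by
  simp only [NoCutVertex, NoCut, conn_iff]

theorem isBlock_iff {B : Set V} : IsBlock G B ↔
    Conn G B ∧ NoCut G B ∧ ∀ B' : Set V, B ⊆ B' → Conn G B' → NoCut G B' → B' = B := by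
  simp only [IsBlock, noCut_iff, conn_iff]

theorem conn_singleton (v : V) : Conn G {v} := by
  refine ⟨⟨v, rfl⟩, ?_⟩
  rintro A hA ⟨a, ha⟩ - x rfl
  have := hA ha
  simp only [Set.mem_singleton_iff] at this
  exact this ▸ ha

theorem Conn.union {X Y : Set V} (hX : Conn G X) (hY : Conn G Y)
    (h : (∃ x ∈ X, x ∈ Y) ∨ ∃ x ∈ X, ∃ y ∈ Y, G.Adj x y) : Conn G (X ∪ Y) := by
  refine ⟨hX.1.mono Set.subset_union_left, ?_⟩
  rintro A hA hne hcl
  have hXA : (∃ x ∈ X, x ∈ A) → X ⊆ A := by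
    rintro ⟨x, hx, hxA⟩ z hz
    exact (hX.2 (A ∩ X) Set.inter_subset_right ⟨x, hxA, hx⟩
      (fun a ha b hb hab => ⟨hcl a ha.1 b (Or.inl hb) hab, hb⟩) hz).1
  have hYA : (∃ x ∈ Y, x ∈ A) → Y ⊆ A := by
    rintro ⟨x, hx, hxA⟩ z hz
    exact (hY.2 (A ∩ Y) Set.inter_subset_right ⟨x, hxA, hx⟩
      (fun a ha b hb hab => ⟨hcl a ha.1 b (Or.inr hb) hab, hb⟩) hz).1
  have hXY : X ⊆ A ∧ Y ⊆ A := by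
    obtain ⟨a, ha⟩ := hne
    rcases h with ⟨x, hx, hxY⟩ | ⟨x, hx, y, hy, hxy⟩
    · rcases hA ha with h1 | h1
      · have h2 := hXA ⟨a, h1, ha⟩
        exact ⟨h2, hYA ⟨x, hxY, h2 hx⟩⟩
      · have h2 := hYA ⟨a, h1, ha⟩
        exact ⟨hXA ⟨x, hx, h2 hxY⟩, h2⟩
    · rcases hA ha with h1 | h1
      · have h2 := hXA ⟨a, h1, ha⟩
        exact ⟨h2, hYA ⟨y, hy, hcl x (h2 hx) y (Or.inr hy) hxy⟩⟩
      · have h2 := hYA ⟨a, h1, ha⟩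
        exact ⟨hXA ⟨x, hx, hcl y (h2 hy) x (Or.inl hx) hxy.symm⟩, h2⟩
  exact Set.union_subset hXY.1 hXY.2

theorem Conn.insert_adj {X : Set V} (hX : Conn G X) {x y : V} (hx : x ∈ X) (h : G.Adj x y) :
    Conn G (insert y X) := by
  have := (conn_singleton (G := G) y).union hX (Or.inr ⟨y, rfl, x, hx, h.symm⟩)
  rwa [Set.singleton_union] at this

/-- Every connected subset `X` of `Y` lies in a connected component `C` of the subgraph induced
on `Y`. -/
theorem Conn.exists_component [Finite V] {X Y : Set V} (hX : Conn G X) (hXY : X ⊆ Y) :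
    ∃ C, X ⊆ C ∧ C ⊆ Y ∧ Conn G C ∧ Closed G C Y := by
  obtain ⟨C, hC1, hC2⟩ :=
    (Set.toFinite {C : Set V | C ⊆ Y ∧ Conn G C}).exists_le_maximal (a := X) ⟨hXY, hX⟩
  refine ⟨C, hC1, hC2.prop.1, hC2.prop.2, fun a ha b hb hab => ?_⟩
  exact hC2.le_of_ge (y := insert b C)
    ⟨Set.insert_subset hb hC2.prop.1, hC2.prop.2.insert_adj ha hab⟩ (Set.subset_insert _ _)
    (Set.mem_insert _ _)

/-! ### Blocks -/

theorem exists_block [Finite V] {X : Set V} (hX : Conn G X) (hX' : NoCut G X) :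
    ∃ B, X ⊆ B ∧ IsBlock G B := by
  obtain ⟨B, hB1, hB2⟩ :=
    (Set.toFinite {C : Set V | Conn G C ∧ NoCut G C}).exists_le_maximal (a := X) ⟨hX, hX'⟩
  exact ⟨B, hB1, isBlock_iff.2 ⟨hB2.prop.1, hB2.prop.2, fun B' h1 h2 h3 =>
    (hB2.le_of_ge (y := B') ⟨h2, h3⟩ h1).antisymm h1⟩⟩

theorem exists_block_of_adj [Finite V] {u v : V} (h : G.Adj u v) :
    ∃ B, u ∈ B ∧ v ∈ B ∧ IsBlock G B := by
  have hc : Conn G {u, v} := (conn_singleton v).insert_adj rfl h.symm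
  have hn : NoCut G {u, v} := by
    intro w hw _
    have h1 := h.ne
    rcases hw with rfl | hw
    · have : ({w, v} : Set V) \ {w} = {v} := by ext; simp; aesop
      rw [this]; exact conn_singleton v
    · obtain rfl : w = v := hw
      have : ({u, w} : Set V) \ {w} = {u} := by ext; simp; aesop
      rw [this]; exact conn_singleton u
  obtain ⟨B, hB, hblock⟩ := exists_block hc hn
  exact ⟨B, hB (by simp), hB (by simp), hblock⟩

/-- Two blocks with two common vertices are equal, since their union has no cut vertex. -/
theorem IsBlock.eq_of_two {B1 B2 : Set V} (h1 : IsBlock G B1) (h2 : IsBlock G B2) {u v : V}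
    (huv : u ≠ v) (hu1 : u ∈ B1) (hu2 : u ∈ B2) (hv1 : v ∈ B1) (hv2 : v ∈ B2) : B1 = B2 := by
  rw [isBlock_iff] at h1 h2
  have hc : Conn G (B1 ∪ B2) := h1.1.union h2.1 (Or.inl ⟨u, hu1, hu2⟩)
  have aux : ∀ B, Conn G B → NoCut G B → u ∈ B → v ∈ B → ∀ w, Conn G (B \ {w}) := by
    intro B hB hB' hu hv w
    by_cases hw : w ∈ B
    · refine hB' w hw ?_
      by_cases huw : u = w
      · exact ⟨v, hv, fun h => huv (huw.trans (Eq.symm h))⟩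
      · exact ⟨u, hu, huw⟩
    · rwa [Set.sdiff_singleton_eq_self hw]
  have hn : NoCut G (B1 ∪ B2) := by
    intro w _ _
    rw [Set.union_sdiff_distrib]
    refine (aux B1 h1.1 h1.2.1 hu1 hv1 w).union (aux B2 h2.1 h2.2.1 hu2 hv2 w) (Or.inl ?_)
    by_cases huw : u = w
    · have hvw : v ≠ w := fun h => huv (huw.trans h.symm)
      exact ⟨v, ⟨hv1, hvw⟩, hv2, hvw⟩
    · exact ⟨u, ⟨hu1, huw⟩, hu2, huw⟩
  rw [← h1.2.2 _ Set.subset_union_left hc hn]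
  exact h2.2.2 _ Set.subset_union_right hc hn

/-- An ear lemma: if `u` is adjacent to `v ∈ B` and `u` lies in a connected set `C` avoiding `v`
that contains the rest of the block `B`, then `u ∈ B`. Among the sets `S ⊇ B ∪ {u}` with `S \ {v}`
connected, such as `C ∪ {v}`, a minimal one has no cut vertex, so it equals `B`. -/
theorem IsBlock.mem_of_adj [Finite V] {B C : Set V} (hB : IsBlock G B) {u v : V} (hv : v ∈ B)
    (huv : G.Adj v u) (huC : u ∈ C) (hvC : v ∉ C) (hC : Conn G C) (hBC : B \ {v} ⊆ C) :
    u ∈ B := by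
  rw [isBlock_iff] at hB
  obtain ⟨hBc, hBn, hBmax⟩ := hB
  have hne := huv.ne
  obtain ⟨S, -, hS⟩ :=
    (Set.toFinite {S : Set V | insert u B ⊆ S ∧ Conn G (S \ {v})}).exists_le_minimal
      (a := insert v C) ⟨by
        rintro x (rfl | hx)
        · exact Or.inr huC
        · by_cases hxv : x = v
          · exact Or.inl hxv
          · exact Or.inr (hBC ⟨hx, hxv⟩), by
        have : insert v C \ {v} = C := by
          rw [Set.insert_sdiff_of_mem _ (Set.mem_singleton v), Set.sdiff_singleton_eq_self hvC]
        rwa [this]⟩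
  obtain ⟨⟨hBS, hSc⟩, hmin⟩ := hS
  have huS : u ∈ S := hBS (Or.inl rfl)
  have hBS : B ⊆ S := fun x hx => hBS (Or.inr hx)
  have hvS : v ∈ S := hBS hv
  have hScon : Conn G S := by
    have := hSc.insert_adj (x := u) (y := v) ⟨huS, hne.symm⟩ huv.symm
    rwa [Set.insert_sdiff_singleton, Set.insert_eq_of_mem hvS] at this
  have hSn : NoCut G S := by
    intro w hw _
    by_cases hwv : w = v
    · rwa [hwv]
    have hvw : v ∈ S \ {w} := ⟨hvS, fun h => hwv (Eq.symm h)⟩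
    obtain ⟨D, hvD, hDS, hDc, hDcl⟩ :=
      (conn_singleton (G := G) v).exists_component (Set.singleton_subset_iff.2 hvw)
    rw [Set.singleton_subset_iff] at hvD
    have hBD : B \ {w} ⊆ D := by
      have hBw : Conn G (B \ {w}) := by
        by_cases hwB : w ∈ B
        · exact hBn w hwB ⟨v, hv, hvw.2⟩
        · rwa [Set.sdiff_singleton_eq_self hwB]
      intro x hx
      exact (hBw.2 ((B \ {w}) ∩ D) Set.inter_subset_left ⟨v, ⟨hv, hvw.2⟩, hvD⟩
        (fun a ha b hb hab => ⟨hb, hDcl a ha.2 b ⟨hBS hb.1, hb.2⟩ hab⟩) hx).2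
    have huD : u = w ∨ u ∈ D := by
      by_cases huw : u = w
      · exact Or.inl huw
      · exact Or.inr (hDcl v hvD u ⟨huS, huw⟩ huv)
    have hle : S ⊆ insert w D := by
      refine hmin (y := insert w D) ⟨?_, ?_⟩ ?_
      · rintro x (rfl | hx)
        · exact huD
        · by_cases hxw : x = w
          · exact Or.inl hxw
          · exact Or.inr (hBD ⟨hx, hxw⟩)
      · -- a set closed in `insert w D \ {v}` stays closed in `S \ {v}`, after adding `S \ D` to it
        -- in case it contains `w`
        refine ⟨⟨w, Or.inl rfl, hwv⟩, ?_⟩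
        rintro A hA hAne hAcl
        by_cases hwA : w ∈ A
        · have := hSc.2 (A ∪ (S \ insert w D)) (by
            rintro x (hx | hx)
            · refine ⟨?_, (hA hx).2⟩
              rcases (hA hx).1 with rfl | h
              · exact hw
              · exact (hDS h).1
            · refine ⟨hx.1, ?_⟩
              rintro rfl
              exact hx.2 (Or.inr hvD)) ⟨w, Or.inl hwA⟩ (by
            rintro a ha b hb hab
            by_cases hbD : b ∈ insert w D
            · rcases ha with ha | ha
              · exact Or.inl (hAcl a ha b ⟨hbD, hb.2⟩ hab)
              · rcases hbD with rfl | hbD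
                · exact Or.inl hwA
                · exact absurd (Or.inr (hDcl b hbD a ⟨ha.1, fun h => ha.2 (Or.inl h)⟩ hab.symm))
                    ha.2
            · exact Or.inr ⟨hb.1, hbD⟩)
          rintro x ⟨hx, hxv⟩
          have hxS : x ∈ S := by
            rcases hx with rfl | h
            · exact hw
            · exact (hDS h).1
          rcases this ⟨hxS, hxv⟩ with h | h
          · exact h
          · exact absurd hx h.2
        · have hAD : ∀ a ∈ A, a ∈ D := by
            intro a ha
            rcases (hA ha).1 with rfl | h
            · exact absurd ha hwA
            · exact h
          exfalso
          refine hwA (hSc.2 A (fun a ha => ⟨(hDS (hAD a ha)).1, (hA ha).2⟩) hAne ?_ ⟨hw, hwv⟩)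
          intro a ha b hb hab
          refine hAcl a ha b ⟨?_, hb.2⟩ hab
          by_cases hbw : b = w
          · exact Or.inl hbw
          · exact Or.inr (hDcl a (hAD a ha) b ⟨hb.1, hbw⟩ hab)
      · rintro x (rfl | hx)
        · exact hw
        · exact (hDS hx).1
    have : S \ {w} = D := by
      ext x
      refine ⟨fun hx => (hle hx.1).resolve_left hx.2, fun hx => hDS hx⟩
    rwa [this]
  exact hBmax S hBS hScon hSn ▸ huS

/-- The component of `G - v` containing `B \ {v}`, empty if `B = {v}`: it is closed in `G - v`
and meets the neighbourhood of `v` exactly in `B`. -/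
theorem IsBlock.exists_branch [Finite V] {B : Set V} (hB : IsBlock G B) {v : V} (hv : v ∈ B) :
    ∃ C : Set V, Closed G C {v}ᶜ ∧ ∀ u, G.Adj v u → (u ∈ C ↔ u ∈ B) := by
  have hB' := isBlock_iff.1 hB
  by_cases hne : (B \ {v}).Nonempty
  · obtain ⟨C, h1, h2, h3, h4⟩ := (hB'.2.1 v hv hne).exists_component (Y := {v}ᶜ) (fun x hx => hx.2)
    exact ⟨C, h4, fun u huv => ⟨fun hu => IsBlock.mem_of_adj hB hv huv hu (fun h => h2 h rfl) h3 h1,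
      fun hu => h1 ⟨hu, huv.ne'⟩⟩⟩
  · refine ⟨∅, fun a ha => ha.elim, fun u huv => ⟨fun h => h.elim, fun hu => ?_⟩⟩
    exact (hne ⟨u, hu, huv.ne'⟩).elim

/-! ### Greedy colouring and restriction of bad list assignments -/

/-- The degree of `v` into `S`. -/
noncomputable def degIn (G : SimpleGraph V) (S : Set V) (v : V) : ℕ :=
  (G.neighborSet v ∩ S).ncard

/-- `φ` is an `L`-colouring of the subgraph induced on `S`; its values off `S` are irrelevant. -/
def Col (G : SimpleGraph V) (L : V → Finset ℕ) (S : Set V) (φ : V → ℕ) : Prop :=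
  (∀ v ∈ S, φ v ∈ L v) ∧ ∀ u ∈ S, ∀ v ∈ S, G.Adj u v → φ u ≠ φ v

/-- A bad set: `S` is connected and on `S` the lists are at least as large as the degrees within
`S`, yet the subgraph induced on `S` has no `L`-colouring. -/
def Bad (G : SimpleGraph V) (L : V → Finset ℕ) (S : Set V) : Prop :=
  Conn G S ∧ (∀ v ∈ S, degIn G S v ≤ (L v).card) ∧ ¬ ∃ φ, Col G L S φ

open Classical in
/-- The list assignment left over when the vertices of `T` have been coloured by `φ`. -/
noncomputable def rest (G : SimpleGraph V) (L : V → Finset ℕ) (T : Set V) (φ : V → ℕ) (v : V) :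
    Finset ℕ :=
  (L v).filter fun c => ∀ u ∈ T, G.Adj v u → φ u ≠ c

theorem mem_rest {L : V → Finset ℕ} {T : Set V} {φ : V → ℕ} {v : V} {c : ℕ} :
    c ∈ rest G L T φ v ↔ c ∈ L v ∧ ∀ u ∈ T, G.Adj v u → φ u ≠ c := by
  simp [rest]

open Classical in
/-- Colourings of `S \ B` and of `B` with the remaining lists fit together. -/
theorem Col.glue {L : V → Finset ℕ} {S B : Set V} {φ χ : V → ℕ} (hφ : Col G L (S \ B) φ)
    {T : Set V} (hT : T ⊆ B) (hχ : Col G (rest G L (S \ B) φ) T χ) :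
    Col G L ((S \ B) ∪ T) (fun v => if v ∈ B then χ v else φ v) := by
  constructor
  · rintro v (hv | hv)
    · simpa [hv.2] using hφ.1 v hv
    · simpa [hT hv] using (mem_rest.1 (hχ.1 v hv)).1
  · rintro u (hu | hu) v (hv | hv) huv
    · simpa [hu.2, hv.2] using hφ.2 u hu v hv huv
    · simpa [hu.2, hT hv] using (mem_rest.1 (hχ.1 v hv)).2 u hu huv.symm
    · simpa [hv.2, hT hu] using ((mem_rest.1 (hχ.1 u hu)).2 v hv huv).symm
    · simpa [hT hu, hT hv] using hχ.2 u hu v hv huv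

variable [Finite V]

theorem degIn_mono {S T : Set V} (h : S ⊆ T) (v : V) : degIn G S v ≤ degIn G T v :=
  Set.ncard_le_ncard (Set.inter_subset_inter_right _ h) (Set.toFinite _)

theorem degIn_lt {S T : Set V} (h : S ⊆ T) {v u : V} (huv : G.Adj v u) (hu : u ∈ T)
    (hu' : u ∉ S) : degIn G S v < degIn G T v :=
  Set.ncard_lt_ncard ⟨Set.inter_subset_inter_right _ h, fun h' => hu' (h' ⟨huv, hu⟩).2⟩
    (Set.toFinite _)

/-- Greedy colouring towards vertices whose list is larger than their degree: it succeeds as soon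
as every component of the subgraph induced on `S` has such a vertex. -/
theorem greedy (L : V → Finset ℕ) (n : ℕ) : ∀ S : Set V, S.ncard = n →
    (∀ v ∈ S, degIn G S v ≤ (L v).card) →
    (∀ A ⊆ S, A.Nonempty → Closed G A S → ∃ a ∈ A, degIn G S a < (L a).card) →
    ∃ φ, Col G L S φ := by
  classical
  induction n with
  | zero =>
    intro S hS _ _
    rw [Set.ncard_eq_zero] at hS
    subst hS
    exact ⟨fun _ => 0, fun v hv => hv.elim, fun v hv => hv.elim⟩
  | succ n ih =>
    intro S hS hdeg hstrict
    have hne : S.Nonempty := by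
      rw [← Set.ncard_pos]; omega
    obtain ⟨r, hr, hr'⟩ := hstrict S le_rfl hne (fun a _ b hb _ => hb)
    obtain ⟨φ, hφ⟩ := ih (S \ {r}) (by rw [Set.ncard_sdiff_singleton_of_mem hr, hS]; rfl)
      (fun v hv => (degIn_mono Set.sdiff_subset v).trans (hdeg v hv.1)) (by
        intro A hA hAne hcl
        by_cases h : ∃ a ∈ A, G.Adj a r
        · obtain ⟨a, ha, har⟩ := h
          have hlt := degIn_lt (G := G) (S := S \ {r}) Set.sdiff_subset har hr (fun h => h.2 rfl)
          exact ⟨a, ha, hlt.trans_le (hdeg a (hA ha).1)⟩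
        · obtain ⟨a, ha, ha'⟩ := hstrict A (hA.trans Set.sdiff_subset) hAne (by
            intro a ha b hb hab
            refine hcl a ha b ⟨hb, ?_⟩ hab
            rintro rfl
            exact h ⟨a, ha, hab⟩)
          exact ⟨a, ha, (degIn_mono Set.sdiff_subset a).trans_lt ha'⟩)
    obtain ⟨c, hc, hc'⟩ : ∃ c ∈ L r, c ∉ φ '' (G.neighborSet r ∩ S) := by
      by_contra! hcon
      have h1 : ((L r : Set ℕ)).ncard ≤ (φ '' (G.neighborSet r ∩ S)).ncard :=
        Set.ncard_le_ncard (fun c hc => hcon c hc) (Set.toFinite _)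
      rw [Set.ncard_coe_finset] at h1
      have h2 := Set.ncard_image_le (f := φ) (Set.toFinite (G.neighborSet r ∩ S))
      have : degIn G S r = (G.neighborSet r ∩ S).ncard := rfl
      omega
    refine ⟨Function.update φ r c, ?_, ?_⟩
    · intro v hv
      by_cases hvr : v = r
      · subst hvr; simpa using hc
      · simpa [hvr] using hφ.1 v ⟨hv, hvr⟩
    · intro u hu v hv huv
      by_cases hur : u = r
      · subst hur
        have hvu : v ≠ u := huv.ne'
        simp only [Function.update_self, ne_eq, hvu, not_false_eq_true, Function.update_of_ne]
        exact fun h => hc' ⟨v, ⟨huv, hv⟩, h.symm⟩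
      · by_cases hvr : v = r
        · subst hvr
          simp only [Function.update_self, ne_eq, hur, not_false_eq_true, Function.update_of_ne]
          exact fun h => hc' ⟨u, ⟨huv.symm, hu⟩, h⟩
        · simpa [hur, hvr] using hφ.2 u ⟨hu, hur⟩ v ⟨hv, hvr⟩ huv

/-- Part (a): a vertex with a surplus colour would allow a greedy colouring. -/
theorem Bad.card_eq {L : V → Finset ℕ} {S : Set V} (h : Bad G L S) {v : V} (hv : v ∈ S) :
    (L v).card = degIn G S v := by
  by_contra hne
  refine h.2.2 (greedy L _ S rfl h.2.1 fun A hA hAne hcl => ?_)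
  exact ⟨v, h.1.2 A hA hAne hcl hv, lt_of_le_of_ne (h.2.1 v hv) (Ne.symm hne)⟩

/-- Once everything outside a connected `B ⊆ S` is coloured, `B` is bad for the remaining lists: a
vertex of `B` loses at most one colour per neighbour outside `B`. -/
theorem Bad.restrict {L : V → Finset ℕ} {S B : Set V} (h : Bad G L S) (hBS : B ⊆ S)
    (hB : Conn G B) {φ : V → ℕ} (hφ : Col G L (S \ B) φ) : Bad G (rest G L (S \ B) φ) B := by
  classical
  refine ⟨hB, ?_, ?_⟩
  · intro v hv
    have h1 := h.2.1 v (hBS hv)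
    have h2 : degIn G S v = degIn G B v + degIn G (S \ B) v := by
      unfold degIn
      rw [← Set.ncard_union_eq _ (Set.toFinite _) (Set.toFinite _)]
      · congr 1
        ext x
        have := @hBS x
        simp only [Set.mem_inter_iff, Set.mem_union, Set.mem_sdiff]
        tauto
      · rw [Set.disjoint_left]
        exact fun x hx hx' => hx'.2.2 hx.2
    have h3 : (L v : Set ℕ).ncard ≤
        ((rest G L (S \ B) φ v : Set ℕ) ∪ φ '' (G.neighborSet v ∩ (S \ B))).ncard := by
      refine Set.ncard_le_ncard (fun c hc => ?_) (Set.toFinite _)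
      by_cases hc' : c ∈ rest G L (S \ B) φ v
      · exact Or.inl hc'
      · rw [mem_rest] at hc'
        push Not at hc'
        obtain ⟨u, hu, hvu, huc⟩ := hc' hc
        exact Or.inr ⟨u, ⟨hvu, hu⟩, huc⟩
    have h4 := Set.ncard_union_le (rest G L (S \ B) φ v : Set ℕ)
      (φ '' (G.neighborSet v ∩ (S \ B)))
    have h5 := Set.ncard_image_le (f := φ) (Set.toFinite (G.neighborSet v ∩ (S \ B)))
    rw [Set.ncard_coe_finset] at h3 h4
    have : degIn G (S \ B) v = (G.neighborSet v ∩ (S \ B)).ncard := rfl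
    omega
  · rintro ⟨χ, hχ⟩
    have := hφ.glue le_rfl hχ
    rw [Set.sdiff_union_of_subset hBS] at this
    exact h.2.2 ⟨_, this⟩

/-- The complement of a nonempty `B` can be coloured greedily towards `B`. -/
theorem Bad.exists_col {L : V → Finset ℕ} {S B : Set V} (h : Bad G L S) (hBS : B ⊆ S)
    (hB : B.Nonempty) : ∃ φ, Col G L (S \ B) φ := by
  refine greedy L _ (S \ B) rfl
    (fun v hv => (degIn_mono Set.sdiff_subset v).trans (h.2.1 v hv.1)) ?_
  intro A hA hAne hcl
  by_contra! hcon
  obtain ⟨b, hb⟩ := hB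
  refine (hA (h.1.2 A (hA.trans Set.sdiff_subset) hAne ?_ (hBS hb))).2 hb
  intro a ha c hc hac
  refine hcl a ha c ⟨hc, fun hcB => ?_⟩ hac
  have h1 := degIn_lt (G := G) (S := S \ B) (T := S) Set.sdiff_subset hac hc (fun h => h.2 hcB)
  have h2 := hcon a ha
  have h3 := h.2.1 a (hA ha).1
  omega

/-! ### Bad sets without cut vertices -/

/-- Colouring a non-cut vertex `v` with any colour of its list leaves a bad set, so that colour
must be in the lists of all neighbours of `v`. -/
theorem Bad.subset_of_adj {L : V → Finset ℕ} {S : Set V} (h : Bad G L S) (hn : NoCut G S)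
    {u v : V} (hu : u ∈ S) (hv : v ∈ S) (huv : G.Adj v u) : L v ⊆ L u := by
  intro c hc
  have hne : (S \ {v}).Nonempty := ⟨u, hu, huv.ne'⟩
  have hS : S \ (S \ {v}) = {v} := by
    rw [Set.sdiff_sdiff_cancel_left (Set.singleton_subset_iff.2 hv)]
  have hφ : Col G L (S \ (S \ {v})) (fun _ => c) := by
    rw [hS]
    constructor
    · rintro x rfl; exact hc
    · rintro x rfl y rfl hxy; exact (hxy.ne rfl).elim
  have hb := h.restrict Set.sdiff_subset (hn v hv hne) hφ
  by_contra hcu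
  have h1 := hb.card_eq ⟨hu, huv.ne'⟩
  have h2 := h.card_eq hu
  have h3 := degIn_lt (G := G) (S := S \ {v}) (T := S) Set.sdiff_subset huv.symm hv
    (fun h => h.2 rfl)
  have h4 : rest G L (S \ (S \ {v})) (fun _ => c) u = L u := by
    ext d
    rw [mem_rest]
    refine ⟨fun h => h.1, fun h => ⟨h, fun _ _ _ hcd => hcu (hcd ▸ h)⟩⟩
  rw [h4] at h1
  omega

/-- All lists on a bad set without cut vertices coincide. -/
theorem Bad.list_eq {L : V → Finset ℕ} {S : Set V} (h : Bad G L S) (hn : NoCut G S)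
    {u v : V} (hu : u ∈ S) (hv : v ∈ S) : L u = L v := by
  have := h.1.2 {x | x ∈ S ∧ L x = L v} (fun x hx => hx.1) ⟨v, hv, rfl⟩ (by
    rintro a ⟨ha, ha'⟩ b hb hab
    refine ⟨hb, ?_⟩
    rw [← ha']
    exact (h.subset_of_adj hn ha hb hab.symm).antisymm (h.subset_of_adj hn hb ha hab))
  exact (this hu).2

/-- In a bad set whose lists all coincide, a connected subset without cut vertex that contains a
vertex together with all its neighbours is the whole set. -/
theorem Bad.eq_of_full {L : V → Finset ℕ} {S T : Set V} (h : Bad G L S)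
    (hL : ∀ u ∈ S, ∀ v ∈ S, L u = L v) (hTS : T ⊆ S) (hT : Conn G T) (hTn : NoCut G T) {a : V}
    (ha : a ∈ T) (hfull : ∀ u ∈ S, G.Adj a u → u ∈ T) : T = S := by
  obtain ⟨φ, hφ⟩ := h.exists_col hTS hT.1
  have hb := h.restrict hTS hT hφ
  have ha' : rest G L (S \ T) φ a = L a := by
    ext d
    rw [mem_rest]
    refine ⟨fun h => h.1, fun h => ⟨h, fun u hu hau => (hu.2 (hfull u hu.1 hau)).elim⟩⟩
  refine hTS.antisymm (h.1.2 T hTS hT.1 ?_)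
  intro x hx y hy hxy
  by_contra hyT
  have h1 := degIn_lt hTS hxy hy hyT
  have h2 := hb.card_eq hx
  rw [hb.list_eq hTn hx ha, ha', hL a (hTS ha) x (hTS hx), h.card_eq (hTS hx)] at h2
  omega

/-! ### Paths and cycles as lists -/

theorem conn_list : ∀ l : List V, l ≠ [] → l.IsChain G.Adj → Conn G {x | x ∈ l}
  | [], h, _ => (h rfl).elim
  | [a], _, _ => by
    have : {x | x ∈ [a]} = ({a} : Set V) := by ext; simp
    rw [this]; exact conn_singleton a
  | a :: b :: t, _, h => by
    rw [List.isChain_cons_cons] at h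
    have := (conn_list (b :: t) (by simp) h.2).insert_adj (x := b) (y := a) (by simp) h.1.symm
    have h2 : {x | x ∈ a :: b :: t} = insert a {x | x ∈ b :: t} := by ext; simp
    rwa [h2]

/-- A cycle has no cut vertex: removing one vertex leaves two paths (either may be empty), joined
by the edge `az`. -/
theorem noCut_cycle {a z : V} {c : List V} (hc : (a :: (c ++ [z])).IsChain G.Adj)
    (hnd : (a :: (c ++ [z])).Nodup) (haz : G.Adj a z) : NoCut G {x | x ∈ a :: (c ++ [z])} := by
  intro x hx hne
  obtain ⟨l1, l2, hl⟩ := List.append_of_mem (show x ∈ a :: (c ++ [z]) from hx)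
  rw [hl] at hc hnd hne ⊢
  have hset : {y | y ∈ l1 ++ x :: l2} \ {x} = {y | y ∈ l1} ∪ {y | y ∈ l2} := by
    have h1 : x ∉ l1 := fun h => by simp [List.nodup_append] at hnd; grind
    have h2 : x ∉ l2 := fun h => by simp [List.nodup_append] at hnd; grind
    ext y
    simp only [Set.mem_sdiff, Set.mem_ofPred_eq, List.mem_append, List.mem_cons,
      Set.mem_singleton_iff, Set.mem_union]
    grind
  have hc1 : l1.IsChain G.Adj := (List.isChain_append.1 hc).1
  have hc2 : l2.IsChain G.Adj := (List.isChain_append.1 hc).2.1.tail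
  rw [hset] at hne ⊢
  by_cases h1 : l1 = []
  · have : {y | y ∈ l1} ∪ {y | y ∈ l2} = {y | y ∈ l2} := by ext; simp [h1]
    rw [this] at hne ⊢
    exact conn_list l2 (by rintro rfl; simp at hne) hc2
  by_cases h2 : l2 = []
  · have : {y | y ∈ l1} ∪ {y | y ∈ l2} = {y | y ∈ l1} := by ext; simp [h2]
    rw [this]
    exact conn_list l1 h1 hc1
  refine (conn_list l1 h1 hc1).union (conn_list l2 h2 hc2) (Or.inr ⟨a, ?_, z, ?_, haz⟩)
  · cases l1 with
    | nil => exact (h1 rfl).elim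
    | cons b l1 =>
      simp only [List.cons_append, List.cons.injEq] at hl
      simp [hl.1]
  · have := congrArg List.getLast? hl
    have hz : l2.getLast? = some z := by
      cases l2 with
      | nil => exact (h2 rfl).elim
      | cons b l2 =>
        rw [← List.cons_append, List.getLast?_append, List.getLast?_append] at this
        simpa [List.getLast?_cons] using this.symm
    exact List.mem_of_getLast? hz

/-- Every path in `S` extends, at its head, to a path in `S` whose head has no neighbour in `S` off
the path. The induction is on the number `n` of vertices not yet used. -/
theorem exists_maximal_path (S : Set V) (n : ℕ) : ∀ (a : V) (t : List V),
    Nat.card V - (a :: t).length = n → (a :: t).IsChain G.Adj → (a :: t).Nodup →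
    (∀ x ∈ a :: t, x ∈ S) → ∃ (p : List V), (p ++ a :: t).IsChain G.Adj ∧ (p ++ a :: t).Nodup ∧
      (∀ x ∈ p ++ a :: t, x ∈ S) ∧
      ∀ b ∈ (p ++ a :: t).head?, ∀ u ∈ S, G.Adj b u → u ∈ p ++ a :: t := by
  induction n using Nat.strong_induction_on with
  | _ n ih =>
  intro a t hn hc hnd hS
  by_cases h : ∀ u ∈ S, G.Adj a u → u ∈ a :: t
  · exact ⟨[], hc, hnd, hS, by simpa using h⟩
  push Not at h
  obtain ⟨u, huS, hau, hu⟩ := h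
  have hnd' : (u :: a :: t).Nodup := List.nodup_cons.2 ⟨hu, hnd⟩
  have hlen : (u :: a :: t).length ≤ Nat.card V := by
    have := Fintype.ofFinite V
    rw [Nat.card_eq_fintype_card]
    exact hnd'.length_le_card
  obtain ⟨p, h1, h2, h3, h4⟩ := ih (Nat.card V - (u :: a :: t).length) (by
    simp only [List.length_cons] at hn hlen ⊢; omega) u (a :: t) rfl
    (List.isChain_cons_cons.2 ⟨hau.symm, hc⟩) hnd' (by
      intro x hx
      rcases List.mem_cons.1 hx with rfl | hx
      · exact huS
      · exact hS x hx)
  have e : p ++ u :: a :: t = (p ++ [u]) ++ a :: t := by simp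
  rw [e] at h1 h2 h3 h4
  exact ⟨p ++ [u], h1, h2, h3, h4⟩

theorem exists_last_split {P : V → Prop} : ∀ t : List V, (∃ x ∈ t, P x) →
    ∃ c z d, t = c ++ z :: d ∧ P z ∧ ∀ y ∈ d, ¬ P y
  | [], h => by simp at h
  | b :: t, h => by
    by_cases ht : ∃ x ∈ t, P x
    · obtain ⟨c, z, d, rfl, h2, h3⟩ := exists_last_split t ht
      exact ⟨b :: c, z, d, rfl, h2, h3⟩
    · push Not at ht
      obtain ⟨x, hx, hPx⟩ := h
      rcases List.mem_cons.1 hx with rfl | hx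
      · exact ⟨[], x, t, rfl, hPx, ht⟩
      · exact (ht x hx hPx).elim

/-- In a bad set without cut vertices, a path `x v y` extends to a Hamiltonian path: the head of a
maximal extension lies, with all its neighbours, on a cycle formed by vertices of the path, and
`Bad.eq_of_full` applies to that cycle. -/
theorem Bad.exists_hamiltonian {L : V → Finset ℕ} {S : Set V} (h : Bad G L S) (hn : NoCut G S)
    {x v y : V} (hx : x ∈ S) (hv : v ∈ S) (hy : y ∈ S) (hxv : G.Adj x v) (hvy : G.Adj v y)
    (hxy : x ≠ y) : ∃ p : List V, (p ++ [y, v, x]).IsChain G.Adj ∧ (p ++ [y, v, x]).Nodup ∧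
      S = {z | z ∈ p ++ [y, v, x]} := by
  obtain ⟨p, h1, h2, h3, h4⟩ := exists_maximal_path (G := G) S _ y [v, x] rfl
    (by simp [hvy.symm, hxv.symm]) (by simp [hvy.ne', hxv.ne', hxy.symm])
    (by simp [hx, hv, hy])
  refine ⟨p, h1, h2, ?_⟩
  obtain ⟨a, b, t, hl⟩ : ∃ a b t, p ++ [y, v, x] = a :: b :: t := by
    rcases p with _ | ⟨a, _ | ⟨b, p⟩⟩
    · exact ⟨_, _, _, rfl⟩
    · exact ⟨_, _, _, rfl⟩
    · exact ⟨_, _, _, rfl⟩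
  rw [hl] at h1 h2 h3 h4 ⊢
  obtain ⟨c, z, d, hsplit, haz, hd⟩ := exists_last_split (P := G.Adj a) (b :: t)
    ⟨b, by simp, (List.isChain_cons_cons.1 h1).1⟩
  rw [hsplit] at h1 h2 h3 h4 ⊢
  have e : a :: (c ++ z :: d) = (a :: (c ++ [z])) ++ d := by simp
  have hsub : ∀ w ∈ a :: (c ++ [z]), w ∈ a :: (c ++ z :: d) := by
    intro w hw; rw [e]; exact List.mem_append_left _ hw
  have hch : (a :: (c ++ [z])).IsChain G.Adj := by
    rw [e] at h1; exact (List.isChain_append.1 h1).1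
  have hnd : (a :: (c ++ [z])).Nodup := by
    rw [e] at h2; exact (List.nodup_append.1 h2).1
  have hfull := h.eq_of_full (fun u hu w hw => h.list_eq hn hu hw)
    (T := {w | w ∈ a :: (c ++ [z])}) (fun w hw => h3 w (hsub w hw))
    (conn_list _ (by simp) hch) (noCut_cycle hch hnd haz) (a := a) (by simp) (by
      intro u hu hau
      have := h4 a (by simp) u hu hau
      rw [e] at this
      rcases List.mem_append.1 this with h5 | h5
      · exact h5
      · exact (hd u h5 hau).elim)
  refine Set.Subset.antisymm ?_ h3
  rw [← hfull]
  exact hsub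

/-! ### The list version of Brooks' theorem for sets without cut vertices -/

/-- A connected set that is not complete contains an induced path on three vertices. -/
theorem exists_induced_path {S : Set V} (hS : Conn G S) (h : ¬ IsCompleteSet G S) :
    ∃ x ∈ S, ∃ v ∈ S, ∃ y ∈ S, G.Adj x v ∧ G.Adj v y ∧ x ≠ y ∧ ¬ G.Adj x y := by
  by_contra! hcon
  refine h fun u hu w hw huw => ?_
  have := hS.2 {z | z ∈ S ∧ (z = u ∨ G.Adj u z)} (fun z hz => hz.1) ⟨u, hu, Or.inl rfl⟩ (by
    rintro a ⟨ha, ha'⟩ b hb hab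
    refine ⟨hb, ?_⟩
    rcases ha' with rfl | ha'
    · exact Or.inr hab
    · by_cases hbu : b = u
      · exact Or.inl hbu
      · exact Or.inr (hcon u hu a ha b hb ha' hab (Ne.symm hbu)))
  exact (this hw).2.resolve_left huw.symm

/-- In a bad set without cut vertices, the middle vertex of an induced path `x v y` has degree
two. Otherwise the Hamiltonian path shows that the set stays connected without `x` and `y`; give
these two the same colour, which leaves too large a list at `v`. -/
theorem Bad.nbr_of_induced_path {L : V → Finset ℕ} {S : Set V} (h : Bad G L S) (hn : NoCut G S)
    {x v y : V} (hx : x ∈ S) (hv : v ∈ S) (hy : y ∈ S) (hxv : G.Adj x v) (hvy : G.Adj v y)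
    (hxy : x ≠ y) (hxy' : ¬ G.Adj x y) {u : V} (hu : u ∈ S) (hvu : G.Adj v u) :
    u = x ∨ u = y := by
  by_contra! hne
  obtain ⟨p, h1, h2, h3⟩ := h.exists_hamiltonian hn hx hv hy hxv hvy hxy
  have hup : u ∈ p := by
    have : u ∈ p ++ [y, v, x] := by rw [h3] at hu; exact hu
    simpa [hne.1, hne.2, hvu.ne'] using this
  obtain ⟨c, hc⟩ : (L x).Nonempty := by
    rw [← Finset.card_pos, h.card_eq hx]
    exact (Set.ncard_pos (Set.toFinite _)).2 ⟨v, hxv, hv⟩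
  have hT : S \ {x, y} = insert v {z | z ∈ p} := by
    rw [h3]
    have := hxv.ne
    have := hvy.ne
    ext z
    simp only [Set.mem_sdiff, Set.mem_ofPred_eq, List.mem_append, List.mem_cons,
      Set.mem_insert_iff, Set.mem_singleton_iff]
    simp only [List.nodup_append, List.mem_cons] at h2
    grind
  have hTc : Conn G (S \ {x, y}) := by
    rw [hT]
    exact (conn_list p (List.ne_nil_of_mem hup) (List.isChain_append.1 h1).1).insert_adj
      (x := u) hup hvu.symm
  have hST : S \ (S \ {x, y}) = {x, y} :=
    Set.sdiff_sdiff_cancel_left (by rintro z (rfl | rfl) <;> assumption)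
  have hφ : Col G L (S \ (S \ {x, y})) (fun _ => c) := by
    rw [hST]
    constructor
    · rintro z (rfl | rfl)
      · exact hc
      · rwa [h.list_eq hn hy hx]
    · rintro z (rfl | rfl) w (rfl | rfl) hzw
      · exact (hzw.ne rfl).elim
      · exact (hxy' hzw).elim
      · exact (hxy' hzw.symm).elim
      · exact (hzw.ne rfl).elim
  have hb := h.restrict Set.sdiff_subset hTc hφ
  have hvT : v ∈ S \ {x, y} := by rw [hT]; exact Or.inl rfl
  have e1 := hb.card_eq hvT
  have e2 := h.card_eq hv
  have e3 := degIn_lt (G := G) (S := S \ {x}) (T := S) Set.sdiff_subset hxv.symm hx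
    (fun h => h.2 rfl)
  have e4 := degIn_lt (G := G) (S := S \ {x, y}) (T := S \ {x})
    (fun z hz => ⟨hz.1, fun h => hz.2 (Or.inl h)⟩) hvy ⟨hy, hxy.symm⟩ (fun h => h.2 (Or.inr rfl))
  have e5 : (L v).erase c ⊆ rest G L (S \ (S \ {x, y})) (fun _ => c) v := by
    intro d hd
    rw [Finset.mem_erase] at hd
    exact mem_rest.2 ⟨hd.2, fun _ _ _ => hd.1.symm⟩
  have e6 := Finset.card_le_card e5
  have e7 := Finset.pred_card_le_card_erase (s := L v) (a := c)
  omega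

/-- If the set is not complete, all its degrees are two, and on an even number of vertices two
colours could alternate along the Hamiltonian path. -/
theorem Bad.complete_or_oddCycle {L : V → Finset ℕ} {S : Set V} (h : Bad G L S)
    (hn : NoCut G S) : IsCompleteSet G S ∨ IsOddCycleSet G S := by
  classical
  by_cases hcomp : IsCompleteSet G S
  · exact Or.inl hcomp
  obtain ⟨x, hx, v, hv, y, hy, hxv, hvy, hxy, hxy'⟩ := exists_induced_path h.1 hcomp
  have hv2 : degIn G S v = 2 := by
    have : G.neighborSet v ∩ S = {x, y} := by
      ext u
      constructor
      · rintro ⟨hvu, hu⟩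
        exact h.nbr_of_induced_path hn hx hv hy hxv hvy hxy hxy' hu hvu
      · rintro (rfl | rfl)
        · exact ⟨hxv.symm, hx⟩
        · exact ⟨hvy, hy⟩
    rw [degIn, this, Set.ncard_pair hxy]
  have hdeg : ∀ w ∈ S, degIn G S w = 2 := by
    intro w hw
    rw [← hv2, ← h.card_eq hv, ← h.card_eq hw, h.list_eq hn hw hv]
  obtain ⟨p, h1, h2, h3⟩ := h.exists_hamiltonian hn hx hv hy hxv hvy hxy
  obtain ⟨l, hl⟩ : ∃ l, l = p ++ [y, v, x] := ⟨_, rfl⟩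
  have hlen : 3 ≤ l.length := by rw [hl]; simp
  rw [← hl] at h1 h2 h3
  have hcard : S.ncard = l.length := by
    have : S = (l.toFinset : Set V) := by rw [h3]; ext; simp
    rw [this, Set.ncard_coe_finset, List.toFinset_card_of_nodup h2]
  refine Or.inr ⟨?_, by omega, conn_iff.2 h.1, hdeg⟩
  by_contra hodd
  rw [hcard] at hodd
  refine h.2.2 ?_
  obtain ⟨a, b, hab, hLv⟩ := Finset.card_eq_two.1 ((h.card_eq hv).trans hv2)
  have hmem : ∀ (i : ℕ) (hi : i < l.length), l[i] ∈ S := by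
    intro i hi; rw [h3]; exact List.getElem_mem hi
  have hch : ∀ (i : ℕ) (hi : i + 1 < l.length), G.Adj l[i] l[i + 1] :=
    List.isChain_iff_getElem.1 h1
  have hthree : ∀ (i j k m : ℕ) (hi : i < l.length) (hj : j < l.length) (hk : k < l.length)
      (hm : m < l.length), j ≠ k → j ≠ m → k ≠ m → G.Adj l[i] l[j] → G.Adj l[i] l[k] →
      G.Adj l[i] l[m] → False := by
    intro i j k m hi hj hk hm hjk hjm hkm a1 a2 a3
    have hne : ∀ (i j : ℕ) (hi : i < l.length) (hj : j < l.length), i ≠ j → l[i] ≠ l[j] :=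
      fun i j hi hj hij he => hij ((h2.getElem_inj_iff).1 he)
    have e1 : ({l[j], l[k], l[m]} : Set V).ncard = 3 :=
      Set.ncard_eq_three.2 ⟨_, _, _, hne j k hj hk hjk, hne j m hj hm hjm, hne k m hk hm hkm, rfl⟩
    have e2 : ({l[j], l[k], l[m]} : Set V).ncard ≤ degIn G S l[i] := by
      refine Set.ncard_le_ncard ?_ (Set.toFinite _)
      rintro z (rfl | rfl | rfl)
      · exact ⟨a1, hmem _ _⟩
      · exact ⟨a2, hmem _ _⟩
      · exact ⟨a3, hmem _ _⟩
    rw [hdeg _ (hmem i hi)] at e2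
    omega
  -- edges join consecutive positions or the two ends of the path, so they change parity
  have hpar : ∀ (i j : ℕ) (hi : i < l.length) (hj : j < l.length), i < j → G.Adj l[i] l[j] →
      ¬ (Even i ↔ Even j) := by
    intro i j hi hj hij hadj hpar
    have hij2 : j ≠ i + 1 := by rintro rfl; grind
    by_cases hi0 : i = 0
    · subst hi0
      by_cases hjl : j + 1 = l.length
      · grind
      · obtain ⟨k, rfl⟩ : ∃ k, j = k + 1 := ⟨j - 1, by omega⟩
        exact hthree (k + 1) k (k + 2) 0 hj (by omega) (by omega) hi (by omega) (by omega)
          (by omega) (hch k hj).symm (hch (k + 1) (by omega)) hadj.symm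
    · obtain ⟨k, rfl⟩ : ∃ k, i = k + 1 := ⟨i - 1, by omega⟩
      exact hthree (k + 1) k (k + 2) j hi (by omega) (by omega) hj (by omega) (by omega)
          (by omega) (hch k hi).symm (hch (k + 1) (by omega)) hadj
  refine ⟨fun w => if Even (l.idxOf w) then a else b, ?_, ?_⟩
  · intro w hw
    rw [h.list_eq hn hw hv, hLv]
    dsimp only
    split_ifs <;> simp
  · intro u hu w hw huw
    have hul : l.idxOf u < l.length := List.idxOf_lt_length_iff.2 (by rw [h3] at hu; exact hu)
    have hwl : l.idxOf w < l.length := List.idxOf_lt_length_iff.2 (by rw [h3] at hw; exact hw)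
    have hp : ¬ (Even (l.idxOf u) ↔ Even (l.idxOf w)) := by
      rcases lt_trichotomy (l.idxOf u) (l.idxOf w) with hlt | heq | hlt
      · exact hpar _ _ hul hwl hlt (by simpa using huw)
      · have : l[l.idxOf u] = l[l.idxOf w] := by simp only [heq]
        simp only [List.getElem_idxOf] at this
        exact (huw.ne this).elim
      · exact fun he => hpar _ _ hwl hul hlt (by simpa using huw.symm) he.symm
    dsimp only
    by_cases hE : Even (l.idxOf u)
    · have : ¬ Even (l.idxOf w) := fun h' => hp (by simp [hE, h'])
      simp [hE, this, hab]
    · have : Even (l.idxOf w) := by by_contra h'; exact hp (by simp [hE, h'])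
      simp [hE, this, hab.symm]

/-! ### Colour sets of blocks -/

/-- A colouring of everything but `v` uses each colour of `L v` on exactly one neighbour of `v`. -/
theorem Bad.image_nbr {L : V → Finset ℕ} {S : Set V} (h : Bad G L S) {v : V} (hv : v ∈ S)
    {φ : V → ℕ} (hφ : Col G L (S \ {v}) φ) :
    φ '' (G.neighborSet v ∩ S) = L v ∧ Set.InjOn φ (G.neighborSet v ∩ S) := by
  have hb := (h.restrict (Set.singleton_subset_iff.2 hv) (conn_singleton v) hφ).card_eq
    (Set.mem_singleton v)
  have h0 : degIn G {v} v = 0 := by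
    rw [degIn, Set.ncard_eq_zero]
    ext z
    simp only [Set.mem_inter_iff, mem_neighborSet, Set.mem_singleton_iff, Set.mem_empty_iff_false,
      iff_false, not_and]
    exact fun h1 h2 => h1.ne' h2
  rw [h0, Finset.card_eq_zero] at hb
  have hsub : (L v : Set ℕ) ⊆ φ '' (G.neighborSet v ∩ S) := by
    intro c hc
    have : c ∉ rest G L (S \ {v}) φ v := by simp [hb]
    rw [mem_rest] at this
    push Not at this
    obtain ⟨u, hu, hvu, huc⟩ := this hc
    exact ⟨u, ⟨hvu, hu.1⟩, huc⟩
  have hcard : (L v : Set ℕ).ncard = (G.neighborSet v ∩ S).ncard := by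
    rw [Set.ncard_coe_finset]; exact h.card_eq hv
  have hle := Set.ncard_image_le (f := φ) (Set.toFinite (G.neighborSet v ∩ S))
  have heq := Set.eq_of_subset_of_ncard_le hsub (by omega) (Set.toFinite _)
  refine ⟨heq.symm, Set.injOn_of_ncard_image_eq ?_ (Set.toFinite _)⟩
  rw [← heq, hcard]

/-- The colour set `K` of a block `B`: the list that is left at every vertex of `B` by a colouring
of the complement of `B`. Near each `v ∈ B` it is the set of colours used on the neighbours of `v`
in `B` by a suitable colouring of `G - v`. -/
theorem Bad.exists_blockColors {L : V → Finset ℕ} (h : Bad G L Set.univ) {B : Set V}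
    (hB : IsBlock G B) : ∃ K : Finset ℕ, ∀ v ∈ B, K ⊆ L v ∧
      ∃ ψ, Col G L {v}ᶜ ψ ∧ ψ '' (G.neighborSet v ∩ B) = K := by
  classical
  rw [isBlock_iff] at hB
  obtain ⟨hBc, hBn, -⟩ := hB
  obtain ⟨w, hw⟩ := hBc.1
  obtain ⟨φ, hφ⟩ := h.exists_col (Set.subset_univ B) hBc.1
  have hb := h.restrict (Set.subset_univ B) hBc hφ
  refine ⟨rest G L (Set.univ \ B) φ w, fun v hv => ?_⟩
  rw [hb.list_eq hBn hw hv]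
  refine ⟨fun c hc => (mem_rest.1 hc).1, ?_⟩
  obtain ⟨χ, hχ⟩ := hb.exists_col (Set.singleton_subset_iff.2 hv) (Set.singleton_nonempty v)
  have hg := hφ.glue Set.sdiff_subset hχ
  have hset : (Set.univ \ B) ∪ (B \ {v}) = {v}ᶜ := by
    ext z
    simp only [Set.mem_union, Set.mem_sdiff, Set.mem_univ, true_and, Set.mem_singleton_iff,
      Set.mem_compl_iff]
    by_cases hz : z = v
    · simp [hz, hv]
    · simp only [hz]; tauto
  rw [hset] at hg
  refine ⟨_, hg, ?_⟩
  rw [← (hb.image_nbr hv hχ).1]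
  refine Set.image_congr fun u hu => ?_
  simp [hu.2]

open Classical in
/-- Colourings of `G - v` may be exchanged on a union of components. -/
theorem Col.mix {L : V → Finset ℕ} {v : V} {C : Set V} (hC : Closed G C {v}ᶜ) {φ ψ : V → ℕ}
    (hφ : Col G L {v}ᶜ φ) (hψ : Col G L {v}ᶜ ψ) :
    Col G L {v}ᶜ (fun u => if u ∈ C then φ u else ψ u) := by
  constructor
  · intro u hu
    dsimp only
    split_ifs
    · exact hφ.1 u hu
    · exact hψ.1 u hu
  · intro u hu w hw huw
    by_cases huC : u ∈ C
    · simpa [huC, hC u huC w hw huw] using hφ.2 u hu w hw huw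
    · have : w ∉ C := fun hwC => huC (hC w hwC u hu huw.symm)
      simpa [huC, this] using hψ.2 u hu w hw huw

end DegreeList

open DegreeList in
/-- The degree-list theorem (Borodin; Erdős–Rubin–Taylor; Kostochka–Stiebitz–Wirth):
if a connected graph with lists of size at least the degrees has no list coloring, then
all lists have size exactly the degree, the graph is a Gallai tree, and its lists
decompose along the blocks. -/
theorem stmt_4 {V : Type*} [Fintype V] (G : SimpleGraph V) (hc : G.Connected)
    (L : V → Finset ℕ) (hL : ∀ v, vdeg G v ≤ (L v).card)
    (hno : ¬ ∃ φ : V → ℕ, IsListColoring G L φ) :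
    (∀ v, (L v).card = vdeg G v) ∧
    IsGallaiTree G ∧
    (∃ LB : Set V → Finset ℕ,
      (∀ B1 B2 : Set V, IsBlock G B1 → IsBlock G B2 → B1 ≠ B2 → (B1 ∩ B2).Nonempty →
        Disjoint (LB B1) (LB B2)) ∧
      (∀ v, (L v : Set ℕ) = ⋃ B ∈ {B : Set V | IsBlock G B ∧ v ∈ B}, (LB B : Set ℕ))) := by
  classical
  have hdeg : ∀ v, degIn G Set.univ v = vdeg G v := fun v => by
    rw [degIn, vdeg, Set.inter_univ]
  have hbad : Bad G L Set.univ := by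
    refine ⟨?_, fun v _ => (hdeg v).trans_le (hL v), ?_⟩
    · exact conn_iff.1 ((SimpleGraph.induceUnivIso G).connected_iff.2 hc)
    · rintro ⟨φ, h1, h2⟩
      exact hno ⟨φ, fun v => h1 v trivial, fun u v => h2 u trivial v trivial⟩
  have himg : ∀ v ψ, Col G L {v}ᶜ ψ →
      ψ '' G.neighborSet v = L v ∧ Set.InjOn ψ (G.neighborSet v) := by
    intro v ψ hψ
    rw [Set.compl_eq_univ_sdiff] at hψ
    simpa only [Set.inter_univ] using hbad.image_nbr trivial hψ
  refine ⟨fun v => (hbad.card_eq trivial).trans (hdeg v), ⟨hc, fun B hB => ?_⟩, ?_⟩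
  · have hB' := isBlock_iff.1 hB
    obtain ⟨φ, hφ⟩ := hbad.exists_col (Set.subset_univ B) hB'.1.1
    exact (hbad.restrict (Set.subset_univ B) hB'.1 hφ).complete_or_oddCycle hB'.2.1
  choose! K hK using fun (B : Set V) (hB : IsBlock G B) => hbad.exists_blockColors hB
  refine ⟨K, ?_, ?_⟩
  · rintro B1 B2 h1 h2 hne ⟨v, hv1, hv2⟩
    rw [Finset.disjoint_left]
    intro c hc1 hc2
    obtain ⟨-, ψ1, hψ1, hi1⟩ := hK B1 h1 v hv1
    obtain ⟨-, ψ2, hψ2, hi2⟩ := hK B2 h2 v hv2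
    obtain ⟨C, hC, hCB⟩ := h2.exists_branch hv2
    obtain ⟨u1, ⟨hu1, hu1B⟩, rfl⟩ : c ∈ ψ1 '' (G.neighborSet v ∩ B1) := hi1 ▸ hc1
    obtain ⟨u2, ⟨hu2, hu2B⟩, hu2c⟩ : ψ1 u1 ∈ ψ2 '' (G.neighborSet v ∩ B2) := hi2 ▸ hc2
    have hu1C : u1 ∉ C := fun h =>
      hne (h1.eq_of_two h2 (SimpleGraph.Adj.ne' hu1) hu1B ((hCB u1 hu1).1 h) hv1 hv2)
    have hu2C : u2 ∈ C := (hCB u2 hu2).2 hu2B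
    -- the mixed colouring uses the common colour both at `u1` and at `u2`
    have := (himg v _ (hψ2.mix hC hψ1)).2 hu1 hu2 (by simp [hu1C, hu2C, hu2c])
    exact hu1C (this ▸ hu2C)
  · intro v
    ext c
    simp only [Set.mem_iUnion, Set.mem_ofPred_eq, exists_prop]
    refine ⟨fun hcL => ?_, fun ⟨B, ⟨hB, hv⟩, hcB⟩ => (hK B hB v hv).1 hcB⟩
    obtain ⟨φ, hφ⟩ := hbad.exists_col (Set.subset_univ {v}) (Set.singleton_nonempty v)
    rw [← Set.compl_eq_univ_sdiff] at hφ
    obtain ⟨u, hu, rfl⟩ : c ∈ φ '' G.neighborSet v := by rw [(himg v φ hφ).1]; exact hcL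
    obtain ⟨B, hvB, huB, hB⟩ := exists_block_of_adj (G := G) hu
    refine ⟨B, ⟨hB, hvB⟩, ?_⟩
    obtain ⟨-, ψ, hψ, hi⟩ := hK B hB v hvB
    obtain ⟨C, hC, hCB⟩ := hB.exists_branch hvB
    obtain ⟨w, hw, hwc⟩ := (himg v _ (hψ.mix hC hφ)).1.symm ▸ hcL
    by_cases hwC : w ∈ C
    · rw [← hi]
      exact ⟨w, ⟨hw, (hCB w hw).1 hwC⟩, by simpa [hwC] using hwc⟩
    · have : w = u := (himg v φ hφ).2 hw hu (by simpa [hwC] using hwc)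
      exact absurd ((hCB u hu).2 huB) (this ▸ hwC)
end

section
/- If G is a K5-minor-free graph with d(v) ≥ 5 for all vertices v, then G is f-list colorable, where f(v) = min{d(v), 6} for all v. -/
/-!
Since every degree is at least `5`, every list has at least `5` colours, so it suffices that finite
`K₅`-minor-free graphs are `5`-choosable (`K5Choose.five_choosable`). The proof adapts Thomassen's
induction for planar graphs so that it uses neither an embedding nor Wagner's structure theorem.

The stronger statement proved by induction (`K5Choose.Prob`) concerns a `K₅`-minor-free graph with
an apex `z` that is not to be coloured. The set `X` of neighbours of `z` replaces the outer
boundary: lists have size `3` on `X` and `5` elsewhere, and a clique `P ⊆ X` of at most two vertices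
is precoloured. If `X = P`, a coloured vertex becomes the new apex (`sol_of_sub`). Otherwise, if
some `v ∈ X \ P` has few neighbours in `X`, then `v` is contracted into `z` after one or two colours have
been reserved for it, exactly as in Thomassen's proof (`sol_of_good`).

If there is no such `v`, the graph on `X` contains a cycle; take a shortest one, `H`, which is
chordless. If `H` covers `X`, a neighbour on `H` of a precoloured vertex would be such a `v`
(`sol_of_induced`). So some component `Y` of the rest of the graph off `H` meets `X`. It attaches
to at most two vertices of `H`, since with three attachments `z`, `Y` and three arcs of `H` would
form a `K₅`-minor (`Cyc.model`). These at most two vertices lie in `X` and separate the graph. They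
can be made adjacent on both sides by contracting an arc of `H` or `Y`, so the colouring is obtained
one side at a time (`sol_of_sep`, `sol_of_cyc`).
-/

open SimpleGraph

namespace K5Choose

/-! ### Connected vertex sets and `K₅`-models -/

/-- `B` is nonempty and induces a connected subgraph of `G`, phrased without walks: a set that
meets `B` and is closed under adjacency inside `B` contains `B`. -/
def Conn {W : Type*} (G : SimpleGraph W) (B : Set W) : Prop :=
  B.Nonempty ∧ ∀ U : Set W, (∃ a ∈ B, a ∈ U) →
    (∀ a ∈ B, ∀ b ∈ B, a ∈ U → G.Adj a b → b ∈ U) → B ⊆ U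

/-- `G` has a `K₅`-minor all of whose branch sets lie inside `T`. -/
def Model {W : Type*} (G : SimpleGraph W) (T : Set W) : Prop :=
  ∃ B : Fin 5 → Set W, (∀ i, Conn G (B i)) ∧ (∀ i, B i ⊆ T) ∧
    (∀ i j, i ≠ j → Disjoint (B i) (B j)) ∧
    ∀ i j, i ≠ j → ∃ u ∈ B i, ∃ v ∈ B j, G.Adj u v

theorem Conn.induce_connected {W : Type*} {G : SimpleGraph W} {B : Set W} (h : Conn G B) :
    (G.induce B).Connected := by
  obtain ⟨⟨r, hr⟩, h⟩ := h
  have : Nonempty B := ⟨⟨r, hr⟩⟩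
  refine ⟨?_⟩
  rintro ⟨a, ha⟩ ⟨b, hb⟩
  have := h {v | ∃ hv : v ∈ B, (G.induce B).Reachable ⟨a, ha⟩ ⟨v, hv⟩} ⟨a, ha, ha, .refl _⟩ (by
    rintro x hx y hy ⟨_, hxr⟩ hxy
    exact ⟨hy, hxr.trans (SimpleGraph.Adj.reachable (by simpa using hxy))⟩) hb
  exact this.2

theorem K5MinorFree.not_model {W : Type*} {G : SimpleGraph W} (hG : K5MinorFree G) (T : Set W) :
    ¬ Model G T := by
  rintro ⟨B, hc, -, hd, ha⟩
  exact hG ⟨B, fun i => (hc i).1, fun i => (hc i).induce_connected, fun i j h => hd i j h,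
    fun i j h => ha i j (by simpa using h)⟩

theorem Model.mono {W : Type*} {G : SimpleGraph W} {T T' : Set W} (h : Model G T)
    (hT : T ⊆ T') : Model G T' := by
  obtain ⟨B, hc, hs, h⟩ := h
  exact ⟨B, hc, fun i => (hs i).trans hT, h⟩

theorem conn_singleton {W : Type*} (G : SimpleGraph W) (v : W) : Conn G {v} := by
  refine ⟨⟨v, rfl⟩, ?_⟩
  rintro U ⟨a, rfl, ha⟩ - b rfl
  exact ha

theorem Conn.union {W : Type*} {G : SimpleGraph W} {A B : Set W} (hA : Conn G A)
    (hB : Conn G B) {a b : W} (ha : a ∈ A) (hb : b ∈ B) (hab : G.Adj a b) :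
    Conn G (A ∪ B) := by
  refine ⟨⟨a, .inl ha⟩, ?_⟩
  rintro U ⟨x, hx, hxU⟩ hU
  have h1 : ∀ y ∈ A, y ∈ U → A ⊆ U := fun y hy hyU => hA.2 U ⟨y, hy, hyU⟩
    fun p hp q hq => hU p (.inl hp) q (.inl hq)
  have h2 : ∀ y ∈ B, y ∈ U → B ⊆ U := fun y hy hyU => hB.2 U ⟨y, hy, hyU⟩
    fun p hp q hq => hU p (.inr hp) q (.inr hq)
  rcases hx with hx | hx
  · have h3 := h1 x hx hxU
    exact Set.union_subset h3 (h2 b hb (hU a (.inl ha) b (.inr hb) (h3 ha) hab))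
  · have h3 := h2 x hx hxU
    exact Set.union_subset (h1 a ha (hU b (.inr hb) a (.inl ha) (h3 hb) hab.symm)) h3

theorem Conn.of_adj {W : Type*} {G G' : SimpleGraph W} {B : Set W} (h : Conn G' B)
    (hGG : ∀ a ∈ B, ∀ b ∈ B, G'.Adj a b → G.Adj a b) : Conn G B :=
  ⟨h.1, fun U hU hc => h.2 U hU fun a ha b hb haU hab => hc a ha b hb haU (hGG a ha b hb hab)⟩

/-- The vertex set of the component of `r` in the subgraph of `G` induced on `D`. -/
def comp {W : Type*} (G : SimpleGraph W) (D : Set W) (r : W) : Set W :=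
  {v | v ∈ D ∧ ∀ U : Set W, r ∈ U → (∀ a ∈ D, ∀ b ∈ D, a ∈ U → G.Adj a b → b ∈ U) → v ∈ U}

theorem comp_closed {W : Type*} {G : SimpleGraph W} {D : Set W} {r a b : W}
    (ha : a ∈ comp G D r) (hb : b ∈ D) (hab : G.Adj a b) : b ∈ comp G D r :=
  ⟨hb, fun U hr hU => hU a ha.1 b hb (ha.2 U hr hU) hab⟩

theorem conn_comp {W : Type*} (G : SimpleGraph W) {D : Set W} {r : W} (hr : r ∈ D) :
    Conn G (comp G D r) := by
  have hrr : r ∈ comp G D r := ⟨hr, fun U h _ => h⟩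
  have key : ∀ U : Set W, r ∈ U →
      (∀ a ∈ comp G D r, ∀ b ∈ comp G D r, a ∈ U → G.Adj a b → b ∈ U) → comp G D r ⊆ U := by
    intro U hrU hU v hv
    refine (hv.2 {w | w ∈ comp G D r ∧ w ∈ U} ⟨hrr, hrU⟩ ?_).2
    rintro a ha b hb ⟨ha1, ha2⟩ hab
    have := comp_closed ha1 hb hab
    exact ⟨this, hU a ha1 b this ha2 hab⟩
  refine ⟨⟨r, hrr⟩, ?_⟩
  rintro U ⟨a, ha, haU⟩ hU
  by_cases hrU : r ∈ U
  · exact key U hrU hU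
  · exact absurd haU (key Uᶜ hrU (fun p hp q hq hpU hpq hqU => hpU (hU q hq p hp hqU hpq.symm)) ha)

/-- `G` with edges added from `p` to all vertices of `Q`. -/
def addE {W : Type*} (G : SimpleGraph W) (p : W) (Q : Set W) : SimpleGraph W :=
  G ⊔ SimpleGraph.fromRel fun a b => a = p ∧ b ∈ Q

theorem addE_adj {W : Type*} {G : SimpleGraph W} {p : W} {Q : Set W} {a b : W} :
    (addE G p Q).Adj a b ↔ G.Adj a b ∨ a ≠ b ∧ (a = p ∧ b ∈ Q ∨ b = p ∧ a ∈ Q) := by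
  simp [addE]

theorem Conn.of_addE {W : Type*} {G : SimpleGraph W} {p : W} {Q B C : Set W} (hp : p ∈ B)
    (hB : Conn (addE G p Q) B) (hC : Conn G C) (hpC : ∃ c ∈ C, G.Adj c p)
    (hQC : ∀ q ∈ Q, ∃ c ∈ C, G.Adj c q) : Conn G (B ∪ C) := by
  refine ⟨⟨p, .inl hp⟩, ?_⟩
  rintro U ⟨x, hx, hxU⟩ hU
  obtain ⟨c, hc, hcp⟩ := hpC
  have h1 : ∀ y ∈ C, y ∈ U → C ⊆ U := fun y hy hyU => hC.2 U ⟨y, hy, hyU⟩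
    fun p hp q hq => hU p (.inr hp) q (.inr hq)
  have h2 : p ∈ U → C ⊆ U := fun h => h1 c hc (hU p (.inl hp) c (.inr hc) h hcp.symm)
  have h3 : C ⊆ U → p ∈ U := fun h => hU c (.inr hc) p (.inl hp) (h hc) hcp
  have h4 : ∀ y ∈ B, y ∈ U → B ⊆ U := by
    intro y hy hyU
    refine hB.2 U ⟨y, hy, hyU⟩ ?_
    intro a ha b hb haU hab
    rcases addE_adj.1 hab with hab | ⟨-, ⟨rfl, hbQ⟩ | ⟨rfl, haQ⟩⟩
    · exact hU a (.inl ha) b (.inl hb) haU hab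
    · obtain ⟨d, hd, hdb⟩ := hQC b hbQ
      exact hU d (.inr hd) b (.inl hb) (h2 haU hd) hdb
    · obtain ⟨d, hd, hda⟩ := hQC a haQ
      exact h3 (h1 d hd (hU a (.inl ha) d (.inr hd) haU hda.symm))
  rcases hx with hx | hx
  · have := h4 x hx hxU
    exact Set.union_subset this (h2 (this hp))
  · have := h1 x hx hxU
    exact Set.union_subset (h4 p hp (h3 this)) this

/-- Contracting a connected set `C` outside `T` into `p ∈ T` creates no `K₅`-minor: a model in the
contracted graph lifts by adjoining `C` to the branch set of `p`. -/
theorem Model.of_addE {W : Type*} {G : SimpleGraph W} {p : W} {Q C T T' : Set W}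
    (h : Model (addE G p Q) T) (hC : Conn G C) (hCT : Disjoint C T) (hpC : ∃ c ∈ C, G.Adj c p)
    (hQC : ∀ q ∈ Q, ∃ c ∈ C, G.Adj c q) (hCT' : C ⊆ T') (hTT' : T ⊆ T') : Model G T' := by
  obtain ⟨B, hc, hs, hd, hBadj⟩ := h
  refine ⟨fun i => B i ∪ {c | c ∈ C ∧ p ∈ B i}, fun i => ?_, fun i => ?_, fun i j hij => ?_,
    fun i j hij => ?_⟩
  · by_cases hp : p ∈ B i
    · simpa [hp] using Conn.of_addE hp (hc i) hC hpC hQC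
    · simp only [hp, and_false, Set.ofPred_false, Set.union_empty]
      refine (hc i).of_adj fun a ha b hb hab => ?_
      rcases addE_adj.1 hab with hab | ⟨-, ⟨rfl, _⟩ | ⟨rfl, _⟩⟩
      · exact hab
      · exact absurd ha hp
      · exact absurd hb hp
  · exact Set.union_subset ((hs i).trans hTT') fun c hc => hCT' hc.1
  · have hd' := Set.disjoint_left.1 (hd i j hij)
    have hCT := Set.disjoint_left.1 hCT
    rw [Set.disjoint_left]
    rintro x (hx | ⟨hx, hpi⟩) (hy | ⟨hy, hpj⟩)
    · exact hd' hx hy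
    · exact hCT hy (hs i hx)
    · exact hCT hx (hs j hy)
    · exact hd' hpi hpj
  · obtain ⟨u, hu, v, hv, huv⟩ := hBadj i j hij
    rcases addE_adj.1 huv with huv | ⟨-, ⟨rfl, hQ⟩ | ⟨rfl, hQ⟩⟩
    · exact ⟨u, .inl hu, v, .inl hv, huv⟩
    · obtain ⟨c, hc, hcv⟩ := hQC v hQ
      exact ⟨c, .inr ⟨hc, hu⟩, v, .inl hv, hcv⟩
    · obtain ⟨c, hc, hcv⟩ := hQC u hQ
      exact ⟨u, .inl hu, c, .inr ⟨hc, hv⟩, hcv.symm⟩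

/-! ### Cycles -/

/-- `h 0, …, h (m - 1)` is a (not necessarily induced) cycle of length `m` on vertices of `X`;
the values of `h` from `m` on are irrelevant. -/
def Cyc {W : Type*} (G : SimpleGraph W) (X : Set W) (m : ℕ) (h : ℕ → W) : Prop :=
  3 ≤ m ∧ (∀ i < m, h i ∈ X) ∧ (∀ i < m, ∀ j < m, h i = h j → i = j) ∧
    (∀ i, i + 1 < m → G.Adj (h i) (h (i + 1))) ∧ G.Adj (h (m - 1)) (h 0)

theorem conn_arc {W : Type*} {G : SimpleGraph W} {m : ℕ} {h : ℕ → W}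
    (hadj : ∀ i, i + 1 < m → G.Adj (h i) (h (i + 1))) {i j : ℕ} (hij : i < j) (hj : j ≤ m) :
    Conn G (h '' Set.Ico i j) := by
  induction j, hij using Nat.le_induction with
  | base =>
    have : Set.Ico i (i + 1) = {i} := by ext; simp; omega
    simpa [this] using conn_singleton G (h i)
  | succ j hij ih =>
    have : Set.Ico i (j + 1) = Set.Ico i j ∪ {j} := by ext; simp; omega
    rw [this, Set.image_union, Set.image_singleton]
    refine (ih (by omega)).union (conn_singleton G (h j)) (a := h (j - 1)) (b := h j)
      ⟨j - 1, by simp; omega, rfl⟩ rfl ?_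
    have := hadj (j - 1) (by omega)
    rwa [Nat.sub_add_cancel (by omega)] at this

theorem exists_cyc {W : Type*} {G : SimpleGraph W} {X : Finset W} (hX : X.Nonempty)
    (hdeg : ∀ v ∈ X, ∀ w, ∃ u ∈ X, u ≠ w ∧ G.Adj v u) : ∃ m h, Cyc G (X : Set W) m h := by
  by_contra hno
  push Not at hno
  -- Without a cycle, every path extends at its end, so there are arbitrarily long paths.
  have key : ∀ l, ∃ h : ℕ → W, (∀ i ≤ l, h i ∈ X) ∧ (∀ i ≤ l, ∀ j ≤ l, h i = h j → i = j) ∧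
      ∀ i, i + 1 ≤ l → G.Adj (h i) (h (i + 1)) := by
    intro l
    induction l with
    | zero =>
      obtain ⟨v, hv⟩ := hX
      exact ⟨fun _ => v, fun _ _ => hv, fun i hi j hj _ => by omega, fun i hi => by omega⟩
    | succ l ih =>
      obtain ⟨h, h1, h2, h3⟩ := ih
      obtain ⟨u, hu, hne, hadj⟩ := hdeg (h l) (h1 l le_rfl) (h (l - 1))
      have hnew : ∀ i ≤ l, h i ≠ u := by
        rintro i hi rfl
        have hil : i ≠ l := by rintro rfl; exact G.irrefl hadj
        have hil' : i ≠ l - 1 := by rintro rfl; exact hne rfl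
        refine hno (l - i + 1) (fun k => h (i + k)) ⟨by omega, fun k hk => h1 _ (by omega),
          fun a ha b hb hab => ?_, fun k hk => h3 _ (by omega), ?_⟩
        · have := h2 _ (by omega) _ (by omega) hab
          omega
        · have : i + (l - i + 1 - 1) = l := by omega
          dsimp only
          rw [this]
          exact hadj
      refine ⟨fun k => if k ≤ l then h k else u, fun i hi => ?_, fun i hi j hj hij => ?_,
        fun i hi => ?_⟩
      · dsimp only; split_ifs with hl
        · exact h1 i hl
        · exact hu
      · dsimp only at hij
        split_ifs at hij with hl hl' hl'
        · exact h2 i hl j hl' hij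
        · exact absurd hij (hnew i hl)
        · exact absurd hij.symm (hnew j hl')
        · omega
      · rcases Nat.lt_or_ge i l with hl | hl
        · simpa [hl.le, Nat.succ_le_of_lt hl] using h3 i hl
        · obtain rfl : i = l := by omega
          simpa using hadj
  obtain ⟨h, h1, h2, -⟩ := key X.card
  have := Finset.card_le_card_of_injOn (s := Finset.range (X.card + 1)) (t := X) h
    (fun i hi => h1 i (by simp at hi; omega))
    (fun i hi j hj => h2 i (by simp at hi; omega) j (by simp at hj; omega))
  simp at this

/-- A shortest cycle has no chord. -/
theorem Cyc.chordless {W : Type*} {G : SimpleGraph W} {X : Set W} {m : ℕ} {h : ℕ → W}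
    (hc : Cyc G X m h) (hmin : ∀ m' h', Cyc G X m' h' → m ≤ m') {i j : ℕ} (hij : i < j)
    (hj : j < m) (hadj : G.Adj (h i) (h j)) : j = i + 1 ∨ (i = 0 ∧ j = m - 1) := by
  obtain ⟨-, h1, h2, h3, -⟩ := hc
  by_contra hcon
  have := hmin (j - i + 1) (fun k => h (i + k)) ⟨by omega, fun k hk => h1 _ (by omega),
    fun a ha b hb hab => by have := h2 _ (by omega) _ (by omega) hab; omega,
    fun k hk => h3 _ (by omega), by
      have : i + (j - i + 1 - 1) = j := by omega
      dsimp only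
      rw [this]
      exact hadj.symm⟩
  omega

/-- A connected set `Y` off a cycle of neighbours of `z`, itself containing a neighbour of `z`,
attaches to at most two vertices of the cycle: otherwise `z`, `Y` and three arcs of the cycle
form a `K₅`-model. -/
theorem Cyc.model {W : Type*} {G : SimpleGraph W} {X T Y : Set W} {z : W} {m : ℕ} {h : ℕ → W}
    (hc : Cyc G X m h) (hX : ∀ v ∈ X, G.Adj z v) (hXT : X ⊆ T) (hYT : Y ⊆ T) (hzT : z ∉ T)
    (hY : Conn G Y) (hYz : ∃ y ∈ Y, G.Adj z y) (hdis : ∀ i < m, h i ∉ Y) {i j k : ℕ}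
    (hij : i < j) (hjk : j < k) (hk : k < m) (hi' : ∃ y ∈ Y, G.Adj y (h i))
    (hj' : ∃ y ∈ Y, G.Adj y (h j)) (hk' : ∃ y ∈ Y, G.Adj y (h k)) : Model G (insert z T) := by
  obtain ⟨hm, h1, h2, h3, h4⟩ := hc
  obtain ⟨y, hy, hzy⟩ := hYz
  obtain ⟨yi, hyi, hi'⟩ := hi'
  obtain ⟨yj, hyj, hj'⟩ := hj'
  obtain ⟨yk, hyk, hk'⟩ := hk'
  have arcsub : ∀ a b, b ≤ m → h '' Set.Ico a b ⊆ X := by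
    rintro a b hb _ ⟨c, hc, rfl⟩
    exact h1 c (by simp at hc; omega)
  have arcdis : ∀ a b c, c ≤ m → Disjoint (h '' Set.Ico a b) (h '' Set.Ico b c) := by
    intro a b c hc
    rw [Set.disjoint_left]
    rintro _ ⟨s, hs, rfl⟩ ⟨t, ht, hst⟩
    simp at hs ht
    have := h2 t (by omega) s (by omega) hst
    omega
  have arcdis' : Disjoint (h '' Set.Ico 0 j) (h '' Set.Ico k m) :=
    (arcdis 0 k m le_rfl).mono_left (Set.image_mono (Set.Ico_subset_Ico_right hjk.le))
  have zdis : ∀ B : Set W, B ⊆ T → Disjoint {z} B := by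
    intro B hB
    rw [Set.disjoint_singleton_left]
    exact fun hz => hzT (hB hz)
  have ydis : ∀ a b, b ≤ m → Disjoint Y (h '' Set.Ico a b) := by
    intro a b hb
    rw [Set.disjoint_right]
    rintro _ ⟨s, hs, rfl⟩
    exact hdis s (by simp at hs; omega)
  have e1 := h3 (j - 1) (by omega)
  have e2 := h3 (k - 1) (by omega)
  rw [Nat.sub_add_cancel (by omega)] at e1 e2
  have m0 : h 0 ∈ h '' Set.Ico 0 j := ⟨0, by simp; omega, rfl⟩
  have mi : h i ∈ h '' Set.Ico 0 j := ⟨i, by simp; omega, rfl⟩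
  have mj' : h (j - 1) ∈ h '' Set.Ico 0 j := ⟨j - 1, by simp; omega, rfl⟩
  have mj : h j ∈ h '' Set.Ico j k := ⟨j, by simp; omega, rfl⟩
  have mk' : h (k - 1) ∈ h '' Set.Ico j k := ⟨k - 1, by simp; omega, rfl⟩
  have mk : h k ∈ h '' Set.Ico k m := ⟨k, by simp; omega, rfl⟩
  have mm : h (m - 1) ∈ h '' Set.Ico k m := ⟨m - 1, by simp; omega, rfl⟩
  have zY := zdis Y hYT
  have z1 := zdis _ ((arcsub 0 j (by omega)).trans hXT)
  have z2 := zdis _ ((arcsub j k (by omega)).trans hXT)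
  have z3 := zdis _ ((arcsub k m le_rfl).trans hXT)
  have y1 := ydis 0 j (by omega)
  have y2 := ydis j k (by omega)
  have y3 := ydis k m le_rfl
  have d12 := arcdis 0 j k (by omega)
  have d23 := arcdis j k m le_rfl
  have wlog_lt : ∀ B : Fin 5 → Set W, (∀ i j, i < j → Disjoint (B i) (B j)) →
      (∀ i j, i < j → ∃ u ∈ B i, ∃ v ∈ B j, G.Adj u v) →
      (∀ i j, i ≠ j → Disjoint (B i) (B j)) ∧
        ∀ i j, i ≠ j → ∃ u ∈ B i, ∃ v ∈ B j, G.Adj u v := by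
    intro B hB hB'
    refine ⟨fun i j hij => ?_, fun i j hij => ?_⟩
    · rcases lt_or_gt_of_ne hij with h | h
      · exact hB i j h
      · exact (hB j i h).symm
    · rcases lt_or_gt_of_ne hij with h | h
      · exact hB' i j h
      · obtain ⟨u, hu, v, hv, huv⟩ := hB' j i h
        exact ⟨v, hv, u, hu, huv.symm⟩
  have zX : ∀ a < m, G.Adj z (h a) := fun a ha => hX _ (h1 a ha)
  refine ⟨![{z}, Y, h '' Set.Ico 0 j, h '' Set.Ico j k, h '' Set.Ico k m], ?_, ?_,
    wlog_lt _ ?_ ?_⟩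
  · intro a
    fin_cases a
    · exact conn_singleton G z
    · exact hY
    · exact conn_arc h3 (by omega) (by omega)
    · exact conn_arc h3 (by omega) (by omega)
    · exact conn_arc h3 (by omega) (by omega)
  · intro a
    fin_cases a
    · simp
    · exact hYT.trans (Set.subset_insert _ _)
    · exact ((arcsub 0 j (by omega)).trans hXT).trans (Set.subset_insert _ _)
    · exact ((arcsub j k (by omega)).trans hXT).trans (Set.subset_insert _ _)
    · exact ((arcsub k m le_rfl).trans hXT).trans (Set.subset_insert _ _)
  · intro a b hab
    fin_cases a <;> fin_cases b <;> first | exact absurd hab (by decide) | skip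
    · exact zY
    · exact z1
    · exact z2
    · exact z3
    · exact y1
    · exact y2
    · exact y3
    · exact d12
    · exact arcdis'
    · exact d23
  · intro a b hab
    fin_cases a <;> fin_cases b <;> first | exact absurd hab (by decide) | skip
    · exact ⟨z, rfl, y, hy, hzy⟩
    · exact ⟨z, rfl, h 0, m0, zX 0 (by omega)⟩
    · exact ⟨z, rfl, h j, mj, zX j (by omega)⟩
    · exact ⟨z, rfl, h k, mk, zX k (by omega)⟩
    · exact ⟨yi, hyi, h i, mi, hi'⟩
    · exact ⟨yj, hyj, h j, mj, hj'⟩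
    · exact ⟨yk, hyk, h k, mk, hk'⟩
    · exact ⟨h (j - 1), mj', h j, mj, e1⟩
    · exact ⟨h 0, m0, h (m - 1), mm, h4.symm⟩
    · exact ⟨h (k - 1), mk', h k, mk, e2⟩

/-! ### The colouring argument -/

/-- The colouring problem of the induction. The graph to be coloured is the one induced on `S`;
the apex `z` lies outside `S`, and `G` has no `K₅`-minor on `S ∪ {z}`. At most two vertices, forming
a clique `P` of neighbours of `z`, are precoloured by `c`. The remaining lists have size at least
`3` at neighbours of `z` and at least `5` elsewhere. (For a plane graph, the neighbours of `z` play
the part of the outer boundary.) -/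
structure Prob {W : Type*} (G : SimpleGraph W) (S : Finset W) (z : W) (P : Finset W)
    (L : W → Finset ℕ) (c : W → ℕ) : Prop where
  z_notMem : z ∉ S
  noModel : ¬ Model G (insert z (S : Set W))
  sub : P ⊆ S
  adj_z : ∀ p ∈ P, G.Adj z p
  clique : ∀ p ∈ P, ∀ q ∈ P, p ≠ q → G.Adj p q
  card_le : P.card ≤ 2
  proper : ∀ p ∈ P, ∀ q ∈ P, p ≠ q → c p ≠ c q
  three : ∀ v ∈ S, v ∉ P → 3 ≤ (L v).card
  five : ∀ v ∈ S, v ∉ P → ¬ G.Adj z v → 5 ≤ (L v).card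

/-- The precolouring `c` of `P` extends to an `L`-colouring of the subgraph of `G` on `S`. -/
def Sol {W : Type*} (G : SimpleGraph W) (S P : Finset W) (L : W → Finset ℕ) (c : W → ℕ) : Prop :=
  ∃ φ : W → ℕ, (∀ p ∈ P, φ p = c p) ∧ (∀ v ∈ S, v ∉ P → φ v ∈ L v) ∧
    ∀ u ∈ S, ∀ v ∈ S, G.Adj u v → φ u ≠ φ v

/-- Every instance of the colouring problem on fewer than `n` vertices is solvable. -/
def Hyp (W : Type*) (n : ℕ) : Prop :=
  ∀ (G : SimpleGraph W) (S : Finset W) (z : W) (P : Finset W) (L : W → Finset ℕ) (c : W → ℕ),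
    S.card < n → Prob G S z P L c → Sol G S P L c

open Classical in
/-- If all neighbours of `z` are precoloured, some coloured vertex can serve as the new apex. -/
theorem sol_of_sub {W : Type*} {G : SimpleGraph W} {S : Finset W} {z : W} {P : Finset W}
    {L : W → Finset ℕ} {c : W → ℕ} (ih : Hyp W S.card) (h : Prob G S z P L c)
    (hX : ∀ v ∈ S, G.Adj z v → v ∈ P) : Sol G S P L c := by
  rcases S.eq_empty_or_nonempty with rfl | ⟨s, hs⟩
  · exact ⟨c, fun _ _ => rfl, by simp, by simp⟩
  obtain ⟨y, hyS, hy⟩ : ∃ y ∈ S, P = ∅ ∨ y ∈ P := by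
    rcases P.eq_empty_or_nonempty with hP | ⟨y, hy⟩
    · exact ⟨s, hs, .inl hP⟩
    · exact ⟨y, h.sub hy, .inr hy⟩
  obtain ⟨k, hkP, hkL⟩ : ∃ k, (y ∈ P → k = c y) ∧ (y ∉ P → k ∈ L y) := by
    by_cases hyP : y ∈ P
    · exact ⟨c y, by simp, by simp [hyP]⟩
    · have := h.three y hyS hyP
      obtain ⟨k, hk⟩ := Finset.card_pos.1 (by omega : 0 < (L y).card)
      exact ⟨k, by simp [hyP], fun _ => hk⟩
  have h5 : ∀ v ∈ S.erase y, v ∉ P.erase y → 5 ≤ (L v).card := by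
    intro v hv hvP
    have hvP' : v ∉ P := fun hh => hvP (Finset.mem_erase.2 ⟨(Finset.mem_erase.1 hv).1, hh⟩)
    have hvS := (Finset.mem_erase.1 hv).2
    exact h.five v hvS hvP' fun hz => hvP' (hX v hvS hz)
  obtain ⟨φ, hφP, hφL, hφ⟩ := ih G (S.erase y) y (P.erase y)
    (fun v => if G.Adj y v then (L v).erase k else L v) c (Finset.card_erase_lt_of_mem hyS)
    { z_notMem := by simp
      noModel := fun hm => h.noModel (hm.mono (by
        intro v hv
        rcases hv with rfl | hv
        · exact .inr hyS
        · exact .inr (Finset.mem_of_mem_erase hv)))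
      sub := Finset.erase_subset_erase y h.sub
      adj_z := by
        intro p hp
        obtain ⟨hpy, hp⟩ := Finset.mem_erase.1 hp
        rcases hy with rfl | hy
        · simp at hp
        · exact h.clique y hy p hp hpy.symm
      clique := fun p hp q hq => h.clique p (Finset.mem_of_mem_erase hp) q
        (Finset.mem_of_mem_erase hq)
      card_le := (Finset.card_le_card (Finset.erase_subset y P)).trans h.card_le
      proper := fun p hp q hq => h.proper p (Finset.mem_of_mem_erase hp) q
        (Finset.mem_of_mem_erase hq)
      three := by
        intro v hv hvP
        have := h5 v hv hvP
        have := Finset.pred_card_le_card_erase (s := L v) (a := k)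
        split_ifs <;> omega
      five := by
        intro v hv hvP hn
        simpa [hn] using h5 v hv hvP }
  have hpk : ∀ v ∈ S, v ≠ y → G.Adj y v → φ v ≠ k := by
    intro v hv hvy hadj
    by_cases hvP : v ∈ P
    · have hyP : y ∈ P := by
        rcases hy with rfl | hy
        · simp at hvP
        · exact hy
      rw [hφP v (Finset.mem_erase.2 ⟨hvy, hvP⟩), hkP hyP]
      exact h.proper v hvP y hyP hvy
    · have := hφL v (Finset.mem_erase.2 ⟨hvy, hv⟩) (fun hh => hvP (Finset.mem_of_mem_erase hh))
      simp only [hadj, if_true] at this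
      exact (Finset.mem_erase.1 this).1
  refine ⟨Function.update φ y k, ?_, ?_, ?_⟩
  · intro p hp
    by_cases hpy : p = y
    · subst hpy; simpa using hkP hp
    · simpa [hpy] using hφP p (Finset.mem_erase.2 ⟨hpy, hp⟩)
  · intro v hv hvP
    by_cases hvy : v = y
    · subst hvy; simpa using hkL hvP
    · have := hφL v (Finset.mem_erase.2 ⟨hvy, hv⟩) (fun hh => hvP (Finset.mem_of_mem_erase hh))
      rw [Function.update_of_ne hvy]
      dsimp only at this
      split_ifs at this
      · exact Finset.mem_of_mem_erase this
      · exact this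
  · intro u hu v hv huv
    by_cases huy : u = y
    · subst huy
      have hvu := huv.ne'
      simpa [hvu] using (hpk v hv hvu huv).symm
    · by_cases hvy : v = y
      · subst hvy
        simpa [huy] using hpk u hu huy huv.symm
      · simpa [huy, hvy] using hφ u (Finset.mem_erase.2 ⟨huy, hu⟩) v
          (Finset.mem_erase.2 ⟨hvy, hv⟩) huv

open Classical in
/-- Thomassen's deletion step. Suppose a non-precoloured neighbour `v` of `z` has at most one
non-precoloured neighbour `w` adjacent to `z`, and few precoloured neighbours. Reserve up to two
colours at `v`, remove them from the lists of the neighbours of `v` not adjacent to `z`, contract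
`v` into `z`, and finally give `v` a reserved colour not used on `w`. -/
theorem sol_of_good {W : Type*} {G : SimpleGraph W} {S : Finset W} {z : W} {P : Finset W}
    {L : W → Finset ℕ} {c : W → ℕ} (ih : Hyp W S.card) (h : Prob G S z P L c) {v : W}
    (hvS : v ∈ S) (hvP : v ∉ P) (hzv : G.Adj z v)
    (hb : ((S \ P).filter fun u => G.Adj z u ∧ G.Adj v u).card ≤ 1)
    (hab : ((S \ P).filter fun u => G.Adj z u ∧ G.Adj v u).card +
      (P.filter fun u => G.Adj v u).card ≤ 2) : Sol G S P L c := by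
  set Bn := (S \ P).filter fun u => G.Adj z u ∧ G.Adj v u with hBn
  set Pn := P.filter fun u => G.Adj v u with hPn
  obtain ⟨R, hR, hRc⟩ : ∃ R ⊆ L v \ Pn.image c, R.card = Bn.card + 1 := by
    refine Finset.exists_subset_card_eq ?_
    have h1 := h.three v hvS hvP
    have h2 := Finset.le_card_sdiff (Pn.image c) (L v)
    have h3 : (Pn.image c).card ≤ Pn.card := Finset.card_image_le
    omega
  obtain ⟨φ, hφP, hφL, hφ⟩ := ih (addE G z {u | G.Adj v u}) (S.erase v) z P
    (fun u => if G.Adj v u ∧ ¬ G.Adj z u then L u \ R else L u) c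
    (Finset.card_erase_lt_of_mem hvS)
    { z_notMem := fun hz => h.z_notMem (Finset.mem_of_mem_erase hz)
      noModel := fun hm => h.noModel (hm.of_addE (conn_singleton G v)
        (by simpa using hzv.ne') ⟨v, rfl, hzv.symm⟩ (fun q hq => ⟨v, rfl, hq⟩)
        (by simpa using Or.inr hvS)
        (Set.insert_subset_insert (by exact_mod_cast Finset.erase_subset v S)))
      sub := fun p hp => Finset.mem_erase.2 ⟨fun hh => hvP (hh ▸ hp), h.sub hp⟩
      adj_z := fun p hp => addE_adj.2 (.inl (h.adj_z p hp))
      clique := fun p hp q hq hpq => addE_adj.2 (.inl (h.clique p hp q hq hpq))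
      card_le := h.card_le
      proper := h.proper
      three := by
        intro u hu huP
        have huS := Finset.mem_of_mem_erase hu
        split_ifs with hc
        · have h1 := h.five u huS huP hc.2
          have h2 := Finset.le_card_sdiff R (L u)
          omega
        · exact h.three u huS huP
      five := by
        intro u hu huP hn
        have huS := Finset.mem_of_mem_erase hu
        have hnz : ¬ G.Adj z u := fun hh => hn (addE_adj.2 (.inl hh))
        have hnv : ¬ G.Adj v u := fun hh => hn (addE_adj.2
          (.inr ⟨fun e => h.z_notMem (e ▸ huS), .inl ⟨rfl, hh⟩⟩))
        simpa [hnv] using h.five u huS huP hnz }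
  obtain ⟨k, hkR, hkB⟩ : ∃ k ∈ R, k ∉ Bn.image φ := by
    by_contra hcon
    push Not at hcon
    have h1 := Finset.card_le_card (show R ⊆ Bn.image φ from hcon)
    have h2 : (Bn.image φ).card ≤ Bn.card := Finset.card_image_le
    omega
  have hkL := Finset.mem_sdiff.1 (hR hkR)
  have hpk : ∀ u ∈ S, G.Adj v u → φ u ≠ k := by
    rintro u hu hadj rfl
    by_cases huP : u ∈ P
    · exact hkL.2 (Finset.mem_image.2 ⟨u, Finset.mem_filter.2 ⟨huP, hadj⟩, (hφP u huP).symm⟩)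
    · by_cases huz : G.Adj z u
      · exact hkB (Finset.mem_image_of_mem φ
          (Finset.mem_filter.2 ⟨Finset.mem_sdiff.2 ⟨hu, huP⟩, huz, hadj⟩))
      · have := hφL u (Finset.mem_erase.2 ⟨hadj.ne', hu⟩) huP
        simp only [hadj, huz, not_false_eq_true, and_self, if_true] at this
        exact (Finset.mem_sdiff.1 this).2 hkR
  refine ⟨Function.update φ v k, ?_, ?_, ?_⟩
  · intro p hp
    have hpv : p ≠ v := fun hh => hvP (hh ▸ hp)
    simpa [hpv] using hφP p hp
  · intro u hu huP
    by_cases huv : u = v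
    · subst huv; simpa using hkL.1
    · have := hφL u (Finset.mem_erase.2 ⟨huv, hu⟩) huP
      rw [Function.update_of_ne huv]
      dsimp only at this
      split_ifs at this
      · exact (Finset.mem_sdiff.1 this).1
      · exact this
  · intro a ha b hbS hadj
    by_cases hav : a = v
    · subst hav
      simpa [hadj.ne'] using (hpk b hbS hadj).symm
    · by_cases hbv : b = v
      · subst hbv
        simpa [hav] using hpk a ha hadj.symm
      · simpa [hav, hbv] using hφ a (Finset.mem_erase.2 ⟨hav, ha⟩) b
          (Finset.mem_erase.2 ⟨hbv, hbS⟩) (addE_adj.2 (.inl hadj))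

open Classical in
/-- Colouring along a separation of order at most two: the part containing `P` is coloured first,
then the other part with the separator `A ∩ B` precoloured. The supergraph `G'` makes the
separator a clique. -/
theorem sol_of_sep {W : Type*} {G G' : SimpleGraph W} {S : Finset W} {z : W} {P : Finset W}
    {L : W → Finset ℕ} {c : W → ℕ} (ih : Hyp W S.card) (h : Prob G S z P L c)
    (hGG : ∀ a b, G.Adj a b → G'.Adj a b) {A B : Finset W} (hAB : A ∪ B = S)
    (hA : A.card < S.card) (hB : B.card < S.card) (hPA : P ⊆ A)
    (hcross : ∀ a ∈ A, a ∉ B → ∀ b ∈ B, b ∉ A → ¬ G.Adj a b)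
    (hN : ∀ p ∈ A ∩ B, G.Adj z p) (hNc : (A ∩ B).card ≤ 2)
    (hNcl : ∀ p ∈ A ∩ B, ∀ q ∈ A ∩ B, p ≠ q → G'.Adj p q)
    (hmA : ¬ Model G' (insert z (A : Set W))) (hmB : ¬ Model G' (insert z (B : Set W))) :
    Sol G S P L c := by
  have hAS : A ⊆ S := hAB ▸ Finset.subset_union_left
  have hBS : B ⊆ S := hAB ▸ Finset.subset_union_right
  obtain ⟨φ, hφP, hφL, hφ⟩ := ih G' A z P L c hA
    { z_notMem := fun hz => h.z_notMem (hAS hz)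
      noModel := hmA
      sub := hPA
      adj_z := fun p hp => hGG _ _ (h.adj_z p hp)
      clique := fun p hp q hq hpq => hGG _ _ (h.clique p hp q hq hpq)
      card_le := h.card_le
      proper := h.proper
      three := fun v hv => h.three v (hAS hv)
      five := fun v hv hvP hn => h.five v (hAS hv) hvP fun hh => hn (hGG _ _ hh) }
  have hBP : ∀ v ∈ B, v ∉ A ∩ B → v ∉ P := fun v hv hvN hvP =>
    hvN (Finset.mem_inter.2 ⟨hPA hvP, hv⟩)
  obtain ⟨ψ, hψP, hψL, hψ⟩ := ih G' B z (A ∩ B) L φ hB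
    { z_notMem := fun hz => h.z_notMem (hBS hz)
      noModel := hmB
      sub := Finset.inter_subset_right
      adj_z := fun p hp => hGG _ _ (hN p hp)
      clique := hNcl
      card_le := hNc
      proper := fun p hp q hq hpq => hφ p (Finset.mem_inter.1 hp).1 q (Finset.mem_inter.1 hq).1
        (hNcl p hp q hq hpq)
      three := fun v hv hvN => h.three v (hBS hv) (hBP v hv hvN)
      five := fun v hv hvN hn => h.five v (hBS hv) (hBP v hv hvN) fun hh => hn (hGG _ _ hh) }
  have key : ∀ v ∈ B, (if v ∈ A then φ v else ψ v) = ψ v := by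
    intro v hv
    split_ifs with hvA
    · exact (hψP v (Finset.mem_inter.2 ⟨hvA, hv⟩)).symm
    · rfl
  have key' : ∀ v ∈ A, (if v ∈ A then φ v else ψ v) = φ v := fun v hv => if_pos hv
  refine ⟨fun v => if v ∈ A then φ v else ψ v, fun p hp => ?_, fun v hv hvP => ?_,
    fun u hu v hv huv => ?_⟩
  · rw [← hφP p hp]; exact key' p (hPA hp)
  · dsimp only
    split_ifs with hvA
    · exact hφL v hvA hvP
    · have hvB : v ∈ B := (Finset.mem_union.1 (hAB ▸ hv)).resolve_left hvA
      exact hψL v hvB fun hh => hvA (Finset.mem_inter.1 hh).1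
  · dsimp only
    have hu' := Finset.mem_union.1 (hAB ▸ hu)
    have hv' := Finset.mem_union.1 (hAB ▸ hv)
    by_cases h1 : u ∈ A ∧ v ∈ A
    · rw [key' u h1.1, key' v h1.2]
      exact hφ u h1.1 v h1.2 (hGG _ _ huv)
    · by_cases h2 : u ∈ B ∧ v ∈ B
      · rw [key u h2.1, key v h2.2]
        exact hψ u h2.1 v h2.2 (hGG _ _ huv)
      · exfalso
        by_cases huA : u ∈ A
        · have hvA : v ∉ A := fun hh => h1 ⟨huA, hh⟩
          have hvB := hv'.resolve_left hvA
          exact hcross u huA (fun hh => h2 ⟨hh, hvB⟩) v hvB hvA huv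
        · have huB := hu'.resolve_left huA
          have hvB : v ∉ B := fun hh => h2 ⟨huB, hh⟩
          exact hcross v (hv'.resolve_right hvB) hvB u huB huA huv.symm

/-- A chordless cycle through all neighbours of `z` in `S`: a non-precoloured vertex of the cycle
next to a precoloured one admits the deletion step. -/
theorem sol_of_induced {W : Type*} {G : SimpleGraph W} {S : Finset W} {z : W} {P : Finset W}
    {L : W → Finset ℕ} {c : W → ℕ} (ih : Hyp W S.card) (h : Prob G S z P L c)
    (hP : P.Nonempty) {m : ℕ} {f : ℕ → W} (hc : Cyc G {v | v ∈ S ∧ G.Adj z v} m f)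
    (hmin : ∀ m' f', Cyc G {v | v ∈ S ∧ G.Adj z v} m' f' → m ≤ m')
    (hall : ∀ v ∈ S, G.Adj z v → ∃ i < m, f i = v) : Sol G S P L c := by
  classical
  have hch := fun i j => hc.chordless hmin (i := i) (j := j)
  obtain ⟨hm, h1, h2, h3, h4⟩ := hc
  obtain ⟨x, hx⟩ := hP
  obtain ⟨i, hi, rfl⟩ := hall x (h.sub hx) (h.adj_z x hx)
  have hadj : ∀ i < m, ∀ j < m, (j = i + 1 ∨ i = m - 1 ∧ j = 0) → G.Adj (f i) (f j) := by
    rintro i hi j hj (rfl | ⟨rfl, rfl⟩)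
    · exact h3 i hj
    · exact h4
  obtain ⟨s, hs, hs'⟩ : ∃ s < m, s = i + 1 ∨ i = m - 1 ∧ s = 0 := by
    by_cases hh : i + 1 < m
    · exact ⟨i + 1, hh, .inl rfl⟩
    · exact ⟨0, by omega, .inr ⟨by omega, rfl⟩⟩
  obtain ⟨t, ht, ht'⟩ : ∃ t < m, i = t + 1 ∨ t = m - 1 ∧ i = 0 := by
    by_cases hh : i = 0
    · exact ⟨m - 1, by omega, .inr ⟨rfl, hh⟩⟩
    · exact ⟨i - 1, by omega, .inl (by omega)⟩
  obtain ⟨j, hj, hjP, hji⟩ : ∃ j < m, f j ∉ P ∧ G.Adj (f j) (f i) := by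
    by_contra hcon
    push Not at hcon
    have hsP : f s ∈ P := by
      by_contra hh
      exact hcon s hs hh (hadj i hi s hs hs').symm
    have htP : f t ∈ P := by
      by_contra hh
      exact hcon t ht hh (hadj t ht i hi ht')
    have hlt : 2 < P.card := Finset.two_lt_card.2 ⟨f i, hx, f s, hsP, f t, htP,
      fun e => by have := h2 _ hi _ hs e; omega, fun e => by have := h2 _ hi _ ht e; omega,
      fun e => by have := h2 _ hs _ ht e; omega⟩
    exact absurd h.card_le (by omega)
  have hsub : ((S \ P).filter fun u => G.Adj z u ∧ G.Adj (f j) u) ∪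
      (P.filter fun u => G.Adj (f j) u) ⊆
      {f (if j + 1 < m then j + 1 else 0), f (if j = 0 then m - 1 else j - 1)} := by
    intro u hu
    have hu' : u ∈ S ∧ G.Adj z u ∧ G.Adj (f j) u := by
      rcases Finset.mem_union.1 hu with hu | hu
      · obtain ⟨hu1, hu2⟩ := Finset.mem_filter.1 hu
        exact ⟨(Finset.mem_sdiff.1 hu1).1, hu2⟩
      · obtain ⟨hu1, hu2⟩ := Finset.mem_filter.1 hu
        exact ⟨h.sub hu1, h.adj_z u hu1, hu2⟩
    obtain ⟨k, hk, rfl⟩ := hall u hu'.1 hu'.2.1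
    have hne : j ≠ k := by rintro rfl; exact G.irrefl hu'.2.2
    have : k = (if j + 1 < m then j + 1 else 0) ∨ k = (if j = 0 then m - 1 else j - 1) := by
      rcases lt_or_gt_of_ne hne with hlt | hlt
      · have := hch j k hlt hk hu'.2.2
        split_ifs <;> omega
      · have := hch k j hlt hj hu'.2.2.symm
        split_ifs <;> omega
    rcases this with e | e
    · rw [← e]; simp
    · rw [← e]; simp
  have hcard := (Finset.card_le_card hsub).trans Finset.card_le_two
  rw [Finset.card_union_of_disjoint (by
    rw [Finset.disjoint_left]
    intro u hu hu'
    exact (Finset.mem_sdiff.1 (Finset.mem_filter.1 hu).1).2 (Finset.mem_filter.1 hu').1)] at hcard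
  have hpos : 0 < (P.filter fun u => G.Adj (f j) u).card :=
    Finset.card_pos.2 ⟨f i, Finset.mem_filter.2 ⟨hx, hji⟩⟩
  exact sol_of_good ih h (h1 j hj).1 hjP (h1 j hj).2 (by omega) hcard

/-- If the neighbours of `z` contain a cycle, then either a shortest such cycle contains all of
them, or a component off the cycle is cut off by at most two vertices of the cycle. -/
theorem sol_of_cyc {W : Type*} {G : SimpleGraph W} {S : Finset W} {z : W} {P : Finset W}
    {L : W → Finset ℕ} {c : W → ℕ} (ih : Hyp W S.card) (h : Prob G S z P L c)
    (hP : P.Nonempty) (hex : ∃ m f, Cyc G {v | v ∈ S ∧ G.Adj z v} m f) : Sol G S P L c := by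
  classical
  have hm0 := Nat.find_spec hex
  have hmin : ∀ m' f', Cyc G {v | v ∈ S ∧ G.Adj z v} m' f' → Nat.find hex ≤ m' :=
    fun m' f' hf => Nat.find_min' hex ⟨f', hf⟩
  generalize Nat.find hex = m at hm0 hmin
  obtain ⟨f, hc⟩ := hm0
  by_cases hall : ∀ v ∈ S, G.Adj z v → ∃ i < m, f i = v
  · exact sol_of_induced ih h hP hc hmin hall
  push Not at hall
  obtain ⟨r, hrS, hzr, hr⟩ := hall
  have hc' := hc
  obtain ⟨hm, h1, h2, h3, h4⟩ := hc'
  set D : Set W := {v | v ∈ S ∧ ∀ i < m, f i ≠ v} with hD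
  have hrD : r ∈ D := ⟨hrS, hr⟩
  set Y := comp G D r with hYdef
  have hYc : Conn G Y := conn_comp G hrD
  have hrY : r ∈ Y := ⟨hrD, fun U hU _ => hU⟩
  have hYS : ∀ y ∈ Y, y ∈ S := fun y hy => hy.1.1
  have hYf : ∀ i < m, f i ∉ Y := fun i hi hy => hy.1.2 i hi rfl
  set YF := S.filter (· ∈ Y) with hYF
  have memYF : ∀ v, v ∈ YF ↔ v ∈ Y := fun v =>
    ⟨fun hv => (Finset.mem_filter.1 hv).2, fun hv => Finset.mem_filter.2 ⟨hYS v hv, hv⟩⟩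
  set N := (S \ YF).filter (fun v => ∃ y ∈ Y, G.Adj y v) with hN
  have memN : ∀ v, v ∈ N ↔ v ∈ S ∧ v ∉ Y ∧ ∃ y ∈ Y, G.Adj y v := by
    intro v
    rw [hN, Finset.mem_filter, Finset.mem_sdiff, memYF, and_assoc]
  have hNf : ∀ v ∈ N, ∃ i < m, f i = v := by
    intro v hv
    obtain ⟨hvS, hvY, y, hy, hyv⟩ := (memN v).1 hv
    by_contra hcon
    push Not at hcon
    exact hvY (comp_closed hy ⟨hvS, hcon⟩ hyv)
  have hN3 : ∀ i j k, i < j → j < k → k < m → f i ∈ N → f j ∈ N → f k ∈ N → False :=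
    fun i j k hij hjk hk hi' hj' hk' => h.noModel
      (hc.model (T := (S : Set W)) (fun v hv => hv.2) (fun v hv => hv.1) hYS h.z_notMem hYc
        ⟨r, hrY, hzr⟩ hYf hij hjk hk ((memN _).1 hi').2.2 ((memN _).1 hj').2.2
        ((memN _).1 hk').2.2)
  have hNcard : N.card ≤ 2 := by
    by_contra hcon
    obtain ⟨a, ha, b, hb, d, hd, hab, had, hbd⟩ := Finset.two_lt_card.1 (not_le.1 hcon)
    obtain ⟨i, hi, rfl⟩ := hNf a ha
    obtain ⟨j, hj, rfl⟩ := hNf b hb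
    obtain ⟨k, hk, rfl⟩ := hNf d hd
    have hij : i ≠ j := fun e => hab (e ▸ rfl)
    have hik : i ≠ k := fun e => had (e ▸ rfl)
    have hjk : j ≠ k := fun e => hbd (e ▸ rfl)
    rcases lt_or_gt_of_ne hij with l1 | l1 <;> rcases lt_or_gt_of_ne hik with l2 | l2 <;>
      rcases lt_or_gt_of_ne hjk with l3 | l3
    · exact hN3 i j k l1 l3 hk ha hb hd
    · exact hN3 i k j l2 l3 hj ha hd hb
    · omega
    · exact hN3 k i j l2 l1 hj hd ha hb
    · exact hN3 j i k l1 l2 hk hb ha hd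
    · omega
    · exact hN3 j k i l3 l2 hi hb hd ha
    · exact hN3 k j i l3 l1 hi hd hb ha
  -- The two parts of the separation are `YF ∪ N` and `S \ YF`.
  have hS1 : insert z (((YF ∪ N : Finset W)) : Set W) ⊆ insert z (S : Set W) := by
    refine Set.insert_subset_insert fun v hv => ?_
    rcases Finset.mem_union.1 hv with hv | hv
    · exact (Finset.mem_filter.1 hv).1
    · exact ((memN v).1 hv).1
  have hS2 : insert z ((S \ YF : Finset W) : Set W) ⊆ insert z (S : Set W) :=
    Set.insert_subset_insert fun v hv => (Finset.mem_sdiff.1 hv).1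
  obtain ⟨G', hGG, hcl, hm1, hm2⟩ : ∃ G' : SimpleGraph W, (∀ a b, G.Adj a b → G'.Adj a b) ∧
      (∀ p ∈ N, ∀ q ∈ N, p ≠ q → G'.Adj p q) ∧
      ¬ Model G' (insert z ((YF ∪ N : Finset W) : Set W)) ∧
      ¬ Model G' (insert z ((S \ YF : Finset W) : Set W)) := by
    by_cases hcl : ∀ p ∈ N, ∀ q ∈ N, p ≠ q → G.Adj p q
    · exact ⟨G, fun _ _ hh => hh, hcl, fun hh => h.noModel (hh.mono hS1),
        fun hh => h.noModel (hh.mono hS2)⟩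
    obtain ⟨i, j, hij, hj, hiN, hjN, hnadj⟩ : ∃ i j, i < j ∧ j < m ∧ f i ∈ N ∧ f j ∈ N ∧
        ¬ G.Adj (f i) (f j) := by
      push Not at hcl
      obtain ⟨p, hp, q, hq, hpq, hnadj⟩ := hcl
      obtain ⟨i, hi, rfl⟩ := hNf p hp
      obtain ⟨j, hj, rfl⟩ := hNf q hq
      have hij : i ≠ j := fun e => hpq (e ▸ rfl)
      rcases lt_or_gt_of_ne hij with hlt | hlt
      · exact ⟨i, j, hlt, hj, hp, hq, hnadj⟩
      · exact ⟨j, i, hlt, hi, hq, hp, fun hh => hnadj hh.symm⟩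
    have hne : f i ≠ f j := fun e => by have := h2 i (by omega) j hj e; omega
    have hNpair : ∀ v ∈ N, v = f i ∨ v = f j := by
      intro v hv
      by_contra hcon
      push Not at hcon
      have : 2 < N.card := Finset.two_lt_card.2 ⟨v, hv, f i, hiN, f j, hjN, hcon.1, hcon.2, hne⟩
      omega
    have hij1 : i + 1 < j := by
      rcases Nat.lt_or_ge (i + 1) j with hh | hh
      · exact hh
      · obtain rfl : j = i + 1 := by omega
        exact absurd (h3 i hj) hnadj
    refine ⟨addE G (f i) {f j}, fun a b hh => addE_adj.2 (.inl hh), ?_, fun hh => ?_,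
      fun hh => ?_⟩
    · intro p hp q hq hpq
      rcases hNpair p hp with rfl | rfl <;> rcases hNpair q hq with rfl | rfl
      · exact absurd rfl hpq
      · exact addE_adj.2 (.inr ⟨hpq, .inl ⟨rfl, rfl⟩⟩)
      · exact addE_adj.2 (.inr ⟨hpq, .inr ⟨rfl, rfl⟩⟩)
      · exact absurd rfl hpq
    · -- The open arc of the cycle between the two separator vertices realises the new edge.
      have harc : ∀ v ∈ f '' Set.Ico (i + 1) j, ∃ k, i < k ∧ k < j ∧ f k = v := by
        rintro _ ⟨k, hk, rfl⟩
        simp at hk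
        exact ⟨k, by omega, by omega, rfl⟩
      refine h.noModel (hh.of_addE (C := f '' Set.Ico (i + 1) j) (conn_arc h3 hij1 hj.le) ?_
        ⟨f (i + 1), ⟨i + 1, by simp; omega, rfl⟩, (h3 i (by omega)).symm⟩ ?_ ?_ hS1)
      · rw [Set.disjoint_left]
        intro v hv hv'
        obtain ⟨k, hik, hkj, rfl⟩ := harc v hv
        rcases hv' with hv' | hv'
        · exact h.z_notMem (hv' ▸ (h1 k (by omega)).1)
        · rcases Finset.mem_union.1 hv' with hv' | hv'
          · exact hYf k (by omega) ((memYF _).1 hv')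
          · rcases hNpair _ hv' with e | e
            · have := h2 k (by omega) i (by omega) e
              omega
            · have := h2 k (by omega) j (by omega) e
              omega
      · rintro q rfl
        refine ⟨f (j - 1), ⟨j - 1, by simp; omega, rfl⟩, ?_⟩
        have := h3 (j - 1) (by omega)
        rwa [Nat.sub_add_cancel (by omega)] at this
      · intro v hv
        obtain ⟨k, hik, hkj, rfl⟩ := harc v hv
        exact .inr (h1 k (by omega)).1
    · -- On the other side the new edge is realised through `Y`.
      refine h.noModel (hh.of_addE (C := Y) hYc ?_ ((memN _).1 hiN).2.2 ?_
        (fun v hv => .inr (hYS v hv)) hS2)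
      · rw [Set.disjoint_left]
        rintro v hv (rfl | hv')
        · exact h.z_notMem (hYS _ hv)
        · exact (Finset.mem_sdiff.1 hv').2 ((memYF v).2 hv)
      · rintro q rfl
        exact ((memN _).1 hjN).2.2
  have hunion : (YF ∪ N) ∪ (S \ YF) = S := by
    ext v
    simp only [Finset.mem_union, Finset.mem_sdiff, memYF, memN]
    have := hYS v
    tauto
  have hinter : (YF ∪ N) ∩ (S \ YF) = N := by
    ext v
    simp only [Finset.mem_inter, Finset.mem_union, Finset.mem_sdiff, memYF, memN]
    tauto
  have hcross : ∀ a ∈ YF ∪ N, a ∉ S \ YF → ∀ b ∈ S \ YF, b ∉ YF ∪ N → ¬ G.Adj a b := by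
    intro a _ ha' b hb hb' hadj
    obtain ⟨hbS, hbY⟩ := Finset.mem_sdiff.1 hb
    rw [memYF] at hbY
    have haY : a ∈ Y := by
      by_contra hh
      refine ha' (Finset.mem_sdiff.2 ⟨?_, fun h' => hh ((memYF a).1 h')⟩)
      rw [← hunion]
      exact Finset.mem_union_left _ ‹_›
    exact hb' (Finset.mem_union_right _ ((memN b).2 ⟨hbS, hbY, a, haY, hadj⟩))
  have hNz : ∀ p ∈ N, G.Adj z p := by
    intro p hp
    obtain ⟨i, hi, rfl⟩ := hNf p hp
    exact (h1 i hi).2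
  have hc1 : (YF ∪ N).card < S.card := by
    obtain ⟨i, hi, hiN⟩ : ∃ i < m, f i ∉ N := by
      by_contra hcon
      push Not at hcon
      exact hN3 0 1 2 (by omega) (by omega) (by omega) (hcon 0 (by omega)) (hcon 1 (by omega))
        (hcon 2 (by omega))
    refine Finset.card_lt_card (Finset.ssubset_iff_of_subset ?_ |>.2 ⟨f i, (h1 i hi).1, ?_⟩)
    · exact hunion ▸ Finset.subset_union_left
    · intro hh
      rcases Finset.mem_union.1 hh with hh | hh
      · exact hYf i hi ((memYF _).1 hh)
      · exact hiN hh
  have hc2 : (S \ YF).card < S.card :=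
    Finset.card_lt_card (Finset.ssubset_iff_of_subset Finset.sdiff_subset |>.2
      ⟨r, hrS, fun hh => (Finset.mem_sdiff.1 hh).2 ((memYF r).2 hrY)⟩)
  by_cases hPY : ∃ p ∈ P, p ∈ Y
  · obtain ⟨p, hp, hpY⟩ := hPY
    refine sol_of_sep ih h hGG hunion hc1 hc2 ?_ hcross (by rwa [hinter]) (by rwa [hinter])
      (by rwa [hinter]) hm1 hm2
    intro q hq
    by_cases hqY : q ∈ Y
    · exact Finset.mem_union_left _ ((memYF q).2 hqY)
    · exact Finset.mem_union_right _ ((memN q).2 ⟨h.sub hq, hqY, p, hpY,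
        h.clique p hp q hq fun e => hqY (e ▸ hpY)⟩)
  · push Not at hPY
    rw [Finset.inter_comm] at hinter
    refine sol_of_sep ih h hGG (by rwa [Finset.union_comm]) hc2 hc1 ?_
      (fun a ha ha' b hb hb' hadj => hcross b hb hb' a ha ha' hadj.symm) (by rwa [hinter])
      (by rwa [hinter]) (by rwa [hinter]) hm2 hm1
    exact fun q hq => Finset.mem_sdiff.2 ⟨h.sub hq, fun hh => hPY q hq ((memYF q).1 hh)⟩

/-- If no vertex admits the deletion step, the neighbours of `z` contain a cycle: either a
triangle on both precoloured vertices, or one from a minimum degree of at least two. -/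
theorem sol_of_nonempty {W : Type*} {G : SimpleGraph W} {S : Finset W} {z : W} {P : Finset W}
    {L : W → Finset ℕ} {c : W → ℕ} (ih : Hyp W S.card) (h : Prob G S z P L c)
    (hP : P.Nonempty) : Sol G S P L c := by
  classical
  by_cases hX : ∀ v ∈ S, G.Adj z v → v ∈ P
  · exact sol_of_sub ih h hX
  push Not at hX
  obtain ⟨x, hxS, hzx, hxP⟩ := hX
  by_cases hgood : ∃ v ∈ S, v ∉ P ∧ G.Adj z v ∧
      ((S \ P).filter fun u => G.Adj z u ∧ G.Adj v u).card ≤ 1 ∧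
      ((S \ P).filter fun u => G.Adj z u ∧ G.Adj v u).card +
        (P.filter fun u => G.Adj v u).card ≤ 2
  · obtain ⟨v, hv, hvP, hzv, hb, hab⟩ := hgood
    exact sol_of_good ih h hv hvP hzv hb hab
  push Not at hgood
  refine sol_of_cyc ih h hP ?_
  by_cases htri : ∃ v ∈ S, v ∉ P ∧ G.Adj z v ∧ 2 ≤ (P.filter fun u => G.Adj v u).card
  · obtain ⟨v, hv, hvP, hzv, h2⟩ := htri
    obtain ⟨p, hp, q, hq, hpq⟩ := Finset.one_lt_card.1 h2
    obtain ⟨hp, hvp⟩ := Finset.mem_filter.1 hp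
    obtain ⟨hq, hvq⟩ := Finset.mem_filter.1 hq
    have hpq' := h.clique p hp q hq hpq
    refine ⟨3, fun k => if k = 0 then v else if k = 1 then p else q, le_rfl, ?_, ?_, ?_, ?_⟩
    · intro i hi
      interval_cases i
      · exact ⟨hv, hzv⟩
      · exact ⟨h.sub hp, h.adj_z p hp⟩
      · exact ⟨h.sub hq, h.adj_z q hq⟩
    · intro i hi j hj
      have := hvp.ne
      have := hvq.ne
      interval_cases i <;> interval_cases j <;> simp_all [eq_comm]
    · intro i hi
      have : i < 2 := by omega
      interval_cases i
      · exact hvp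
      · exact hpq'
    · exact hvq.symm
  · push Not at htri
    obtain ⟨m, f, hm, hf, hrest⟩ := exists_cyc (G := G) (X := (S \ P).filter fun u => G.Adj z u)
      ⟨x, Finset.mem_filter.2 ⟨Finset.mem_sdiff.2 ⟨hxS, hxP⟩, hzx⟩⟩ (by
        intro v hv w
        obtain ⟨hv, hzv⟩ := Finset.mem_filter.1 hv
        obtain ⟨hvS, hvP⟩ := Finset.mem_sdiff.1 hv
        have h1 := hgood v hvS hvP hzv
        have h2 := htri v hvS hvP hzv
        have h3 : 1 < ((S \ P).filter fun u => G.Adj z u ∧ G.Adj v u).card := by omega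
        obtain ⟨u, hu, huw⟩ := Finset.exists_mem_ne h3 w
        obtain ⟨hu, hzu, hvu⟩ := Finset.mem_filter.1 hu
        exact ⟨u, Finset.mem_filter.2 ⟨hu, hzu⟩, huw, hvu⟩)
    refine ⟨m, f, hm, fun i hi => ?_, hrest⟩
    obtain ⟨h1, h2⟩ := Finset.mem_filter.1 (hf i hi)
    exact ⟨(Finset.mem_sdiff.1 h1).1, h2⟩

/-- Every instance of the colouring problem is solvable. -/
theorem Prob.sol {W : Type*} : ∀ n, Hyp W n := by
  intro n
  induction n with
  | zero => exact fun G S z P L c hS => absurd hS (Nat.not_lt_zero _)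
  | succ n ihn =>
    intro G S z P L c hS h
    have ih : Hyp W S.card := fun G' S' z' P' L' c' hS' h' =>
      ihn G' S' z' P' L' c' (by omega) h'
    rcases P.eq_empty_or_nonempty with rfl | hP
    · by_cases hX : ∀ v ∈ S, G.Adj z v → v ∈ (∅ : Finset W)
      · exact sol_of_sub ih h hX
      · -- Precolour an arbitrary neighbour `x` of `z`.
        push Not at hX
        obtain ⟨x, hxS, hzx, hx⟩ := hX
        have h3 := h.three x hxS hx
        obtain ⟨k, hk⟩ := Finset.card_pos.1 (by omega : 0 < (L x).card)
        obtain ⟨φ, hφP, hφL, hφ⟩ := sol_of_nonempty (P := {x}) (c := fun _ => k) ih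
          { z_notMem := h.z_notMem
            noModel := h.noModel
            sub := by simpa using hxS
            adj_z := by simpa using hzx
            clique := by simp
            card_le := by simp
            proper := by simp
            three := fun v hv _ => h.three v hv (by simp)
            five := fun v hv _ => h.five v hv (by simp) } ⟨x, by simp⟩
        refine ⟨φ, by simp, fun v hv _ => ?_, hφ⟩
        by_cases hvx : v = x
        · subst hvx
          rw [hφP v (by simp)]
          exact hk
        · exact hφL v hv (by simpa using hvx)
    · exact sol_of_nonempty ih h hP

/-- Finite `K₅`-minor-free graphs are `5`-choosable. -/
theorem five_choosable {V : Type*} [Fintype V] (G : SimpleGraph V) (hG : K5MinorFree G)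
    (L : V → Finset ℕ) (hL : ∀ v, 5 ≤ (L v).card) : ∃ φ : V → ℕ, IsListColoring G L φ := by
  classical
  rcases isEmpty_or_nonempty V with hV | ⟨⟨z⟩⟩
  · exact ⟨fun _ => 0, fun v => hV.elim v, fun v => hV.elim v⟩
  obtain ⟨k, hk⟩ := Finset.card_pos.1 (by have := hL z; omega : 0 < (L z).card)
  -- Colour one vertex `z` and use it as the first apex.
  obtain ⟨φ, -, hφL, hφ⟩ := Prob.sol (W := V) _ G (Finset.univ.erase z) z ∅
    (fun v => if G.Adj z v then (L v).erase k else L v) (fun _ => 0) (Nat.lt_succ_self _)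
    { z_notMem := by simp
      noModel := K5MinorFree.not_model hG _
      sub := by simp
      adj_z := by simp
      clique := by simp
      card_le := by simp
      proper := by simp
      three := fun v _ _ => by
        have := hL v
        have := Finset.pred_card_le_card_erase (s := L v) (a := k)
        split_ifs <;> omega
      five := fun v _ _ hn => by simpa [hn] using hL v }
  have hmem : ∀ v, v ≠ z → φ v ∈ if G.Adj z v then (L v).erase k else L v :=
    fun v hv => hφL v (by simpa using hv) (by simp)
  have hne : ∀ v, G.Adj z v → φ v ≠ k := by
    intro v hadj
    have := hmem v hadj.ne'
    rw [if_pos hadj] at this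
    exact (Finset.mem_erase.1 this).1
  refine ⟨Function.update φ z k, fun v => ?_, fun u v huv => ?_⟩
  · by_cases hv : v = z
    · subst hv; simpa using hk
    · rw [Function.update_of_ne hv]
      have := hmem v hv
      split_ifs at this
      · exact Finset.mem_of_mem_erase this
      · exact this
  · by_cases hu : u = z
    · subst hu
      simpa [huv.ne'] using (hne v huv).symm
    · by_cases hv : v = z
      · subst hv
        simpa [hu] using hne u huv.symm
      · simpa [hu, hv] using hφ u (by simpa using hu) v (by simpa using hv) huv

end K5Choose

theorem stmt_5 {V : Type*} [Fintype V] (G : SimpleGraph V) (hG : K5MinorFree G)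
    (hdeg : ∀ v, 5 ≤ vdeg G v)
    (L : V → Finset ℕ) (hL : ∀ v, (L v).card = min (vdeg G v) 6) :
    ∃ φ : V → ℕ, IsListColoring G L φ :=
  K5Choose.five_choosable G hG L fun v => by
    have := hdeg v
    rw [hL v]
    omega
end

section
/- If G is a 5-connected K5-minor-free graph, then G is f-list colorable, where f(v) = min{d(v), 6} for all vertices v. -/
/-!
In a 5-connected graph every degree is at least five, so every list has at least five colours, and
it suffices that `K₅`-minor-free graphs are 5-choosable. The proof follows Thomassen's argument for
planar graphs, but uses minors in place of an embedding: the outer face is replaced by a vertex `a`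
and the boundary by the neighbours of `a`.

The induction hypothesis `K5List.Ext` colours `G - a` when the neighbours of `a` have three colours,
the other vertices five, and a clique `P` of at most two neighbours of `a` is precoloured. One may
add edges until `G` is edge-maximal without a `K₅`-minor, and a separating clique on at most three
vertices lets one colour the two sides one after the other (`K5List.ext_of_sep`). Without such
cliques, adjacent vertices have at most two common neighbours (`K5List.common_le_two`):

* two common neighbours of `a` and `v` cannot be separated by `a`, `v` and a third vertex `c`, as
  otherwise `c` could be joined to `a` and `v` without creating a `K₅`-minor;
* three vertices, no two of which are separated by a single vertex, root a triangle minor, and `a`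
  and `v` would complete it to a `K₅`-minor.

Now let `x ∈ P`. If `x` has a neighbour `v ∉ P` adjacent to `a`, reserve two colours of `v` that
differ from the colour of `x`, remove them from the lists of the neighbours of `v` not adjacent to
`a`, and contract `v` into `a`; apart from `x`, at most one neighbour of `v` is also adjacent to
`a` and can use a reserved colour, so `v` can be coloured at the end. If no vertex of `P` has such
a neighbour, then contract `x` into `a` and remove its colour from the lists of its neighbours. In
both cases the contraction keeps the graph `K₅`-minor-free and makes every vertex with a shortened
list a neighbour of `a`.
-/

open SimpleGraph

namespace K5List

variable {V : Type*}

/-! ### Connected sets and models of complete minors -/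

/-- `v` can be reached from `u` by a walk in `G` that stays inside `S`. -/
def Reach (G : SimpleGraph V) (S : Set V) : V → V → Prop :=
  Relation.ReflTransGen fun x y => G.Adj x y ∧ x ∈ S ∧ y ∈ S

/-- `S` is nonempty and induces a connected subgraph of `G`. -/
def ConnOn (G : SimpleGraph V) (S : Set V) : Prop :=
  S.Nonempty ∧ ∀ u ∈ S, ∀ v ∈ S, Reach G S u v

/-- A model of a `K₅`-minor of `G` whose five branch sets `B i` lie inside `Y`. -/
def Model (G : SimpleGraph V) (Y : Set V) (B : Fin 5 → Set V) : Prop :=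
  (∀ i, ConnOn G (B i)) ∧ (∀ i, B i ⊆ Y) ∧ (∀ i j, i ≠ j → ∀ u ∈ B i, u ∉ B j) ∧
    ∀ i j, i ≠ j → ∃ u ∈ B i, ∃ v ∈ B j, G.Adj u v

theorem Reach.mono {G G' : SimpleGraph V} {S S' : Set V} {u v : V} (h : Reach G S u v)
    (hG : ∀ x ∈ S, ∀ y ∈ S, G.Adj x y → G'.Adj x y) (hS : S ⊆ S') : Reach G' S' u v :=
  Relation.ReflTransGen.mono
    (fun x y h => ⟨hG x h.2.1 y h.2.2 h.1, hS h.2.1, hS h.2.2⟩) _ _ h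

theorem Reach.symm {G : SimpleGraph V} {S : Set V} {u v : V} (h : Reach G S u v) :
    Reach G S v u := by
  induction h with
  | refl => exact Relation.ReflTransGen.refl
  | tail _ h ih => exact Relation.ReflTransGen.head ⟨h.1.symm, h.2.2, h.2.1⟩ ih

theorem Reach.mem {G : SimpleGraph V} {S : Set V} {u v : V} (h : Reach G S u v) (hu : u ∈ S) :
    v ∈ S := by
  induction h with
  | refl => exact hu
  | tail _ h _ => exact h.2.2

theorem connOn_iff {G : SimpleGraph V} {S : Set V} :
    (G.induce S).Connected ↔ ConnOn G S := by
  rw [SimpleGraph.connected_iff]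
  constructor
  · rintro ⟨h, ⟨x⟩⟩
    refine ⟨⟨x, x.2⟩, fun u hu v hv => ?_⟩
    have := (SimpleGraph.reachable_iff_reflTransGen _ _).1 (h ⟨u, hu⟩ ⟨v, hv⟩)
    exact Relation.ReflTransGen.lift (fun z : S => (z : V))
      (fun x y hxy => ⟨by simpa using hxy, x.2, y.2⟩) _ _ this
  · rintro ⟨⟨x, hx⟩, h⟩
    refine ⟨?_, ⟨⟨x, hx⟩⟩⟩
    rintro ⟨u, hu⟩ ⟨v, hv⟩
    have key : ∀ w, Reach G S u w → ∀ hw : w ∈ S,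
        (G.induce S).Reachable ⟨u, hu⟩ ⟨w, hw⟩ := by
      intro w hr
      induction hr with
      | refl => intro _; exact SimpleGraph.Reachable.refl _
      | tail _ h ih =>
        intro hw
        refine (ih h.2.1).trans (SimpleGraph.Adj.reachable ?_)
        simpa using h.1
    exact key v (h u hu v hv) hv

theorem not_free_of_model {G : SimpleGraph V} {Y : Set V} {B : Fin 5 → Set V}
    (h : Model G Y B) : ¬ K5MinorFree G := by
  intro hG
  refine hG ⟨B, fun i => (h.1 i).1, fun i => connOn_iff.2 (h.1 i), ?_, ?_⟩
  · intro i j hij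
    exact Set.disjoint_left.2 fun u hu => h.2.2.1 i j hij u hu
  · intro i j hij
    exact h.2.2.2 i j hij.ne

theorem exists_model {G : SimpleGraph V} (h : ¬ K5MinorFree G) : ∃ B, Model G Set.univ B := by
  obtain ⟨B, _, h2, h3, h4⟩ := not_not.1 h
  exact ⟨B, fun i => connOn_iff.1 (h2 i), fun i => Set.subset_univ _,
    fun i j hij u hu hu' => Set.disjoint_left.1 (h3 hij) hu hu',
    fun i j hij => h4 i j hij⟩

theorem free_mono {G H : SimpleGraph V} (h : G ≤ H) (hH : K5MinorFree H) : K5MinorFree G := by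
  by_contra hG
  obtain ⟨B, h1, h2, h3, h4⟩ := exists_model hG
  refine not_free_of_model (Y := Set.univ) (B := B) ⟨fun i => ⟨(h1 i).1, fun u hu v hv =>
    ((h1 i).2 u hu v hv).mono (fun x _ y _ hxy => h hxy) subset_rfl⟩, h2, h3, ?_⟩ hH
  intro i j hij
  obtain ⟨u, hu, v, hv, huv⟩ := h4 i j hij
  exact ⟨u, hu, v, hv, h huv⟩

theorem connOn_singleton (G : SimpleGraph V) (x : V) : ConnOn G {x} :=
  ⟨⟨x, rfl⟩, by rintro u rfl v rfl; exact Relation.ReflTransGen.refl⟩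

theorem ConnOn.union {G : SimpleGraph V} {S T : Set V} (hS : ConnOn G S) (hT : ConnOn G T)
    {s t : V} (hs : s ∈ S) (ht : t ∈ T) (h : G.Adj s t) : ConnOn G (S ∪ T) := by
  have key : ∀ u ∈ S ∪ T, Reach G (S ∪ T) s u := by
    rintro u (hu | hu)
    · exact (hS.2 s hs u hu).mono (fun _ _ _ _ h => h) Set.subset_union_left
    · exact Relation.ReflTransGen.head ⟨h, Or.inl hs, Or.inr ht⟩
        ((hT.2 t ht u hu).mono (fun _ _ _ _ h => h) Set.subset_union_right)
  exact ⟨⟨s, Or.inl hs⟩, fun u hu v hv => (key u hu).symm.trans (key v hv)⟩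

theorem connOn_component (G : SimpleGraph V) (S : Set V) (u : V) :
    ConnOn G {w | Reach G S u w} := by
  have key : ∀ w, Reach G S u w → Reach G {w | Reach G S u w} u w := by
    intro w h
    induction h with
    | refl => exact Relation.ReflTransGen.refl
    | tail h1 h2 ih => exact ih.tail ⟨h2.1, h1, h1.tail h2⟩
  exact ⟨⟨u, Relation.ReflTransGen.refl⟩, fun x hx y hy => (key x hx).symm.trans (key y hy)⟩

/-! ### Minors under clique separations and contractions -/

/-- If every branch set of a `K₅`-model meets one side `A` of a clique separation `(A, B)`, then
intersecting all branch sets with `A` gives a model: a detour through the other side leaves and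
re-enters `A` in the clique `A ∩ B`, so one edge of the clique replaces it. -/
theorem model_inter {G : SimpleGraph V} {A B : Set V} {M : Fin 5 → Set V}
    (hM : Model G Set.univ M) (hAB : ∀ v, v ∈ A ∨ v ∈ B)
    (hsep : ∀ u v, u ∉ A → v ∉ B → ¬ G.Adj u v)
    (hcl : ∀ u ∈ A ∩ B, ∀ v ∈ A ∩ B, u ≠ v → G.Adj u v)
    (hmeet : ∀ i, (M i ∩ A).Nonempty) : Model G A fun i => M i ∩ A := by
  obtain ⟨h1, -, h3, h4⟩ := hM
  have key : ∀ i, ∀ u ∈ M i ∩ A, ∀ z, Reach G (M i) u z →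
      (z ∈ A → Reach G (M i ∩ A) u z) ∧
      (z ∉ A → ∃ s ∈ M i ∩ A, s ∈ B ∧ Reach G (M i ∩ A) u s) := by
    intro i u hu z hz
    induction hz with
    | refl => exact ⟨fun _ => Relation.ReflTransGen.refl, fun h => absurd hu.2 h⟩
    | @tail z z' _ hzz ih =>
      by_cases hz : z ∈ A
      · refine ⟨fun hz' => (ih.1 hz).tail ⟨hzz.1, ⟨hzz.2.1, hz⟩, ⟨hzz.2.2, hz'⟩⟩, fun hz' => ?_⟩
        refine ⟨z, ⟨hzz.2.1, hz⟩, ?_, ih.1 hz⟩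
        by_contra hzB
        exact hsep _ _ hz' hzB hzz.1.symm
      · obtain ⟨s, hs, hsB, hr⟩ := ih.2 hz
        refine ⟨fun hz' => ?_, fun _ => ⟨s, hs, hsB, hr⟩⟩
        have hz'B : z' ∈ B := by
          by_contra hzB
          exact hsep _ _ hz hzB hzz.1
        by_cases hsz : s = z'
        · exact hsz ▸ hr
        · exact hr.tail ⟨hcl s ⟨hs.2, hsB⟩ z' ⟨hz', hz'B⟩ hsz, hs, ⟨hzz.2.2, hz'⟩⟩
  refine ⟨fun i => ⟨hmeet i, fun u hu v hv => (key i u hu v ((h1 i).2 u hu.1 v hv.1)).1 hv.2⟩,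
    fun i => Set.inter_subset_right, fun i j hij u hu hu' => h3 i j hij u hu.1 hu'.1, ?_⟩
  -- a branch set with a vertex of `B` contains a vertex of the clique
  have hS : ∀ i, ∀ u ∈ M i, u ∈ B → ∃ s ∈ M i, s ∈ A ∩ B := by
    intro i u hu huB
    by_cases huA : u ∈ A
    · exact ⟨u, hu, huA, huB⟩
    · obtain ⟨w, hw⟩ := hmeet i
      obtain ⟨s, hs, hsB, -⟩ := (key i w hw u ((h1 i).2 w hw.1 u hu)).2 huA
      exact ⟨s, hs.1, hs.2, hsB⟩
  intro i j hij
  obtain ⟨u, hu, v, hv, huv⟩ := h4 i j hij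
  by_cases hA : u ∈ A ∧ v ∈ A
  · exact ⟨u, ⟨hu, hA.1⟩, v, ⟨hv, hA.2⟩, huv⟩
  · have huB : u ∈ B := by
      by_contra hB
      have huA := (hAB u).resolve_right hB
      exact hsep v u (fun hvA => hA ⟨huA, hvA⟩) hB huv.symm
    have hvB : v ∈ B := by
      by_contra hB
      have hvA := (hAB v).resolve_right hB
      exact hsep u v (fun huA => hA ⟨huA, hvA⟩) hB huv
    obtain ⟨s, hs, hsS⟩ := hS i u hu huB
    obtain ⟨t, ht, htS⟩ := hS j v hv hvB
    exact ⟨s, ⟨hs, hsS.1⟩, t, ⟨ht, htS.1⟩,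
      hcl s hsS t htS fun e => h3 i j hij s hs (e ▸ ht)⟩

/-- A `K₅`-minor of a clique sum lives on one of the two sides. -/
theorem model_clique_sum {G : SimpleGraph V} {A B : Set V} (hG : ¬ K5MinorFree G)
    (hAB : ∀ v, v ∈ A ∨ v ∈ B) (hsep : ∀ u v, u ∉ A → v ∉ B → ¬ G.Adj u v)
    (hcl : ∀ u ∈ A ∩ B, ∀ v ∈ A ∩ B, u ≠ v → G.Adj u v) :
    (∃ M, Model G A M) ∨ ∃ M, Model G B M := by
  obtain ⟨M, hM⟩ := exists_model hG
  by_cases hA : ∀ i, (M i ∩ A).Nonempty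
  · exact Or.inl ⟨_, model_inter hM hAB hsep hcl hA⟩
  · refine Or.inr ⟨_, model_inter hM (fun v => (hAB v).symm)
      (fun u v hu hv h => hsep v u hv hu h.symm)
      (fun u hu v hv => hcl u hu.symm v hv.symm) ?_⟩
    push Not at hA
    obtain ⟨i, hi⟩ := hA
    have hi' : ∀ u ∈ M i, u ∉ A := fun u hu huA =>
      Set.eq_empty_iff_forall_notMem.1 hi u ⟨hu, huA⟩
    intro j
    by_cases hij : i = j
    · subst hij
      obtain ⟨u, hu⟩ := (hM.1 i).1
      exact ⟨u, hu, (hAB u).resolve_left (hi' u hu)⟩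
    · obtain ⟨u, hu, v, hv, huv⟩ := hM.2.2.2 i j hij
      refine ⟨v, hv, ?_⟩
      by_contra hvB
      exact hsep u v (hi' u hu) hvB huv

/-- If `G'` restricted to `Y` is obtained from `G` by contracting the connected set `D` into
`c ∈ Y`, then a `K₅`-model of `G'` inside `Y` yields one of `G`. -/
theorem not_free_of_contract {G G' : SimpleGraph V} {Y D : Set V} {c d : V}
    {M : Fin 5 → Set V} (hM : Model G' Y M) (hD : ConnOn G D) (hDY : ∀ x ∈ D, x ∉ Y)
    (hd : d ∈ D) (hcd : G.Adj c d)
    (hadj : ∀ x ∈ Y, ∀ y ∈ Y, G'.Adj x y →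
      G.Adj x y ∨ (x = c ∧ ∃ z ∈ D, G.Adj z y) ∨ (y = c ∧ ∃ z ∈ D, G.Adj z x)) :
    ¬ K5MinorFree G := by
  classical
  obtain ⟨h1, h2, h3, h4⟩ := hM
  let N : Fin 5 → Set V := fun i => {w | w ∈ M i ∨ (c ∈ M i ∧ w ∈ D)}
  have hMN : ∀ i, M i ⊆ N i := fun i w hw => Or.inl hw
  have step : ∀ i, ∀ x ∈ M i, ∀ y ∈ M i, G'.Adj x y → Reach G (N i) x y := by
    have aux : ∀ i, c ∈ M i → ∀ y ∈ M i, ∀ z ∈ D, G.Adj z y → Reach G (N i) c y := by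
      intro i hc y hy z hz hzy
      have e1 : Reach G (N i) d z :=
        (hD.2 d hd z hz).mono (fun _ _ _ _ h => h) fun w hw => Or.inr ⟨hc, hw⟩
      exact (Relation.ReflTransGen.head ⟨hcd, Or.inl hc, Or.inr ⟨hc, hd⟩⟩ e1).tail
        ⟨hzy, Or.inr ⟨hc, hz⟩, Or.inl hy⟩
    intro i x hx y hy hxy
    rcases hadj x (h2 i hx) y (h2 i hy) hxy with h | ⟨rfl, z, hz, hzy⟩ | ⟨rfl, z, hz, hzx⟩
    · exact Relation.ReflTransGen.single ⟨h, Or.inl hx, Or.inl hy⟩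
    · exact aux i hx y hy z hz hzy
    · exact (aux i hy x hx z hz hzx).symm
  have reach : ∀ i, ∀ x ∈ M i, ∀ y ∈ M i, Reach G (N i) x y := by
    intro i x hx y hy
    have := (h1 i).2 x hx y hy
    induction this with
    | refl => exact Relation.ReflTransGen.refl
    | tail _ hzz ih => exact (ih hzz.2.1).trans (step i _ hzz.2.1 _ hzz.2.2 hzz.1)
  refine not_free_of_model (Y := Set.univ) (B := N) ⟨fun i => ?_, fun i => Set.subset_univ _,
    ?_, ?_⟩
  · obtain ⟨m, hm⟩ := (h1 i).1
    have key : ∀ w ∈ N i, Reach G (N i) m w := by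
      rintro w (hw | ⟨hc, hw⟩)
      · exact reach i m hm w hw
      · exact ((reach i m hm c hc).tail ⟨hcd, Or.inl hc, Or.inr ⟨hc, hd⟩⟩).trans
          ((hD.2 d hd w hw).mono (fun _ _ _ _ h => h) fun w hw => Or.inr ⟨hc, hw⟩)
    exact ⟨⟨m, Or.inl hm⟩, fun u hu v hv => (key u hu).symm.trans (key v hv)⟩
  · rintro i j hij u (hu | ⟨hc, hu⟩) (hu' | ⟨hc', hu'⟩)
    · exact h3 i j hij u hu hu'
    · exact hDY u hu' (h2 i hu)
    · exact hDY u hu (h2 j hu')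
    · exact h3 i j hij c hc hc'
  · intro i j hij
    obtain ⟨u, hu, v, hv, huv⟩ := h4 i j hij
    rcases hadj u (h2 i hu) v (h2 j hv) huv with h | ⟨rfl, z, hz, hzy⟩ | ⟨rfl, z, hz, hzx⟩
    · exact ⟨u, Or.inl hu, v, Or.inl hv, h⟩
    · exact ⟨z, Or.inr ⟨hu, hz⟩, v, Or.inl hv, hzy⟩
    · exact ⟨u, Or.inl hu, z, Or.inr ⟨hv, hz⟩, hzx.symm⟩

/-- The graph obtained by contracting the edge `av` into `a`, on the same vertex type; `v` becomes
an isolated vertex. -/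
def contr (G : SimpleGraph V) (a v : V) : SimpleGraph V where
  Adj x y := x ≠ y ∧ x ≠ v ∧ y ≠ v ∧
    (G.Adj x y ∨ (x = a ∧ G.Adj v y) ∨ (y = a ∧ G.Adj v x))
  symm := ⟨fun x y h => ⟨h.1.symm, h.2.2.1, h.2.1, by
    rcases h.2.2.2 with h | h | h
    · exact Or.inl h.symm
    · exact Or.inr (Or.inr h)
    · exact Or.inr (Or.inl h)⟩⟩
  loopless := ⟨fun x h => h.1 rfl⟩

theorem contr_free {G : SimpleGraph V} {a v : V} (h : G.Adj a v) (hG : K5MinorFree G) :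
    K5MinorFree (contr G a v) := by
  by_contra hC
  obtain ⟨M, h1, h2, h3, h4⟩ := exists_model hC
  -- a branch set has a vertex with a neighbour, so it avoids the isolated vertex `v`
  have hv : ∀ i, v ∉ M i := by
    intro i hvi
    obtain ⟨j, hij⟩ := exists_ne i
    obtain ⟨x, hx, y, -, hxy⟩ := h4 i j hij.symm
    rcases Relation.ReflTransGen.cases_head ((h1 i).2 v hvi x hx) with rfl | ⟨z, hz, -⟩
    · exact hxy.2.1 rfl
    · exact hz.1.2.1 rfl
  refine not_free_of_contract (Y := {v}ᶜ) (D := {v}) (c := a) (d := v) (G := G)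
    ⟨h1, fun i x hx e => hv i (e ▸ hx), h3, h4⟩ (connOn_singleton G v) (by simp) rfl h ?_ hG
  rintro x - y - ⟨-, -, -, h | h | h⟩
  · exact Or.inl h
  · exact Or.inr (Or.inl ⟨h.1, v, rfl, h.2⟩)
  · exact Or.inr (Or.inr ⟨h.1, v, rfl, h.2⟩)

/-! ### Common neighbours of an edge in a maximal graph without clique separators -/

/-- A path through two prescribed vertices `q ≠ q'` can be cut between them into two
connected adjacent pieces, one at each end. -/
theorem split_path {G : SimpleGraph V} {u v : V} (p : G.Walk u v) (hp : p.IsPath) {q q' : V}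
    (hq : q ∈ p.support) (hq' : q' ∈ p.support) (hne : q ≠ q') :
    ∃ A B : Set V, ConnOn G A ∧ ConnOn G B ∧ (∀ x ∈ A, x ∈ p.support) ∧
      (∀ x ∈ B, x ∈ p.support) ∧ (∀ x ∈ A, x ∉ B) ∧ u ∈ A ∧ v ∈ B ∧
      (∃ x ∈ A, ∃ y ∈ B, G.Adj x y) ∧ (q ∈ A ∧ q' ∈ B ∨ q' ∈ A ∧ q ∈ B) := by
  induction p with
  | nil => simp_all
  | @cons u w v h p ih =>
    rw [SimpleGraph.Walk.cons_isPath_iff] at hp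
    -- the support of a walk is connected
    have hconn : ∀ {x y : V} (p : G.Walk x y), ConnOn G {z | z ∈ p.support} := by
      intro x y p
      induction p with
      | nil =>
        simp only [SimpleGraph.Walk.support_nil, List.mem_singleton]
        exact connOn_singleton G _
      | cons h p ih =>
        have := (connOn_singleton G _).union ih rfl (SimpleGraph.Walk.start_mem_support p) h
        convert this using 1
        ext z
        simp
    by_cases hqu : q = u ∨ q' = u
    · refine ⟨{u}, {z | z ∈ p.support}, connOn_singleton G u, hconn p, by simp,
        fun x hx => by simp_all, ?_, rfl, by simp, ⟨u, rfl, w, by simp, h⟩, ?_⟩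
      · rintro x rfl
        exact hp.2
      · simp only [SimpleGraph.Walk.support_cons, List.mem_cons] at hq hq'
        rcases hqu with rfl | rfl
        · exact Or.inl ⟨rfl, hq'.resolve_left hne.symm⟩
        · exact Or.inr ⟨rfl, hq.resolve_left hne⟩
    · push Not at hqu
      simp only [SimpleGraph.Walk.support_cons, List.mem_cons] at hq hq'
      obtain ⟨A, B, hA, hB, hAp, hBp, hAB, hwA, hvB, ⟨x, hx, y, hy, hxy⟩, hqq⟩ :=
        ih hp.1 (hq.resolve_left hqu.1) (hq'.resolve_left hqu.2)
      refine ⟨{u} ∪ A, B, (connOn_singleton G u).union hA rfl hwA h, hB, ?_, ?_, ?_, Or.inl rfl,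
        hvB, ⟨x, Or.inr hx, y, hy, hxy⟩, ?_⟩
      · rintro z (rfl | hz)
        · simp
        · simp [hAp z hz]
      · intro z hz
        simp [hBp z hz]
      · rintro z (rfl | hz)
        · exact fun hz => hp.2 (hBp z hz)
        · exact hAB z hz
      · rcases hqq with h | h
        · exact Or.inl ⟨Or.inr h.1, h.2⟩
        · exact Or.inr ⟨Or.inr h.1, h.2⟩

theorem exists_path_of_reach {G : SimpleGraph V} {S : Set V} {u v : V} (h : Reach G S u v)
    (hu : u ∈ S) : ∃ p : G.Walk u v, p.IsPath ∧ ∀ x ∈ p.support, x ∈ S := by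
  classical
  have : ∃ p : G.Walk u v, ∀ x ∈ p.support, x ∈ S := by
    induction h using Relation.ReflTransGen.head_induction_on with
    | refl => exact ⟨SimpleGraph.Walk.nil, by simpa using hu⟩
    | head h _ ih =>
      obtain ⟨p, hp⟩ := ih h.2.2
      exact ⟨SimpleGraph.Walk.cons h.1 p, by simpa using ⟨hu, hp⟩⟩
  obtain ⟨p, hp⟩ := this
  exact ⟨p.bypass, p.bypass_isPath, fun x hx => hp x (p.support_bypass_subset_support hx)⟩

/-- If no vertex of `J` separates two of `u1`, `u2`, `u3` in `J`, then `J` contains a triangle minor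
rooted at these three vertices: take a path from `u1` to `u2` that avoids `u3`, cut in two between
two attachments of the component of `u3` outside the path. -/
theorem rooted_triangle {G : SimpleGraph V} {J : Set V} {u1 u2 u3 : V}
    (hu1 : u1 ∈ J) (hu3 : u3 ∈ J) (h12 : u1 ≠ u2) (h13 : u1 ≠ u3) (h23 : u2 ≠ u3)
    (hr12 : Reach G (J \ {u3}) u1 u2)
    (hr13 : ∀ c, c ≠ u1 → c ≠ u3 → Reach G (J \ {c}) u3 u1)
    (hr23 : ∀ c, c ≠ u2 → c ≠ u3 → Reach G (J \ {c}) u3 u2) :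
    ∃ A B C : Set V, ConnOn G A ∧ ConnOn G B ∧ ConnOn G C ∧ A ⊆ J ∧ B ⊆ J ∧ C ⊆ J ∧
      u1 ∈ A ∧ u2 ∈ B ∧ u3 ∈ C ∧
      (∀ x ∈ A, x ∉ B) ∧ (∀ x ∈ A, x ∉ C) ∧ (∀ x ∈ B, x ∉ C) ∧
      (∃ x ∈ A, ∃ y ∈ B, G.Adj x y) ∧ (∃ x ∈ A, ∃ y ∈ C, G.Adj x y) ∧
      (∃ x ∈ B, ∃ y ∈ C, G.Adj x y) := by
  obtain ⟨p, hp, hpJ⟩ := exists_path_of_reach hr12 ⟨hu1, h13⟩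
  -- `C` is the component of `u3` after deletion of the path; its attachments lie on the path
  let T : Set V := {x | x ∈ J ∧ x ∉ p.support}
  let C : Set V := {w | Reach G T u3 w}
  have hu3T : u3 ∈ T := ⟨hu3, fun h => (hpJ u3 h).2 rfl⟩
  have hCT : ∀ w ∈ C, w ∈ T := fun w hw => Reach.mem hw hu3T
  have hu3C : u3 ∈ C := Relation.ReflTransGen.refl
  -- a walk from `u3` to the path inside `J \ {c}` meets the path at an attachment other than `c`
  have attach : ∀ c z, z ∈ p.support → Reach G (J \ {c}) u3 z →
      ∃ q ∈ p.support, q ≠ c ∧ ∃ d ∈ C, G.Adj q d := by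
    intro c z hz hr
    have : ∀ w, Reach G (J \ {c}) u3 w →
        w ∈ C ∨ ∃ q ∈ p.support, q ≠ c ∧ ∃ d ∈ C, G.Adj q d := by
      intro w hw
      induction hw with
      | refl => exact Or.inl hu3C
      | @tail y w _ hyw ih =>
        rcases ih with hy | h
        · by_cases hwp : w ∈ p.support
          · exact Or.inr ⟨w, hwp, hyw.2.2.2, y, hy, hyw.1.symm⟩
          · exact Or.inl (Relation.ReflTransGen.tail hy
              ⟨hyw.1, hCT y hy, hyw.2.2.1, hwp⟩)
        · exact Or.inr h
    rcases this z hr with h | h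
    · exact absurd hz (hCT z h).2
    · exact h
  have hu1p : u1 ∈ p.support := p.start_mem_support
  have hu2p : u2 ∈ p.support := p.end_mem_support
  obtain ⟨q, hq, -, d, hd, hqd⟩ := attach u2 u1 hu1p (hr13 u2 h12.symm h23)
  have hq3 : q ≠ u3 := fun e => (hpJ q hq).2 e
  obtain ⟨q', hq', hne, d', hd', hqd'⟩ :
      ∃ q' ∈ p.support, q' ≠ q ∧ ∃ d ∈ C, G.Adj q' d := by
    by_cases e : q = u1
    · exact attach q u2 hu2p (hr23 q (fun e' => h12 (e.symm.trans e')) hq3)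
    · exact attach q u1 hu1p (hr13 q e hq3)
  obtain ⟨A, B, hA, hB, hAp, hBp, hAB, h1A, h2B, hadj, hqq⟩ := split_path p hp hq hq' hne.symm
  refine ⟨A, B, C, hA, hB, connOn_component G T u3, fun x hx => (hpJ x (hAp x hx)).1,
    fun x hx => (hpJ x (hBp x hx)).1, fun x hx => (hCT x hx).1, h1A, h2B, hu3C, hAB,
    fun x hx hxC => (hCT x hxC).2 (hAp x hx), fun x hx hxC => (hCT x hxC).2 (hBp x hx), hadj, ?_⟩
  rcases hqq with h | h
  · exact ⟨⟨q, h.1, d, hd, hqd⟩, ⟨q', h.2, d', hd', hqd'⟩⟩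
  · exact ⟨⟨q', h.1, d', hd', hqd'⟩, ⟨q, h.2, d, hd, hqd⟩⟩

/-- `G` has no separating clique on at most three vertices, where only separations of the vertex
set `W` count: `D` is a union of components of `G - S`. -/
def NoCliqueSep (W : Finset V) (G : SimpleGraph V) : Prop :=
  ∀ (S : Finset V) (D : Set V), S.card ≤ 3 → (∀ u ∈ S, ∀ v ∈ S, u ≠ v → G.Adj u v) →
    (∀ d ∈ D, d ∉ S) → (∀ d ∈ D, ∀ z, G.Adj d z → z ∈ D ∨ z ∈ S) →
    ∀ u ∈ W, ∀ v ∈ W, u ∈ D → v ∉ D → v ∉ S → False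

/-- `G` is edge-maximal among the `K₅`-minor-free graphs all of whose edges lie inside `W`. -/
def EdgeMax (W : Finset V) (G : SimpleGraph V) : Prop :=
  Maximal (fun H : SimpleGraph V => K5MinorFree H ∧ ∀ u v, H.Adj u v → u ∈ W ∧ v ∈ W) G

/-- Two common neighbours of the ends of an edge `av` are not separated by `a`, `v` and any third
vertex `c`: otherwise `c` could be joined to `a` and `v` without creating a `K₅`-minor, because
contracting either side of the separation into `c` produces these two edges. -/
theorem reach_of_edgeMax [DecidableEq V] {W : Finset V} {G : SimpleGraph V} (hmax : EdgeMax W G)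
    (hsep : NoCliqueSep W G) {a v c u1 u2 : V} (hav : G.Adj a v) (hca : c ≠ a) (hcv : c ≠ v)
    (h1a : G.Adj a u1) (h1v : G.Adj v u1) (h2a : G.Adj a u2) (h2v : G.Adj v u2)
    (h1c : c ≠ u1) (h2c : c ≠ u2) : Reach G ({a, v}ᶜ \ {c}) u1 u2 := by
  by_contra hnr
  obtain ⟨hfree, hW⟩ := hmax.prop
  let T : Set V := {a, v}ᶜ \ {c}
  have hT : ∀ x, x ∈ T ↔ x ≠ a ∧ x ≠ v ∧ x ≠ c := by
    intro x; simp [T, and_assoc]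
  have h1T : u1 ∈ T := (hT _).2 ⟨h1a.ne', h1v.ne', h1c.symm⟩
  have h2T : u2 ∈ T := (hT _).2 ⟨h2a.ne', h2v.ne', h2c.symm⟩
  let D : V → Set V := fun u => {w | Reach G T u w}
  have hDT : ∀ u ∈ T, ∀ w ∈ D u, w ∈ T := fun u hu w hw => Reach.mem hw hu
  have hDcl : ∀ u ∈ T, ∀ d ∈ D u, ∀ z, G.Adj d z → z ∈ D u ∨ z = a ∨ z = v ∨ z = c := by
    intro u hu d hd z hdz
    by_cases hz : z ∈ T
    · exact Or.inl (Relation.ReflTransGen.tail hd ⟨hdz, hDT u hu d hd, hz⟩)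
    · rw [hT] at hz
      tauto
  have self : ∀ u, u ∈ D u := fun u => Relation.ReflTransGen.refl
  have h2D : u2 ∉ D u1 := hnr
  have h1D : u1 ∉ D u2 := fun h => hnr h.symm
  -- each of the two components is attached to `c`, since the edge `av` is no separator
  have hatt : ∀ u u', u ∈ T → u' ∈ T → u ∈ W → u' ∈ W → u' ∉ D u → ∃ d ∈ D u, G.Adj c d := by
    intro u u' hu hu' huW hu'W huu
    by_contra hno
    push Not at hno
    refine hsep {a, v} (D u) (Finset.card_le_two.trans (by norm_num)) ?_ ?_ ?_ u huW u' hu'W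
      (self u) huu ?_
    · intro x hx y hy hxy
      simp only [Finset.mem_insert, Finset.mem_singleton] at hx hy
      rcases hx with rfl | rfl <;> rcases hy with rfl | rfl
      · exact absurd rfl hxy
      · exact hav
      · exact hav.symm
      · exact absurd rfl hxy
    · intro d hd
      have := (hT d).1 (hDT u hu d hd)
      simp [this.1, this.2.1]
    · intro d hd z hdz
      rcases hDcl u hu d hd z hdz with h | h | h | rfl
      · exact Or.inl h
      · simp [h]
      · simp [h]
      · exact absurd hdz.symm (hno d hd)
    · have := (hT u').1 hu'
      simp [this.1, this.2.1]
  have h1W := (hW _ _ h1a).2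
  have h2W := (hW _ _ h2a).2
  obtain ⟨d1, hd1, hcd1⟩ := hatt u1 u2 h1T h2T h1W h2W h2D
  obtain ⟨d2, hd2, hcd2⟩ := hatt u2 u1 h2T h1T h2W h1W h1D
  let G' : SimpleGraph V :=
    { Adj := fun x y => G.Adj x y ∨ (x = c ∧ (y = a ∨ y = v)) ∨ (y = c ∧ (x = a ∨ x = v))
      symm := ⟨fun x y h => by
        rcases h with h | h | h
        · exact Or.inl h.symm
        · exact Or.inr (Or.inr h)
        · exact Or.inr (Or.inl h)⟩
      loopless := ⟨fun x h => by
        rcases h with h | ⟨rfl, h | h⟩ | ⟨rfl, h | h⟩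
        · exact G.loopless.irrefl x h
        · exact hca h
        · exact hcv h
        · exact hca h
        · exact hcv h⟩ }
  have hGG' : G ≤ G' := fun x y h => Or.inl h
  have haW := (hW _ _ hav).1
  have hvW := (hW _ _ hav).2
  have hcW := (hW _ _ hcd1).1
  have hS : ∀ x ∈ ({a, v, c} : Set V), ∀ y ∈ ({a, v, c} : Set V), x ≠ y → G'.Adj x y := by
    intro x hx y hy hxy
    simp only [Set.mem_insert_iff, Set.mem_singleton_iff] at hx hy
    rcases hx with rfl | rfl | rfl <;> rcases hy with rfl | rfl | rfl <;>
      first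
      | exact absurd rfl hxy
      | exact Or.inl hav
      | exact Or.inl hav.symm
      | exact Or.inr (by simp)
  by_cases hG' : K5MinorFree G'
  · have hle : G' ≤ G := hmax.le_of_ge ⟨hG', by
      rintro x y (h | ⟨rfl, rfl | rfl⟩ | ⟨rfl, rfl | rfl⟩)
      · exact hW x y h
      all_goals exact ⟨by assumption, by assumption⟩⟩ hGG'
    refine hsep {a, v, c} (D u1) Finset.card_le_three ?_ ?_ ?_ u1 h1W u2 h2W (self u1) h2D ?_
    · intro x hx y hy hxy
      exact hle (hS x (by simpa using hx) y (by simpa using hy) hxy)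
    · intro d hd
      have := (hT d).1 (hDT u1 h1T d hd)
      simp [this.1, this.2.1, this.2.2]
    · intro d hd z hdz
      simpa using hDcl u1 h1T d hd z hdz
    · have := (hT u2).1 h2T
      simp [this.1, this.2.1, this.2.2]
  · have hadj : ∀ u, G.Adj a u → G.Adj v u → ∀ x y, G'.Adj x y →
        G.Adj x y ∨ (x = c ∧ ∃ z ∈ D u, G.Adj z y) ∨ (y = c ∧ ∃ z ∈ D u, G.Adj z x) := by
      rintro u hau hvu x y (h | ⟨rfl, rfl | rfl⟩ | ⟨rfl, rfl | rfl⟩)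
      · exact Or.inl h
      · exact Or.inr (Or.inl ⟨rfl, u, self u, hau.symm⟩)
      · exact Or.inr (Or.inl ⟨rfl, u, self u, hvu.symm⟩)
      · exact Or.inr (Or.inr ⟨rfl, u, self u, hau.symm⟩)
      · exact Or.inr (Or.inr ⟨rfl, u, self u, hvu.symm⟩)
    have hsplit := model_clique_sum (A := D u1 ∪ {a, v, c}) (B := (D u1)ᶜ) hG' ?_ ?_ ?_
    · rcases hsplit with ⟨M, hM⟩ | ⟨M, hM⟩
      · refine not_free_of_contract (D := D u2) (c := c) (d := d2) hM
          (connOn_component G T u2) ?_ hd2 hcd2 (fun x _ y _ => hadj u2 h2a h2v x y) hfree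
        rintro x hx (hx1 | hx1)
        · exact hnr (Relation.ReflTransGen.trans hx1 (Reach.symm hx))
        · have := (hT x).1 (hDT u2 h2T x hx)
          simp [this.1, this.2.1, this.2.2] at hx1
      · exact not_free_of_contract (D := D u1) (c := c) (d := d1) hM
          (connOn_component G T u1) (fun x hx hx' => hx' hx) hd1 hcd1
          (fun x _ y _ => hadj u1 h1a h1v x y) hfree
    · intro x
      by_cases hx : x ∈ D u1
      · exact Or.inl (Or.inl hx)
      · exact Or.inr hx
    · intro x y hx hy hxy
      have hy : y ∈ D u1 := not_not.1 hy
      have hyT := (hT y).1 (hDT u1 h1T y hy)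
      have hx1 : x ∉ D u1 := fun h => hx (Or.inl h)
      have hx2 : ¬ (x = a ∨ x = v ∨ x = c) := fun h => hx (Or.inr (by simpa using h))
      rcases hxy with h | ⟨h, -⟩ | ⟨h, -⟩
      · rcases hDcl u1 h1T y hy x h.symm with h | h
        · exact hx1 h
        · exact hx2 h
      · exact hx2 (Or.inr (Or.inr h))
      · exact hyT.2.2 h
    · rintro x ⟨hx | hx, hx'⟩ y ⟨hy | hy, hy'⟩ hxy
      · exact absurd hx hx'
      · exact absurd hx hx'
      · exact absurd hy hy'
      · exact hS x hx y hy hxy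

/-- Adjacent vertices have at most two common neighbours: three of them would root a triangle
minor, which `a` and `v` complete to a `K₅`-minor. -/
theorem common_le_two [DecidableEq V] {W : Finset V} {G : SimpleGraph V} (hmax : EdgeMax W G)
    (hsep : NoCliqueSep W G) {a v u1 u2 u3 : V} (hav : G.Adj a v)
    (h1a : G.Adj a u1) (h1v : G.Adj v u1) (h2a : G.Adj a u2) (h2v : G.Adj v u2)
    (h3a : G.Adj a u3) (h3v : G.Adj v u3) (h12 : u1 ≠ u2) (h13 : u1 ≠ u3) (h23 : u2 ≠ u3) :
    False := by
  have hJ : ∀ u, G.Adj a u → G.Adj v u → u ∈ ({a, v}ᶜ : Set V) := by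
    intro u h h'
    simp [h.ne', h'.ne']
  -- deleting `a` or `v` from `J` deletes nothing, so a third vertex may be used in place of `c`
  have gen : ∀ u w z c, G.Adj a u → G.Adj v u → G.Adj a w → G.Adj v w → G.Adj a z → G.Adj v z →
      z ≠ u → z ≠ w → c ≠ u → c ≠ w → Reach G ({a, v}ᶜ \ {c}) u w := by
    intro u w z c hau hvu haw hvw haz hvz hzu hzw hcu hcw
    by_cases hc : c = a ∨ c = v
    · refine (reach_of_edgeMax hmax hsep hav haz.ne' hvz.ne' hau hvu haw hvw hzu hzw).mono
        (fun _ _ _ _ h => h) ?_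
      rintro x ⟨hx, -⟩
      refine ⟨hx, ?_⟩
      rintro rfl
      simp only [Set.mem_compl_iff, Set.mem_insert_iff, Set.mem_singleton_iff] at hx
      exact hx hc
    · push Not at hc
      exact reach_of_edgeMax hmax hsep hav hc.1 hc.2 hau hvu haw hvw hcu hcw
  obtain ⟨A, B, C, hA, hB, hC, hAJ, hBJ, hCJ, h1, h2, h3, hAB, hAC, hBC, eAB, eAC, eBC⟩ :=
    rooted_triangle (G := G) (hJ u1 h1a h1v) (hJ u3 h3a h3v) h12 h13 h23
      (gen u1 u2 u3 u3 h1a h1v h2a h2v h3a h3v h13.symm h23.symm h13.symm h23.symm)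
      (fun c hc1 hc3 => gen u3 u1 u2 c h3a h3v h1a h1v h2a h2v h23 h12.symm hc3 hc1)
      (fun c hc2 hc3 => gen u3 u2 u1 c h3a h3v h2a h2v h1a h1v h13 h12 hc3 hc2)
  have nJ : ∀ {X : Set V}, X ⊆ ({a, v}ᶜ : Set V) → a ∉ X ∧ v ∉ X := fun hX =>
    ⟨fun h => by simpa using hX h, fun h => by simpa using hX h⟩
  have sym : ∀ {X Y : Set V}, (∃ x ∈ X, ∃ y ∈ Y, G.Adj x y) → ∃ x ∈ Y, ∃ y ∈ X, G.Adj x y := by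
    rintro X Y ⟨x, hx, y, hy, h⟩
    exact ⟨y, hy, x, hx, h.symm⟩
  let M : Fin 5 → Set V := ![{a}, {v}, A, B, C]
  have hlt : ∀ i j : Fin 5, i < j →
      (∀ u ∈ M i, u ∉ M j) ∧ ∃ u ∈ M i, ∃ w ∈ M j, G.Adj u w := by
    have ha : ∀ X : Set V, X ⊆ ({a, v}ᶜ : Set V) → (∃ x ∈ X, G.Adj a x ∧ G.Adj v x) →
        ((∀ u ∈ ({a} : Set V), u ∉ X) ∧ ∃ u ∈ ({a} : Set V), ∃ w ∈ X, G.Adj u w) ∧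
        ((∀ u ∈ ({v} : Set V), u ∉ X) ∧ ∃ u ∈ ({v} : Set V), ∃ w ∈ X, G.Adj u w) := by
      rintro X hX ⟨x, hx, hax, hvx⟩
      refine ⟨⟨?_, a, rfl, x, hx, hax⟩, ⟨?_, v, rfl, x, hx, hvx⟩⟩
      · rintro u rfl; exact (nJ hX).1
      · rintro u rfl; exact (nJ hX).2
    have eA := ha A hAJ ⟨u1, h1, h1a, h1v⟩
    have eB := ha B hBJ ⟨u2, h2, h2a, h2v⟩
    have eC := ha C hCJ ⟨u3, h3, h3a, h3v⟩
    intro i j hij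
    fin_cases i <;> fin_cases j <;> first | exact absurd hij (by decide) | skip
    · exact ⟨fun u hu hu' => hav.ne ((show u = a from hu).symm.trans hu'), a, rfl, v, rfl, hav⟩
    · exact eA.1
    · exact eB.1
    · exact eC.1
    · exact eA.2
    · exact eB.2
    · exact eC.2
    · exact ⟨hAB, eAB⟩
    · exact ⟨hAC, eAC⟩
    · exact ⟨hBC, eBC⟩
  refine not_free_of_model (Y := Set.univ) (B := M) ⟨?_, fun _ => Set.subset_univ _, ?_, ?_⟩
    hmax.prop.1
  · intro i
    fin_cases i
    · exact connOn_singleton G a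
    · exact connOn_singleton G v
    · exact hA
    · exact hB
    · exact hC
  · intro i j hij u hu hu'
    rcases lt_or_gt_of_ne hij with h | h
    · exact (hlt i j h).1 u hu hu'
    · exact (hlt j i h).1 u hu' hu
  · intro i j hij
    rcases lt_or_gt_of_ne hij with h | h
    · exact (hlt i j h).2
    · exact sym (hlt j i h).2

/-! ### The colouring induction -/

/-- The colouring statement proved by induction on `W`. Let `a ∈ W` and let `P` be a clique of at
most two neighbours of `a`, properly coloured by `ψ`. If the other neighbours of `a` have at least
three colours and the remaining vertices of `W` at least five, then `ψ` extends to a list colouring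
of `G[W] - a`. In the planar picture `a` is the outer face and its neighbours are the boundary. -/
def Ext (W : Finset V) : Prop :=
  ∀ (G : SimpleGraph V) (a : V) (P : Finset V) (ψ : V → ℕ) (L : V → Finset ℕ),
    K5MinorFree G → a ∈ W → P ⊆ W → P.card ≤ 2 → (∀ p ∈ P, G.Adj a p) →
    (∀ p ∈ P, ∀ q ∈ P, p ≠ q → G.Adj p q ∧ ψ p ≠ ψ q) →
    (∀ v ∈ W, v ≠ a → v ∉ P → 3 ≤ (L v).card ∧ (¬ G.Adj a v → 5 ≤ (L v).card)) →
    ∃ φ : V → ℕ, (∀ p ∈ P, φ p = ψ p) ∧ (∀ v ∈ W, v ≠ a → v ∉ P → φ v ∈ L v) ∧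
      ∀ u ∈ W, ∀ v ∈ W, u ≠ a → v ≠ a → G.Adj u v → φ u ≠ φ v

/-- Colouring from lists of size five, with a clique `S` of at most three vertices precoloured:
delete a vertex `r` of the clique and let it play the part of `a`. -/
theorem Ext.extend_clique [DecidableEq V] {W : Finset V} (hE : Ext W) {G : SimpleGraph V}
    (hG : K5MinorFree G) (S : Finset V) (ψ : V → ℕ) (L : V → Finset ℕ) (hSW : S ⊆ W)
    (hcard : S.card ≤ 3) (hS : ∀ p ∈ S, ∀ q ∈ S, p ≠ q → G.Adj p q ∧ ψ p ≠ ψ q)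
    (hL : ∀ v ∈ W, v ∉ S → 5 ≤ (L v).card) :
    ∃ φ : V → ℕ, (∀ p ∈ S, φ p = ψ p) ∧ (∀ v ∈ W, v ∉ S → φ v ∈ L v) ∧
      ∀ u ∈ W, ∀ v ∈ W, G.Adj u v → φ u ≠ φ v := by
  classical
  -- the case of a nonempty clique
  have main : ∀ (S : Finset V) (ψ : V → ℕ), S ⊆ W → S.card ≤ 3 →
      (∀ p ∈ S, ∀ q ∈ S, p ≠ q → G.Adj p q ∧ ψ p ≠ ψ q) →
      (∀ v ∈ W, v ∉ S → 5 ≤ (L v).card) → S.Nonempty →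
      ∃ φ : V → ℕ, (∀ p ∈ S, φ p = ψ p) ∧ (∀ v ∈ W, v ∉ S → φ v ∈ L v) ∧
        ∀ u ∈ W, ∀ v ∈ W, G.Adj u v → φ u ≠ φ v := by
    rintro S ψ hSW hcard hS hL ⟨r, hr⟩
    obtain ⟨φ, h1, h2, h3⟩ := hE G r (S.erase r) ψ
      (fun v => if G.Adj r v then (L v).erase (ψ r) else L v) hG (hSW hr)
      ((Finset.erase_subset _ _).trans hSW)
      (by rw [Finset.card_erase_of_mem hr]; omega)
      (fun p hp => (hS r hr p (Finset.mem_of_mem_erase hp) (Finset.ne_of_mem_erase hp).symm).1)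
      (fun p hp q hq => hS p (Finset.mem_of_mem_erase hp) q (Finset.mem_of_mem_erase hq))
      (by
        intro v hv hvr hvS
        have h5 := hL v hv fun h => hvS (Finset.mem_erase.2 ⟨hvr, h⟩)
        split_ifs with h
        · have := Finset.pred_card_le_card_erase (s := L v) (a := ψ r)
          exact ⟨by omega, fun h' => absurd h h'⟩
        · exact ⟨by omega, fun _ => h5⟩)
    have hr' : ∀ v ∈ W, G.Adj r v → φ v ≠ ψ r := by
      intro v hv hrv
      by_cases hvS : v ∈ S
      · rw [h1 v (Finset.mem_erase.2 ⟨hrv.ne', hvS⟩)]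
        exact (hS v hvS r hr hrv.ne').2
      · have := h2 v hv hrv.ne' fun h => hvS (Finset.mem_of_mem_erase h)
        rw [if_pos hrv] at this
        exact Finset.ne_of_mem_erase this
    refine ⟨fun v => if v = r then ψ r else φ v, ?_, ?_, ?_⟩
    · intro p hp
      by_cases hpr : p = r
      · simp [hpr]
      · simp [hpr, h1 p (Finset.mem_erase.2 ⟨hpr, hp⟩)]
    · intro v hv hvS
      have hvr : v ≠ r := fun e => hvS (e ▸ hr)
      have := h2 v hv hvr fun h => hvS (Finset.mem_of_mem_erase h)
      simp only [hvr, if_false]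
      split_ifs at this
      · exact Finset.mem_of_mem_erase this
      · exact this
    · intro u hu v hv huv
      by_cases hur : u = r
      · have hvr : v ≠ r := fun e => huv.ne (hur.trans e.symm)
        simp only [hur, hvr, if_true, if_false]
        exact (hr' v hv (hur ▸ huv)).symm
      · by_cases hvr : v = r
        · simp only [hur, hvr, if_true, if_false]
          exact hr' u hu (hvr ▸ huv.symm)
        · simp only [hur, hvr, if_false]
          exact h3 u hu v hv hur hvr huv
  by_cases hne : S.Nonempty
  · exact main S ψ hSW hcard hS hL hne
  rw [Finset.not_nonempty_iff_eq_empty] at hne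
  subst hne
  rcases W.eq_empty_or_nonempty with rfl | ⟨r, hr⟩
  · exact ⟨ψ, by simp, by simp, by simp⟩
  have h5 := hL r hr (by simp)
  obtain ⟨k, hk⟩ : (L r).Nonempty := Finset.card_pos.1 (by omega)
  obtain ⟨φ, h1, h2, h3⟩ := main {r} (fun _ => k) (by simpa using hr) (by simp)
    (fun p hp q hq hpq => by simp_all) (fun v hv _ => hL v hv (by simp)) (by simp)
  refine ⟨φ, by simp, fun v hv _ => ?_, h3⟩
  by_cases hvr : v = r
  · subst hvr
    rw [h1 v (by simp)]
    exact hk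
  · exact h2 v hv (by simpa using hvr)

/-- A clique separation `(A, B)` of `W` with `a` and `P` in `A`: colour `A` first and then extend
to `B` the colouring of the clique. -/
theorem ext_of_sep [DecidableEq V] {W A B : Finset V} (hA : Ext A) (hB : Ext B)
    {G : SimpleGraph V} {a : V} {P : Finset V} {ψ : V → ℕ} {L : V → Finset ℕ}
    (hG : K5MinorFree G) (hAB : A ∪ B = W) (hcard : (A ∩ B).card ≤ 3)
    (hcl : ∀ u ∈ A ∩ B, ∀ v ∈ A ∩ B, u ≠ v → G.Adj u v)
    (hno : ∀ u ∈ A, ∀ v ∈ B, u ∉ B → v ∉ A → ¬ G.Adj u v)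
    (ha : a ∈ A) (hPA : P ⊆ A) (hP2 : P.card ≤ 2) (hPa : ∀ p ∈ P, G.Adj a p)
    (hP : ∀ p ∈ P, ∀ q ∈ P, p ≠ q → G.Adj p q ∧ ψ p ≠ ψ q)
    (hL : ∀ v ∈ W, v ≠ a → v ∉ P → 3 ≤ (L v).card ∧ (¬ G.Adj a v → 5 ≤ (L v).card)) :
    ∃ φ : V → ℕ, (∀ p ∈ P, φ p = ψ p) ∧ (∀ v ∈ W, v ≠ a → v ∉ P → φ v ∈ L v) ∧
      ∀ u ∈ W, ∀ v ∈ W, u ≠ a → v ≠ a → G.Adj u v → φ u ≠ φ v := by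
  have hAW : A ⊆ W := hAB ▸ Finset.subset_union_left
  have hBW : B ⊆ W := hAB ▸ Finset.subset_union_right
  obtain ⟨φ, h1, h2, h3⟩ := hA G a P ψ L hG ha hPA hP2 hPa hP fun v hv => hL v (hAW hv)
  obtain ⟨χ, g1, g2, g3⟩ : ∃ χ : V → ℕ, (∀ p ∈ A ∩ B, p ≠ a → χ p = φ p) ∧
      (∀ v ∈ B, v ∉ A → χ v ∈ L v) ∧
      ∀ u ∈ B, ∀ v ∈ B, u ≠ a → v ≠ a → G.Adj u v → χ u ≠ χ v := by
    by_cases haB : a ∈ B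
    · have haS : a ∈ A ∩ B := Finset.mem_inter.2 ⟨ha, haB⟩
      obtain ⟨χ, g1, g2, g3⟩ := hB G a ((A ∩ B).erase a) φ L hG haB
        ((Finset.erase_subset _ _).trans Finset.inter_subset_right)
        (by rw [Finset.card_erase_of_mem haS]; omega)
        (fun p hp => hcl a haS p (Finset.mem_of_mem_erase hp) (Finset.ne_of_mem_erase hp).symm)
        (by
          intro p hp q hq hpq
          simp only [Finset.mem_erase, Finset.mem_inter] at hp hq
          have hadj := hcl p (Finset.mem_inter.2 hp.2) q (Finset.mem_inter.2 hq.2) hpq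
          exact ⟨hadj, h3 p hp.2.1 q hq.2.1 hp.1 hq.1 hadj⟩)
        (by
          intro v hv hva hvS
          refine hL v (hBW hv) hva fun hvP => hvS ?_
          simp [hva, hv, hPA hvP])
      exact ⟨χ, fun p hp hpa => g1 p (Finset.mem_erase.2 ⟨hpa, hp⟩),
        fun v hv hvA => g2 v hv (fun e => hvA (e ▸ ha)) (by simp [hvA]), g3⟩
    · obtain ⟨χ, g1, g2, g3⟩ := hB.extend_clique hG (A ∩ B) φ L Finset.inter_subset_right hcard
        (by
          intro p hp q hq hpq
          have hadj := hcl p hp q hq hpq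
          simp only [Finset.mem_inter] at hp hq
          exact ⟨hadj, h3 p hp.1 q hq.1 (fun e => haB (e ▸ hp.2)) (fun e => haB (e ▸ hq.2)) hadj⟩)
        (by
          intro v hv hvS
          have hvA : v ∉ A := fun h => hvS (Finset.mem_inter.2 ⟨h, hv⟩)
          exact (hL v (hBW hv) (fun e => hvA (e ▸ ha)) fun h => hvA (hPA h)).2
            (hno a ha v hv haB hvA))
      exact ⟨χ, fun p hp _ => g1 p hp, fun v hv hvA => g2 v hv (by simp [hvA]),
        fun u hu v hv _ _ => g3 u hu v hv⟩
  refine ⟨fun v => if v ∈ A then φ v else χ v, ?_, ?_, ?_⟩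
  · intro p hp
    simp [hPA hp, h1 p hp]
  · intro v hv hva hvP
    by_cases hvA : v ∈ A
    · simpa [hvA] using h2 v hvA hva hvP
    · have hvB : v ∈ B := (Finset.mem_union.1 (hAB ▸ hv)).resolve_left hvA
      simpa [hvA] using g2 v hvB hvA
  · have mixed : ∀ u ∈ A, ∀ v ∈ W, v ∉ A → u ≠ a → v ≠ a → G.Adj u v → φ u ≠ χ v := by
      intro u hu v hv hvA hua hva huv
      have hvB : v ∈ B := (Finset.mem_union.1 (hAB ▸ hv)).resolve_left hvA
      have huB : u ∈ B := by
        by_contra h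
        exact hno u hu v hvB h hvA huv
      rw [← g1 u (Finset.mem_inter.2 ⟨hu, huB⟩) hua]
      exact g3 u huB v hvB hua hva huv
    intro u hu v hv hua hva huv
    by_cases huA : u ∈ A <;> by_cases hvA : v ∈ A <;> simp only [huA, hvA, if_true, if_false]
    · exact h3 u huA v hvA hua hva huv
    · exact mixed u huA v hv hvA hua hva huv
    · exact (mixed v hvA u hu huA hva hua huv.symm).symm
    · exact g3 u ((Finset.mem_union.1 (hAB ▸ hu)).resolve_left huA) v
        ((Finset.mem_union.1 (hAB ▸ hv)).resolve_left hvA) hua hva huv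

/-- The induction step when `P` is nonempty and there is no separating clique. -/
theorem ext_step [DecidableEq V] {W : Finset V} (ih : ∀ W' ⊂ W, Ext W') {G : SimpleGraph V}
    (hmax : EdgeMax W G) (hsep : NoCliqueSep W G)
    {a : V} {P : Finset V} {ψ : V → ℕ} {L : V → Finset ℕ} (ha : a ∈ W)
    (hPW : P ⊆ W) (hP2 : P.card ≤ 2) (hPa : ∀ p ∈ P, G.Adj a p)
    (hP : ∀ p ∈ P, ∀ q ∈ P, p ≠ q → G.Adj p q ∧ ψ p ≠ ψ q)
    (hL : ∀ v ∈ W, v ≠ a → v ∉ P → 3 ≤ (L v).card ∧ (¬ G.Adj a v → 5 ≤ (L v).card))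
    (hne : P.Nonempty) :
    ∃ φ : V → ℕ, (∀ p ∈ P, φ p = ψ p) ∧ (∀ v ∈ W, v ≠ a → v ∉ P → φ v ∈ L v) ∧
      ∀ u ∈ W, ∀ v ∈ W, u ≠ a → v ≠ a → G.Adj u v → φ u ≠ φ v := by
  classical
  obtain ⟨hfree, hW⟩ := hmax.prop
  have hcontr : ∀ {v x y}, G.Adj x y → x ≠ v → y ≠ v → (contr G a v).Adj x y :=
    fun h hx hy => ⟨h.ne, hx, hy, Or.inl h⟩
  by_cases hx : ∃ x ∈ P, ∃ v, v ∉ P ∧ G.Adj a v ∧ G.Adj x v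
  · -- two colours are reserved for `v`, which is contracted into `a`
    obtain ⟨x, hxP, v, hvP, hav, hxv⟩ := hx
    have hvW := (hW _ _ hav).2
    have h3 := (hL v hvW hav.ne' hvP).1
    obtain ⟨C, hCL, hC2⟩ : ∃ C ⊆ (L v).erase (ψ x), C.card = 2 := by
      apply Finset.exists_subset_card_eq
      have := Finset.pred_card_le_card_erase (s := L v) (a := ψ x)
      omega
    obtain ⟨φ, h1, h2, h3⟩ := ih (W.erase v) (Finset.erase_ssubset hvW) (contr G a v) a P ψ
      (fun u => if G.Adj v u ∧ ¬ G.Adj a u then L u \ C else L u) (contr_free hav hfree)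
      (Finset.mem_erase.2 ⟨hav.ne, ha⟩)
      (fun p hp => Finset.mem_erase.2 ⟨fun e => hvP (e ▸ hp), hPW hp⟩) hP2
      (fun p hp => hcontr (hPa p hp) hav.ne fun e => hvP (e ▸ hp))
      (fun p hp q hq hpq => ⟨hcontr (hP p hp q hq hpq).1 (fun e => hvP (e ▸ hp))
        (fun e => hvP (e ▸ hq)), (hP p hp q hq hpq).2⟩)
      (by
        intro u hu hua huP
        have huv := Finset.ne_of_mem_erase hu
        have hLu := hL u (Finset.mem_of_mem_erase hu) hua huP
        split_ifs with h
        · have h5 := hLu.2 h.2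
          have := Finset.le_card_sdiff C (L u)
          exact ⟨by omega, fun h' => absurd ⟨hua.symm, hav.ne, huv, Or.inr (Or.inl ⟨rfl, h.1⟩)⟩ h'⟩
        · refine ⟨hLu.1, fun h' => hLu.2 fun hau => h' (hcontr hau hav.ne huv)⟩)
    -- at most one common neighbour of `a` and `v` other than `x` can block a reserved colour
    obtain ⟨k, hkC, hk⟩ : ∃ k ∈ C, ∀ u, G.Adj a u → G.Adj v u → φ u ≠ k := by
      have hkx : ∀ k ∈ C, φ x ≠ k := fun k hk e =>
        Finset.ne_of_mem_erase (hCL hk) (by rw [← e, h1 x hxP])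
      by_cases hw : ∃ w, w ≠ x ∧ G.Adj a w ∧ G.Adj v w
      · obtain ⟨w, hwx, haw, hvw⟩ := hw
        obtain ⟨k, hkC, hkw⟩ : ∃ k ∈ C, k ≠ φ w :=
          Finset.exists_mem_ne (by omega) _
        refine ⟨k, hkC, fun u hau hvu => ?_⟩
        by_cases hux : u = x
        · exact hux ▸ hkx k hkC
        by_cases huw : u = w
        · exact huw ▸ hkw.symm
        exact (common_le_two hmax hsep hav (hPa x hxP) hxv.symm haw hvw hau hvu hwx.symm
          (Ne.symm hux) (Ne.symm huw)).elim
      · push Not at hw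
        obtain ⟨k, hkC⟩ : C.Nonempty := Finset.card_pos.1 (by omega)
        refine ⟨k, hkC, fun u hau hvu => ?_⟩
        by_cases hux : u = x
        · exact hux ▸ hkx k hkC
        · exact absurd hvu (hw u hux hau)
    have hv' : ∀ u ∈ W, u ≠ a → G.Adj v u → φ u ≠ k := by
      intro u hu hua hvu
      by_cases hau : G.Adj a u
      · exact hk u hau hvu
      · have := h2 u (Finset.mem_erase.2 ⟨hvu.ne', hu⟩) hua fun h => hau (hPa u h)
        rw [if_pos ⟨hvu, hau⟩] at this
        exact fun e => (Finset.mem_sdiff.1 this).2 (e ▸ hkC)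
    refine ⟨fun u => if u = v then k else φ u, ?_, ?_, ?_⟩
    · intro p hp
      have : p ≠ v := fun e => hvP (e ▸ hp)
      simp [this, h1 p hp]
    · intro u hu hua huP
      by_cases huv : u = v
      · subst huv
        simpa using Finset.mem_of_mem_erase (hCL hkC)
      · have := h2 u (Finset.mem_erase.2 ⟨huv, hu⟩) hua huP
        simp only [huv, if_false]
        split_ifs at this
        · exact (Finset.mem_sdiff.1 this).1
        · exact this
    · intro u hu w hw hua hwa huw
      by_cases huv : u = v
      · have hwv : w ≠ v := fun e => huw.ne (huv.trans e.symm)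
        simp only [huv, hwv, if_true, if_false]
        exact (hv' w hw hwa (huv ▸ huw)).symm
      · by_cases hwv : w = v
        · simp only [huv, hwv, if_true, if_false]
          exact hv' u hu hua (hwv ▸ huw.symm)
        · simp only [huv, hwv, if_false]
          exact h3 u (Finset.mem_erase.2 ⟨huv, hu⟩) w (Finset.mem_erase.2 ⟨hwv, hw⟩) hua hwa
            (hcontr huw huv hwv)
  · -- `x` has no neighbour of `a` outside `P` as neighbour, and is itself contracted into `a`
    push Not at hx
    obtain ⟨x, hxP⟩ := hne
    have hax := hPa x hxP
    have hxW := hPW hxP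
    obtain ⟨φ, h1, h2, h3⟩ := ih (W.erase x) (Finset.erase_ssubset hxW) (contr G a x) a
      (P.erase x) ψ (fun u => if G.Adj x u then (L u).erase (ψ x) else L u)
      (contr_free hax hfree) (Finset.mem_erase.2 ⟨hax.ne, ha⟩)
      (Finset.erase_subset_erase _ hPW) ((Finset.card_erase_le).trans hP2)
      (fun p hp => hcontr (hPa p (Finset.mem_of_mem_erase hp)) hax.ne (Finset.ne_of_mem_erase hp))
      (fun p hp q hq hpq =>
        have h := hP p (Finset.mem_of_mem_erase hp) q (Finset.mem_of_mem_erase hq) hpq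
        ⟨hcontr h.1 (Finset.ne_of_mem_erase hp) (Finset.ne_of_mem_erase hq), h.2⟩)
      (by
        intro u hu hua huP
        have hux := Finset.ne_of_mem_erase hu
        have huP' : u ∉ P := fun h => huP (Finset.mem_erase.2 ⟨hux, h⟩)
        have hLu := hL u (Finset.mem_of_mem_erase hu) hua huP'
        split_ifs with h
        · have h5 := hLu.2 fun hau => hx x hxP u huP' hau h
          have := Finset.pred_card_le_card_erase (s := L u) (a := ψ x)
          exact ⟨by omega, fun h' => absurd ⟨hua.symm, hax.ne, hux, Or.inr (Or.inl ⟨rfl, h⟩)⟩ h'⟩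
        · refine ⟨hLu.1, fun h' => hLu.2 fun hau => h' (hcontr hau hax.ne hux)⟩)
    have hx' : ∀ u ∈ W, u ≠ a → G.Adj x u → φ u ≠ ψ x := by
      intro u hu hua hxu
      by_cases huP : u ∈ P
      · rw [h1 u (Finset.mem_erase.2 ⟨hxu.ne', huP⟩)]
        exact (hP u huP x hxP hxu.ne').2
      · have := h2 u (Finset.mem_erase.2 ⟨hxu.ne', hu⟩) hua
          fun h => huP (Finset.mem_of_mem_erase h)
        rw [if_pos hxu] at this
        exact Finset.ne_of_mem_erase this
    refine ⟨fun u => if u = x then ψ x else φ u, ?_, ?_, ?_⟩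
    · intro p hp
      by_cases hpx : p = x
      · simp [hpx]
      · simp [hpx, h1 p (Finset.mem_erase.2 ⟨hpx, hp⟩)]
    · intro u hu hua huP
      have hux : u ≠ x := fun e => huP (e ▸ hxP)
      have := h2 u (Finset.mem_erase.2 ⟨hux, hu⟩) hua fun h => huP (Finset.mem_of_mem_erase h)
      simp only [hux, if_false]
      split_ifs at this
      · exact Finset.mem_of_mem_erase this
      · exact this
    · intro u hu w hw hua hwa huw
      by_cases hux : u = x
      · have hwx : w ≠ x := fun e => huw.ne (hux.trans e.symm)
        simp only [hux, hwx, if_true, if_false]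
        exact (hx' w hw hwa (hux ▸ huw)).symm
      · by_cases hwx : w = x
        · simp only [hux, hwx, if_true, if_false]
          exact hx' u hu hua (hwx ▸ huw.symm)
        · simp only [hux, hwx, if_false]
          exact h3 u (Finset.mem_erase.2 ⟨hux, hu⟩) w (Finset.mem_erase.2 ⟨hwx, hw⟩) hua hwa
            (hcontr huw hux hwx)

theorem exists_edgeMax [Finite V] (W : Finset V) {G : SimpleGraph V} (hG : K5MinorFree G) :
    ∃ M : SimpleGraph V, EdgeMax W M ∧ ∀ u ∈ W, ∀ v ∈ W, G.Adj u v → M.Adj u v := by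
  let G₀ : SimpleGraph V :=
    { Adj := fun u v => G.Adj u v ∧ u ∈ W ∧ v ∈ W
      symm := ⟨fun u v h => ⟨h.1.symm, h.2.2, h.2.1⟩⟩
      loopless := ⟨fun u h => G.loopless.irrefl u h.1⟩ }
  have h₀ : K5MinorFree G₀ ∧ ∀ u v, G₀.Adj u v → u ∈ W ∧ v ∈ W :=
    ⟨free_mono (fun u v h => h.1) hG, fun u v h => h.2⟩
  obtain ⟨M, hle, hM⟩ := Finite.exists_le_maximal
    (p := fun H : SimpleGraph V => K5MinorFree H ∧ ∀ u v, H.Adj u v → u ∈ W ∧ v ∈ W) h₀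
  exact ⟨M, hM, fun u hu v hv h => hle ⟨h, hu, hv⟩⟩

theorem ext_all [Finite V] (W : Finset V) : Ext W := by
  classical
  induction W using Finset.strongInduction with
  | H W ih =>
  intro G₀ a P ψ L hG₀ ha hPW hP2 hPa hP hL
  obtain ⟨G, hmax, hle⟩ := exists_edgeMax W hG₀
  obtain ⟨hfree, hW⟩ := hmax.prop
  suffices hcol : ∃ φ : V → ℕ, (∀ p ∈ P, φ p = ψ p) ∧ (∀ v ∈ W, v ≠ a → v ∉ P → φ v ∈ L v) ∧
      ∀ u ∈ W, ∀ v ∈ W, u ≠ a → v ≠ a → G.Adj u v → φ u ≠ φ v by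
    obtain ⟨φ, h1, h2, h3⟩ := hcol
    exact ⟨φ, h1, h2, fun u hu v hv hua hva h => h3 u hu v hv hua hva (hle u hu v hv h)⟩
  replace hPa : ∀ p ∈ P, G.Adj a p := fun p hp => hle a ha p (hPW hp) (hPa p hp)
  replace hP : ∀ p ∈ P, ∀ q ∈ P, p ≠ q → G.Adj p q ∧ ψ p ≠ ψ q := fun p hp q hq hpq =>
    ⟨hle p (hPW hp) q (hPW hq) (hP p hp q hq hpq).1, (hP p hp q hq hpq).2⟩
  replace hL : ∀ v ∈ W, v ≠ a → v ∉ P → 3 ≤ (L v).card ∧ (¬ G.Adj a v → 5 ≤ (L v).card) :=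
    fun v hv hva hvP => ⟨(hL v hv hva hvP).1,
      fun h => (hL v hv hva hvP).2 fun h' => h (hle a ha v hv h')⟩
  by_cases hsep : NoCliqueSep W G
  · rcases P.eq_empty_or_nonempty with rfl | hne
    · by_cases hN : ∃ x, G.Adj a x
      · obtain ⟨x, hax⟩ := hN
        have hxW := (hW _ _ hax).2
        have h3 := (hL x hxW hax.ne' (by simp)).1
        obtain ⟨k, hk⟩ : (L x).Nonempty := Finset.card_pos.1 (by omega)
        obtain ⟨φ, h1, h2, h3⟩ := ext_step ih hmax hsep (a := a) (P := {x}) (ψ := fun _ => k)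
          (L := L) ha (by simpa using hxW) (by simp) (by simpa using hax)
          (fun p hp q hq hpq => by simp_all) (fun v hv hva _ => hL v hv hva (by simp)) (by simp)
        refine ⟨φ, by simp, fun v hv hva _ => ?_, h3⟩
        by_cases hvx : v = x
        · subst hvx
          rw [h1 v (by simp)]
          exact hk
        · exact h2 v hv hva (by simpa using hvx)
      · push Not at hN
        obtain ⟨φ, h1, h2, h3⟩ := (ih (W.erase a) (Finset.erase_ssubset ha)).extend_clique hfree
          ∅ ψ L (by simp) (by simp) (by simp) (fun v hv _ =>
            (hL v (Finset.mem_of_mem_erase hv) (Finset.ne_of_mem_erase hv) (by simp)).2 (hN v))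
        exact ⟨φ, by simp, fun v hv hva _ => h2 v (Finset.mem_erase.2 ⟨hva, hv⟩) (by simp),
          fun u hu v hv hua hva => h3 u (Finset.mem_erase.2 ⟨hua, hu⟩) v
            (Finset.mem_erase.2 ⟨hva, hv⟩)⟩
    · exact ext_step ih hmax hsep ha hPW hP2 hPa hP hL hne
  · unfold NoCliqueSep at hsep
    push Not at hsep
    obtain ⟨S, D, hS3, hScl, hDS, hDcl, u, hu, v, hv, huD, hvD, hvS, -⟩ := hsep
    let A : Finset V := W.filter fun w => w ∈ D ∨ w ∈ S
    let B : Finset V := W.filter fun w => w ∉ D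
    have hAm : ∀ w, w ∈ A ↔ w ∈ W ∧ (w ∈ D ∨ w ∈ S) := fun w => Finset.mem_filter
    have hBm : ∀ w, w ∈ B ↔ w ∈ W ∧ w ∉ D := fun w => Finset.mem_filter
    have hAW : A ⊂ W := by
      refine Finset.filter_ssubset.2 ⟨v, hv, ?_⟩
      tauto
    have hBW : B ⊂ W := Finset.filter_ssubset.2 ⟨u, hu, by simpa using huD⟩
    have hAB : A ∪ B = W := by
      ext w
      rw [Finset.mem_union, hAm, hBm]
      tauto
    have hABS : A ∩ B ⊆ S := by
      intro w hw
      rw [Finset.mem_inter, hAm, hBm] at hw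
      tauto
    have hcl : ∀ u ∈ A ∩ B, ∀ v ∈ A ∩ B, u ≠ v → G.Adj u v :=
      fun u hu v hv => hScl u (hABS hu) v (hABS hv)
    have hno : ∀ u ∈ A, ∀ v ∈ B, u ∉ B → v ∉ A → ¬ G.Adj u v := by
      intro u hu v hv huB hvA huv
      rw [hAm] at hu hvA
      rw [hBm] at hv huB
      have := hDcl u (by tauto) v huv
      tauto
    have hcard := (Finset.card_le_card hABS).trans hS3
    -- the clique formed by `a` and `P` lies on one side of the separation
    have hside : (a ∈ A ∧ P ⊆ A) ∨ (a ∈ B ∧ P ⊆ B) := by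
      by_cases h : a ∈ A ∧ P ⊆ A
      · exact Or.inl h
      refine Or.inr ?_
      have hout : ∃ w, w ∈ W ∧ w ∉ A ∧ (w = a ∨ w ∈ P) := by
        by_cases haA : a ∈ A
        · have : ¬ P ⊆ A := fun h' => h ⟨haA, h'⟩
          obtain ⟨w, hw, hwA⟩ := Finset.not_subset.1 this
          exact ⟨w, hPW hw, hwA, Or.inr hw⟩
        · exact ⟨a, ha, haA, Or.inl rfl⟩
      obtain ⟨w, hwW, hwA, hw⟩ := hout
      have key : ∀ z ∈ W, (z = a ∨ z ∈ P) → z ∈ B := by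
        intro z hz hzP
        rw [hBm]
        refine ⟨hz, fun hzD => hwA ?_⟩
        by_cases hzw : z = w
        · exact (hAm w).2 ⟨hwW, Or.inl (hzw ▸ hzD)⟩
        have hadj : G.Adj z w := by
          rcases hzP with rfl | hzP <;> rcases hw with rfl | hw
          · exact absurd rfl hzw
          · exact hPa w hw
          · exact (hPa z hzP).symm
          · exact (hP z hzP w hw hzw).1
        exact (hAm w).2 ⟨hwW, hDcl z hzD w hadj⟩
      exact ⟨key a ha (Or.inl rfl), fun p hp => key p (hPW hp) (Or.inr hp)⟩
    rcases hside with ⟨haA, hPA⟩ | ⟨haB, hPB⟩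
    · exact ext_of_sep (ih A hAW) (ih B hBW) hfree hAB hcard hcl hno haA hPA hP2 hPa hP hL
    · refine ext_of_sep (ih B hBW) (ih A hAW) hfree (by rw [Finset.union_comm, hAB])
        (by rwa [Finset.inter_comm]) (by rwa [Finset.inter_comm])
        (fun u hu v hv huA hvB h => hno v hv u hu hvB huA h.symm) haB hPB hP2 hPa hP hL

/-- In a 5-connected graph all degrees are at least five: otherwise the neighbourhood of a vertex
separates it from the rest. -/
theorem five_le_vdeg [Fintype V] {G : SimpleGraph V} (h5 : KConnected 5 G) (v : V) :
    5 ≤ vdeg G v := by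
  classical
  by_contra hlt
  have hlt : (G.neighborSet v).ncard < 5 := not_le.1 hlt
  have hconn := connOn_iff.1 (h5.2 _ hlt)
  obtain ⟨w, hw⟩ : ∃ w, w ∉ insert v (G.neighborSet v) := by
    by_contra hall
    push Not at hall
    have e : insert v (G.neighborSet v) = Set.univ := Set.eq_univ_of_forall hall
    have h1 := Set.ncard_insert_le v (G.neighborSet v)
    rw [e, Set.ncard_univ, Nat.card_eq_fintype_card] at h1
    have := h5.1
    omega
  have hwv : v ≠ w := fun e => hw (Or.inl e.symm)
  have hr := hconn.2 v (by simp) w fun h => hw (Or.inr h)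
  rcases Relation.ReflTransGen.cases_head hr with e | ⟨z, hz, -⟩
  · exact hwv e
  · exact hz.2.2 hz.1

end K5List

theorem stmt_6 {V : Type*} [Fintype V] (G : SimpleGraph V) (hG : K5MinorFree G)
    (h5 : KConnected 5 G)
    (L : V → Finset ℕ) (hL : ∀ v, (L v).card = min (vdeg G v) 6) :
    ∃ φ : V → ℕ, IsListColoring G L φ := by
  classical
  have h5L : ∀ v, 5 ≤ (L v).card := fun v => by
    rw [hL v]
    exact le_min (K5List.five_le_vdeg h5 v) (by norm_num)
  obtain ⟨φ, -, h2, h3⟩ := (K5List.ext_all (Finset.univ : Finset V)).extend_clique hG ∅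
    (fun _ => 0) L (by simp) (by simp) (by simp) (fun v _ _ => h5L v)
  exact ⟨φ, fun v => h2 v (Finset.mem_univ v) (by simp),
    fun u v h => h3 u (Finset.mem_univ u) v (Finset.mem_univ v) h⟩
end
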